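/- Let n ≥ 1 and let H ∈ ℂ[x,y] be a polynomial of degree n+1 that is regular at infinity. If H has exactly one critical value, i.e. there exists γ ∈ ℂ such that H(x₀,y₀) = γ at every critical point (x₀,y₀) of H, then there exist α, β ∈ ℂ such that H(x,y) = Ĥ(x + α, y + β) + γ for all (x,y) ∈ ℂ², where Ĥ is the principal homogeneous part of H. -/

import Mathlib

open MvPolynomial Finset

/-- A polynomial `H` of degree `n+1` is regular at infinity if its principal
homogeneous part `Ĥ` has an isolated critical point at the origin: `(0,0)` is
the only common zero of `Ĥ_x` and `Ĥ_y` in `ℂ²`. -/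
def RegularAtInfinity (n : ℕ) (H : MvPolynomial (Fin 2) ℂ) : Prop :=
  ∀ x y : ℂ,
    eval ![x, y] (pderiv 0 (homogeneousComponent (n + 1) H)) = 0 →
    eval ![x, y] (pderiv 1 (homogeneousComponent (n + 1) H)) = 0 →
    x = 0 ∧ y = 0

/-!
After a linear change of coordinates and a normalisation, `F = H - γ` is monic of degree `d` in `y`
and has `d` distinct points at infinity. Write `#(x₀)` for the number of distinct roots of
`F(x₀, y)` and let `S` be a finite set outside which this polynomial is separable.

The polar curve `F_y = 0` meets `F_x = 0` only at critical points, hence only on `F = 0`. Along a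
Puiseux branch of the polar curve on which `F` vanishes at the centre, `dF/dx = F_x` shows that the
order of `F` exceeds that of `F_x` by exactly the ramification index. Comparing the degrees of the
resultants of `F_y` with `F` and with `F_x` therefore yields
`∑_{x₀ ∈ S} #(x₀) + (d - 1) = #S * d`.

Consider on the curve the functions with poles of bounded order at infinity which are regular over
`S`. With `r = ∏_{x₀ ∈ S} (x - x₀)`, the operator `r d/dx` maps them to functions vanishing over
`S`; its kernel consists of the constants, as any two components of the curve meet. By the identity
above, counting dimensions makes this map surjective for high pole order, so every polynomial
differential `p(x, y) dx` on the curve is exact and has no residues at infinity. Taking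
`p = y, x y, x² y, …` kills all negative powers of `x` in the expansion of `y` along a branch at
infinity: the curve is a union of `d` lines of distinct slopes. The same identity, now counting the
intersections with one of these lines, forces them to be concurrent, so `F` is homogeneous about the
common point.
-/

open scoped Polynomial PowerSeries LaurentSeries

-- Instance search would otherwise find `HahnSeries.powerSeriesAlgebra`, whose `R`-algebra structure
-- on `R⸨X⸩` is not definitionally the one of `HahnSeries`.
noncomputable instance laurentSeriesAlgebra {R : Type*} [CommSemiring R] : Algebra R R⸨X⸩ :=
  HahnSeries.instAlgebra

section Puiseux

theorem exists_monic_mul_of_coeff_mem_maximalIdeal {A : Type*} [CommRing A] [IsLocalRing A]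
    [IsAdicComplete (IsLocalRing.maximalIdeal A) A] {P : A[X]} (hP : P.Monic) {m : ℕ}
    (hlt : ∀ i < m, P.coeff i ∈ IsLocalRing.maximalIdeal A)
    (hm : P.coeff m ∉ IsLocalRing.maximalIdeal A) :
    ∃ f g : A[X], f.Monic ∧ g.Monic ∧ P = f * g ∧ f.natDegree = m := by
  have hcoeff (i : ℕ) : PowerSeries.coeff i ((P : A⟦X⟧).map (IsLocalRing.residue A)) = 0 ↔
      P.coeff i ∈ IsLocalRing.maximalIdeal A := by
    rw [PowerSeries.coeff_map, Polynomial.coeff_coe, IsLocalRing.residue_eq_zero_iff]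
  have horder : ((P : A⟦X⟧).map (IsLocalRing.residue A)).order = m :=
    PowerSeries.order_eq_nat.2 ⟨mt (hcoeff m).1 hm, fun i hi ↦ (hcoeff i).2 (hlt i hi)⟩
  have hne : (P : A⟦X⟧).map (IsLocalRing.residue A) ≠ 0 := fun h ↦ by simp [h] at horder
  obtain ⟨f, h, hfh⟩ := PowerSeries.exists_isWeierstrassFactorization hne
  have hdist := hfh.isDistinguishedAt
  have hf : f.Monic := hdist.monic
  have hlt_order {r : A[X]} (hr : r.degree < f.degree) : r.degree <
      ((f : A⟦X⟧).map (Ideal.Quotient.mk (IsLocalRing.maximalIdeal A))).order.toNat := by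
    rwa [← hdist.coe_natDegree_eq_order_map f 1 (by simp) (mul_one _).symm, ENat.toNat_natCast,
      ← Polynomial.degree_eq_natDegree hf.ne_zero]
  -- Dividing `P` by `f` as polynomials and as power series must give the same remainder.
  have hmod : P %ₘ f = 0 := (hdist.isWeierstrassDivisorAt'.eq_of_mul_add_eq_mul_add
    (q := ((P /ₘ f : A[X]) : A⟦X⟧)) (q' := h) (r' := 0)
    (hlt_order (Polynomial.degree_modByMonic_lt P hf))
    (hlt_order (by simp [bot_lt_iff_ne_bot, hf.ne_zero]))
    (by rw [← Polynomial.coe_mul, ← Polynomial.coe_add, add_comm, Polynomial.modByMonic_add_div,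
      Polynomial.coe_zero, add_zero, ← hfh.eq_mul])).2
  have hfg : P = f * (P /ₘ f) := by
    simpa only [hmod, zero_add] using (Polynomial.modByMonic_add_div P f).symm
  refine ⟨f, P /ₘ f, hf, hf.of_mul_monic_left (hfg ▸ hP), hfg, ?_⟩
  rw [hfh.natDegree_eq_toNat_order_map, horder, ENat.toNat_natCast]

variable {K : Type*} [Field K]

theorem exists_monic_mul_of_rootMultiplicity {P : K⟦X⟧[X]} (hP : P.Monic) (a : K) :
    ∃ f g : K⟦X⟧[X], f.Monic ∧ g.Monic ∧ P = f * g ∧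
      f.natDegree = (P.map PowerSeries.constantCoeff).rootMultiplicity a := by
  have : IsAdicComplete (IsLocalRing.maximalIdeal K⟦X⟧) K⟦X⟧ :=
    PowerSeries.maximalIdeal_eq_span_X (k := K) ▸ inferInstance
  set Q : K⟦X⟧[X] := P.comp (Polynomial.X + Polynomial.C (PowerSeries.C a)) with hQ
  have hmem (i : ℕ) : Q.coeff i ∈ IsLocalRing.maximalIdeal K⟦X⟧ ↔
      ((P.map PowerSeries.constantCoeff).comp (Polynomial.X + Polynomial.C a)).coeff i = 0 := by
    rw [PowerSeries.maximalIdeal_eq_span_X, Ideal.mem_span_singleton, PowerSeries.X_dvd_iff,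
      ← Polynomial.coeff_map, hQ, Polynomial.map_comp]
    simp
  have hQmonic : Q.Monic := hP.comp_X_add_C _
  have hne : (P.map PowerSeries.constantCoeff).comp (Polynomial.X + Polynomial.C a) ≠ 0 :=
    ((hP.map _).comp_X_add_C a).ne_zero
  obtain ⟨f, g, hf, hg, hfg, hdeg⟩ := exists_monic_mul_of_coeff_mem_maximalIdeal hQmonic
    (m := (P.map PowerSeries.constantCoeff).rootMultiplicity a)
    (fun i hi ↦ (hmem i).2 <| Polynomial.coeff_eq_zero_of_lt_natTrailingDegree
      (by rwa [Polynomial.rootMultiplicity_eq_natTrailingDegree] at hi))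
    (fun h ↦ Polynomial.trailingCoeff_eq_zero.not.2 hne (by
      rw [Polynomial.rootMultiplicity_eq_natTrailingDegree] at h
      exact (hmem _).1 h))
  refine ⟨f.comp (Polynomial.X - Polynomial.C (PowerSeries.C a)),
    g.comp (Polynomial.X - Polynomial.C (PowerSeries.C a)), hf.comp_X_sub_C _, hg.comp_X_sub_C _,
    ?_, ?_⟩
  · rw [← Polynomial.mul_comp, ← hfg, hQ, Polynomial.comp_assoc]
    simp
  · rw [Polynomial.natDegree_comp, Polynomial.natDegree_X_sub_C, mul_one, hdeg]

theorem splits_of_separable_map_constantCoeff [IsAlgClosed K] {P : K⟦X⟧[X]} (hP : P.Monic)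
    (hsep : (P.map PowerSeries.constantCoeff).Separable) : P.Splits := by
  induction hm : P.natDegree using Nat.strong_induction_on generalizing P with
  | _ m ih =>
    obtain rfl | hpos := Nat.eq_zero_or_pos m
    · exact .of_natDegree_le_one_of_monic (by omega) hP
    obtain ⟨a, ha⟩ := IsAlgClosed.exists_root (P.map PowerSeries.constantCoeff)
      (by rw [hP.degree_map, Polynomial.degree_eq_natDegree hP.ne_zero]; exact_mod_cast (by omega))
    obtain ⟨f, g, hf, hg, rfl, hdeg⟩ := exists_monic_mul_of_rootMultiplicity hP a
    have hf1 : f.natDegree = 1 := by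
      rw [hdeg]
      exact le_antisymm (Polynomial.rootMultiplicity_le_one_of_separable hsep a)
        ((Polynomial.rootMultiplicity_pos (hP.map _).ne_zero).2 ha)
    rw [hf.natDegree_mul hg] at hm
    rw [Polynomial.map_mul] at hsep
    exact (Polynomial.Splits.of_natDegree_le_one_of_monic hf1.le hf).mul
      (ih _ (by omega) hg hsep.of_mul_right rfl)

/-- `P` splits over the ring of Puiseux series: it is a product of linear factors after
substituting some power `z ^ N` for the variable of its coefficients. -/
def SplitsPuiseux (P : K⟦X⟧[X]) : Prop :=
  ∃ N, ∃ hN : N ≠ 0, (P.map (PowerSeries.expand N hN).toRingHom).Splits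

theorem map_expand_map_expand (P : K⟦X⟧[X]) {M N : ℕ} (hM : M ≠ 0) (hN : N ≠ 0) :
    (P.map (PowerSeries.expand M hM).toRingHom).map (PowerSeries.expand N hN).toRingHom =
      P.map (PowerSeries.expand (N * M) (mul_ne_zero hN hM)).toRingHom := by
  rw [Polynomial.map_map, PowerSeries.expand_mul_eq_comp N hN M hM]
  rfl

namespace SplitsPuiseux

theorem of_splits {P : K⟦X⟧[X]} (hP : P.Splits) : SplitsPuiseux P :=
  ⟨1, one_ne_zero, hP.map _⟩

theorem mul {P Q : K⟦X⟧[X]} : SplitsPuiseux P → SplitsPuiseux Q → SplitsPuiseux (P * Q) := by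
  rintro ⟨M, hM, hP⟩ ⟨N, hN, hQ⟩
  refine ⟨N * M, mul_ne_zero hN hM, ?_⟩
  rw [Polynomial.map_mul, ← map_expand_map_expand P hM hN]
  refine (hP.map _).mul ?_
  simpa only [mul_comm N M, map_expand_map_expand Q hN hM] using
    hQ.map (PowerSeries.expand M hM).toRingHom

theorem of_map_expand {P : K⟦X⟧[X]} {M : ℕ} (hM : M ≠ 0) :
    SplitsPuiseux (P.map (PowerSeries.expand M hM).toRingHom) → SplitsPuiseux P := by
  rintro ⟨N, hN, h⟩
  exact ⟨N * M, mul_ne_zero hN hM, map_expand_map_expand P hM hN ▸ h⟩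

theorem scaleRoots {P : K⟦X⟧[X]} (hP : P.Monic) (s : K⟦X⟧) :
    SplitsPuiseux P → SplitsPuiseux (P.scaleRoots s) := by
  rintro ⟨N, hN, h⟩
  refine ⟨N, hN, ?_⟩
  rw [Polynomial.map_scaleRoots _ _ _ (by simp [hP.leadingCoeff])]
  exact h.scaleRoots _

theorem of_comp_X_add_C {P : K⟦X⟧[X]} (c : K⟦X⟧) :
    SplitsPuiseux (P.comp (Polynomial.X + Polynomial.C c)) → SplitsPuiseux P := by
  rintro ⟨N, hN, h⟩
  refine ⟨N, hN, ?_⟩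
  have := h.comp_X_sub_C ((PowerSeries.expand N hN).toRingHom c)
  rwa [Polynomial.map_comp, Polynomial.comp_assoc, Polynomial.map_add, Polynomial.map_X,
    Polynomial.map_C, Polynomial.add_comp, Polynomial.X_comp, Polynomial.C_comp, sub_add_cancel,
    Polynomial.comp_X] at this

end SplitsPuiseux

theorem exists_eq_scaleRoots_of_pow_dvd_coeff {R : Type*} [CommRing R] [Nontrivial R] {Q : R[X]}
    (hQ : Q.Monic) {s : R} (hdvd : ∀ i, s ^ (Q.natDegree - i) ∣ Q.coeff i) :
    ∃ P : R[X], P.Monic ∧ P.natDegree = Q.natDegree ∧ Q = P.scaleRoots s := by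
  choose r hr using hdvd
  have hcoeff (i : ℕ) :
      (∑ j ∈ range (Q.natDegree + 1), Polynomial.monomial j (r j)).coeff i = r i := by
    simp only [Polynomial.finsetSum_coeff, Polynomial.coeff_monomial, sum_ite_eq', mem_range,
      ite_eq_left_iff]
    intro hi
    simpa [Polynomial.coeff_eq_zero_of_natDegree_lt (show Q.natDegree < i by omega),
      show Q.natDegree - i = 0 by omega] using hr i
  have htop : r Q.natDegree = 1 := by simpa [hQ] using (hr Q.natDegree).symm
  have hdeg : (∑ j ∈ range (Q.natDegree + 1), Polynomial.monomial j (r j)).natDegree =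
      Q.natDegree := Polynomial.natDegree_eq_of_le_of_coeff_ne_zero
    (Polynomial.natDegree_sum_le_of_forall_le _ _ fun j hj ↦
      (Polynomial.natDegree_monomial_le _).trans (Nat.lt_succ_iff.1 (mem_range.1 hj)))
    (by rw [hcoeff, htop]; exact one_ne_zero)
  refine ⟨_, by rw [Polynomial.Monic, Polynomial.leadingCoeff, hdeg, hcoeff, htop], hdeg, ?_⟩
  ext1 i
  rw [Polynomial.coeff_scaleRoots, hdeg, hcoeff, hr i, mul_comm]

open Classical in
theorem exists_min_slope {Q : K⟦X⟧[X]} (hQ : Q.Monic) (hne : Q ≠ Polynomial.X ^ Q.natDegree) :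
    ∃ k < Q.natDegree, ∃ p : ℕ, (Q.coeff k).order = p ∧
      ∀ i < Q.natDegree,
        ((p * (Q.natDegree - i) : ℕ) : ℕ∞) ≤ (Q.natDegree - k) • (Q.coeff i).order := by
  have hS : ((range Q.natDegree).filter (Q.coeff · ≠ 0)).Nonempty := by
    by_contra! h
    refine hne (Polynomial.ext fun i ↦ ?_)
    rw [Polynomial.coeff_X_pow]
    split_ifs with hi
    · rw [hi, hQ.coeff_natDegree]
    · obtain hi | hi := Nat.lt_or_gt_of_ne hi
      · by_contra h0
        exact notMem_empty i (h ▸ mem_filter.2 ⟨mem_range.2 hi, h0⟩)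
      · exact Polynomial.coeff_eq_zero_of_natDegree_lt hi
  obtain ⟨k, hk, hmin⟩ := exists_min_image _
    (fun i ↦ ((Q.coeff i).order.toNat : ℚ) / (Q.natDegree - i : ℕ)) hS
  simp only [mem_filter, mem_range] at hk hmin
  refine ⟨k, hk.1, (Q.coeff k).order.toNat, (PowerSeries.coe_toNat_order hk.2).symm, ?_⟩
  intro i hi
  obtain h0 | h0 := eq_or_ne (Q.coeff i) 0
  · rw [h0, PowerSeries.order_zero, nsmul_eq_mul,
      ENat.mul_top (by exact_mod_cast (Nat.sub_pos_of_lt hk.1).ne')]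
    exact le_top
  have hki := hmin i ⟨hi, h0⟩
  rw [div_le_div_iff₀ (by exact_mod_cast Nat.sub_pos_of_lt hk.1)
    (by exact_mod_cast Nat.sub_pos_of_lt hi)] at hki
  rw [← PowerSeries.coe_toNat_order h0, nsmul_eq_mul, mul_comm (_ - k : ℕ).cast]
  exact_mod_cast hki

theorem exists_map_expand_eq_scaleRoots {Q : K⟦X⟧[X]} (hQ : Q.Monic)
    (hne : Q ≠ Polynomial.X ^ Q.natDegree) :
    ∃ q, ∃ hq : q ≠ 0, ∃ p, ∃ P : K⟦X⟧[X], P.Monic ∧ P.natDegree = Q.natDegree ∧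
      Q.map (PowerSeries.expand q hq).toRingHom = P.scaleRoots (PowerSeries.X ^ p) ∧
      P.map PowerSeries.constantCoeff ≠ Polynomial.X ^ Q.natDegree := by
  obtain ⟨k, hk, p, hp, hslope⟩ := exists_min_slope hQ hne
  have hq : Q.natDegree - k ≠ 0 := (Nat.sub_pos_of_lt hk).ne'
  set Q' := Q.map (PowerSeries.expand _ hq).toRingHom with hQ'
  have hcoeff (i : ℕ) : Q'.coeff i = PowerSeries.expand _ hq (Q.coeff i) := Polynomial.coeff_map ..
  have hdeg : Q'.natDegree = Q.natDegree := hQ.natDegree_map _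
  obtain ⟨P, hP, hPdeg, hPQ⟩ := exists_eq_scaleRoots_of_pow_dvd_coeff
    (s := PowerSeries.X ^ p) (hQ.map (PowerSeries.expand _ hq).toRingHom) (fun i ↦ by
      rw [← hQ', hdeg, ← pow_mul]
      obtain hi | hi := lt_or_ge i Q.natDegree
      · refine PowerSeries.X_pow_dvd_iff.2 fun j hj ↦ PowerSeries.coeff_of_lt_order _ ?_
        rw [hcoeff, PowerSeries.order_expand]
        exact (Nat.cast_lt.2 hj).trans_le (hslope i hi)
      · simp [Nat.sub_eq_zero_of_le hi])
  refine ⟨_, hq, p, P, hP, hPdeg.trans hdeg, hPQ, fun h ↦ ?_⟩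
  have hPk : PowerSeries.X ∣ P.coeff k := by
    rw [PowerSeries.X_dvd_iff, ← Polynomial.coeff_map, h, Polynomial.coeff_X_pow, if_neg hk.ne]
  obtain ⟨c, hc⟩ := hPk
  have horder : (Q.natDegree - k) • (p : ℕ∞) = 1 + c.order + (Q.natDegree - k) • (p : ℕ∞) := by
    conv_lhs => rw [← hp, ← PowerSeries.order_expand _ hq, ← hcoeff, hQ', hPQ,
      Polynomial.coeff_scaleRoots, hc, PowerSeries.order_mul, PowerSeries.order_mul,
      PowerSeries.order_pow, PowerSeries.order_X_pow, PowerSeries.order_X, hPdeg, ← hQ', hdeg]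
  have hfin : (Q.natDegree - k) • (p : ℕ∞) ≠ ⊤ := by
    rw [nsmul_eq_mul]
    exact_mod_cast ENat.natCast_ne_top _
  have hzero : 1 + c.order = 0 :=
    WithTop.add_right_cancel hfin (horder.symm.trans (zero_add _).symm)
  simp at hzero

theorem nextCoeff_taylor {R : Type*} [CommRing R] (P : R[X]) (hpos : 0 < P.natDegree) (r : R) :
    (Polynomial.taylor r P).nextCoeff = P.nextCoeff + P.natDegree * P.leadingCoeff * r := by
  have hdeg : (Polynomial.hasseDeriv (P.natDegree - 1) P).natDegree ≤ 1 :=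
    (Polynomial.natDegree_hasseDeriv_le _ _).trans (by omega)
  rw [Polynomial.nextCoeff_of_natDegree_pos (by rwa [Polynomial.natDegree_taylor]),
    Polynomial.nextCoeff_of_natDegree_pos hpos, Polynomial.natDegree_taylor,
    Polynomial.taylor_coeff, Polynomial.eq_X_add_C_of_natDegree_le_one hdeg]
  simp only [Polynomial.hasseDeriv_coeff, Polynomial.eval_add, Polynomial.eval_mul,
    Polynomial.eval_C, Polynomial.eval_X, zero_add, Nat.choose_self, Nat.cast_one, one_mul,
    Nat.add_sub_of_le hpos, Polynomial.coeff_natDegree, add_comm]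
  rw [Nat.choose_symm (by omega), Nat.choose_one_right]

theorem nextCoeff_scaleRoots {R : Type*} [CommRing R] (P : R[X]) (s : R) :
    (P.scaleRoots s).nextCoeff = P.nextCoeff * s := by
  obtain h | h := Nat.eq_zero_or_pos P.natDegree
  · simp [Polynomial.nextCoeff, h]
  · rw [Polynomial.nextCoeff_of_natDegree_pos (by rwa [Polynomial.natDegree_scaleRoots]),
      Polynomial.nextCoeff_of_natDegree_pos h, Polynomial.natDegree_scaleRoots,
      Polynomial.coeff_scaleRoots, Nat.sub_sub_self h, pow_one]

theorem exists_root_rootMultiplicity_lt [IsAlgClosed K] [CharZero K] {P : K[X]} (hP : P.Monic)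
    (hnext : P.nextCoeff = 0) (hne : P ≠ Polynomial.X ^ P.natDegree) :
    ∃ a, P.IsRoot a ∧ P.rootMultiplicity a < P.natDegree := by
  have hpos : P.natDegree ≠ 0 := fun h ↦ hne (by
    rw [h, pow_zero, hP.natDegree_eq_zero.1 h])
  obtain ⟨a, ha⟩ := IsAlgClosed.exists_root P
    (Polynomial.degree_ne_of_natDegree_ne hpos)
  refine ⟨a, ha, lt_of_not_ge fun hle ↦ hne ?_⟩
  have hpow : (Polynomial.X - Polynomial.C a) ^ P.natDegree = P :=
    (Polynomial.eq_of_monic_of_dvd_of_natDegree_le ((Polynomial.monic_X_sub_C a).pow _) hP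
      ((Polynomial.le_rootMultiplicity_iff hP.ne_zero).1 hle) (by simp)).symm
  have ha0 : a = 0 := by
    rw [← hpow, (Polynomial.monic_X_sub_C a).nextCoeff_pow] at hnext
    simpa [hpos] using hnext
  rw [ha0, Polynomial.C_0, sub_zero] at hpow
  exact hpow.symm

theorem splitsPuiseux_of_monic [IsAlgClosed K] [CharZero K] {P : K⟦X⟧[X]} (hP : P.Monic) :
    SplitsPuiseux P := by
  induction hm : P.natDegree using Nat.strong_induction_on generalizing P with
  | _ m ih =>
    obtain rfl | hpos := Nat.eq_zero_or_pos m
    · exact .of_splits (.of_natDegree_le_one_of_monic (by omega) hP)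
    have hm0 : (m : K) ≠ 0 := Nat.cast_ne_zero.2 hpos.ne'
    -- With `nextCoeff = 0`, rescaling by the lowest slope of the Newton polygon gives a polynomial
    -- whose reduction has at least two distinct roots, so that Hensel's lemma factors it.
    apply SplitsPuiseux.of_comp_X_add_C (-(PowerSeries.C (m : K)⁻¹ * P.nextCoeff))
    set Q := P.comp (Polynomial.X + Polynomial.C (-(PowerSeries.C (m : K)⁻¹ * P.nextCoeff))) with hQ
    have hQm : Q.Monic := hP.comp_X_add_C _
    have hQdeg : Q.natDegree = m := by
      rw [hQ, ← Polynomial.taylor_apply, Polynomial.natDegree_taylor, hm]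
    have hQnext : Q.nextCoeff = 0 := by
      rw [hQ, ← Polynomial.taylor_apply, nextCoeff_taylor _ (by omega), hP.leadingCoeff, hm,
        mul_one, mul_neg, ← mul_assoc, ← map_natCast (PowerSeries.C (R := K)) m, ← map_mul,
        mul_inv_cancel₀ hm0, map_one, one_mul, add_neg_cancel]
    by_cases hX : Q = Polynomial.X ^ Q.natDegree
    · exact .of_splits (hX ▸ .X_pow _)
    obtain ⟨q, hq, p, R, hR, hRdeg, hRQ, hRX⟩ := exists_map_expand_eq_scaleRoots hQm hX
    apply SplitsPuiseux.of_map_expand hq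
    rw [hRQ]
    apply SplitsPuiseux.scaleRoots hR
    have hRnext : R.nextCoeff * PowerSeries.X ^ p = 0 := by
      rw [← nextCoeff_scaleRoots, ← hRQ, Polynomial.nextCoeff_map_eq_of_isUnit_leadingCoeff _
        (by simp [hQm.leadingCoeff]), hQnext, map_zero]
    have hRnext : R.nextCoeff = 0 :=
      (mul_eq_zero.1 hRnext).resolve_right (pow_ne_zero _ PowerSeries.X_ne_zero)
    obtain ⟨a, ha, hlt⟩ := exists_root_rootMultiplicity_lt (hR.map PowerSeries.constantCoeff)
      (by rw [Polynomial.nextCoeff_map_eq_of_isUnit_leadingCoeff _ (by simp [hR.leadingCoeff]),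
        hRnext, map_zero])
      (by rwa [hR.natDegree_map, hRdeg])
    obtain ⟨f, g, hf, hg, rfl, hdeg⟩ := exists_monic_mul_of_rootMultiplicity hR a
    rw [hR.natDegree_map, hf.natDegree_mul hg, ← hdeg] at hlt
    rw [hf.natDegree_mul hg] at hRdeg
    have := (Polynomial.rootMultiplicity_pos (hR.map PowerSeries.constantCoeff).ne_zero).2 ha
    exact (ih _ (by omega) hf rfl).mul (ih _ (by omega) hg rfl)

end Puiseux

section Laurent

variable {K : Type*} [Field K]

theorem orderTop_multiset_prod (s : Multiset K⸨X⸩) :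
    s.prod.orderTop = (s.map HahnSeries.orderTop).sum := by
  induction s using Multiset.induction with
  | empty => simp
  | cons a s ih => rw [Multiset.prod_cons, HahnSeries.orderTop_mul, ih, Multiset.map_cons,
      Multiset.sum_cons]

theorem orderTop_single_one_pow (k : ℤ) (m : ℕ) :
    ((HahnSeries.single k (1 : K) : K⸨X⸩) ^ m).orderTop = ((m * k : ℤ) : WithTop ℤ) := by
  rw [HahnSeries.single_pow, one_pow, HahnSeries.orderTop_single one_ne_zero, nsmul_eq_mul]

theorem zero_le_orderTop_coe (p : K⟦X⟧) : 0 ≤ (p : K⸨X⸩).orderTop := by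
  refine HahnSeries.le_orderTop_iff_forall.2 fun j hj ↦ ?_
  rw [PowerSeries.coeff_coe, if_pos (by exact_mod_cast hj)]

theorem exists_coe_eq_of_zero_le_orderTop {f : K⸨X⸩} (hf : 0 ≤ f.orderTop) :
    ∃ p : K⟦X⟧, (p : K⸨X⸩) = f := by
  refine ⟨PowerSeries.mk fun k ↦ f.coeff k, HahnSeries.ext (funext fun k ↦ ?_)⟩
  rw [PowerSeries.coeff_coe]
  split_ifs with hk
  · exact (HahnSeries.le_orderTop_iff_forall.1 hf k (by exact_mod_cast hk)).symm
  · rw [PowerSeries.coeff_mk, Int.natAbs_of_nonneg (not_lt.1 hk)]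

theorem coeff_zero_coe (p : K⟦X⟧) : (p : K⸨X⸩).coeff 0 = PowerSeries.constantCoeff p := by
  rw [PowerSeries.coeff_coe, if_neg (lt_irrefl 0), Int.natAbs_zero,
    PowerSeries.coeff_zero_eq_constantCoeff_apply]

theorem orderTop_coe_eq_zero_iff {p : K⟦X⟧} :
    (p : K⸨X⸩).orderTop = 0 ↔ PowerSeries.constantCoeff p ≠ 0 := by
  rw [← coeff_zero_coe]
  refine ⟨HahnSeries.coeff_orderTop_ne, fun h ↦ le_antisymm ?_ (zero_le_orderTop_coe p)⟩
  exact not_lt.1 fun hlt ↦ h (HahnSeries.coeff_eq_zero_of_lt_orderTop hlt)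

/-- The Euler derivation `z d/dz` on Laurent series in `z`. It is preferred to `d/dz` because it
preserves the order of every series of nonzero order. -/
noncomputable def eulerDerivation (K : Type*) [Field K] : Derivation K K⸨X⸩ K⸨X⸩ :=
  let euler (f : K⸨X⸩) : K⸨X⸩ :=
    { coeff k := k * f.coeff k
      isPWO_support' := f.isPWO_support.mono fun _ hk ↦ right_ne_zero_of_mul hk }
  have support_euler (f : K⸨X⸩) : (euler f).support ⊆ f.support :=
    fun _ hk ↦ right_ne_zero_of_mul (a := (_ : K)) hk
  Derivation.mk'
    { toFun := euler
      map_add' f g := by ext k; exact mul_add _ _ _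
      map_smul' c f := by ext k; exact mul_left_comm _ _ _ }
    fun f g ↦ by
      ext k
      change k * (f * g).coeff k = (f * euler g + g * euler f).coeff k
      rw [mul_comm g, HahnSeries.coeff_add, HahnSeries.coeff_mul,
        HahnSeries.coeff_mul_right' g.isPWO_support (support_euler g),
        HahnSeries.coeff_mul_left' f.isPWO_support (support_euler f),
        Finset.mul_sum, ← Finset.sum_add_distrib]
      refine Finset.sum_congr rfl fun ij hij ↦ ?_
      rw [← (Finset.mem_antidiagonal.1 hij).2.2]
      change _ = f.coeff ij.1 * (ij.2 * g.coeff ij.2) + ij.1 * f.coeff ij.1 * g.coeff ij.2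
      push_cast
      ring

@[simp]
theorem coeff_eulerDerivation (f : K⸨X⸩) (k : ℤ) :
    (eulerDerivation K f).coeff k = k * f.coeff k := rfl

theorem eulerDerivation_single (k : ℤ) (a : K) :
    eulerDerivation K (HahnSeries.single k a) = HahnSeries.single k (k * a) := by
  ext j
  rw [coeff_eulerDerivation, HahnSeries.coeff_single, HahnSeries.coeff_single]
  split_ifs with h <;> simp [h]

theorem orderTop_le_orderTop_eulerDerivation (f : K⸨X⸩) :
    f.orderTop ≤ (eulerDerivation K f).orderTop :=
  HahnSeries.le_orderTop_iff_forall.2 fun j hj ↦ by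
    rw [coeff_eulerDerivation, HahnSeries.coeff_eq_zero_of_lt_orderTop hj, mul_zero]

variable [CharZero K]

theorem orderTop_eulerDerivation {f : K⸨X⸩} (hf : f.orderTop ≠ 0) :
    (eulerDerivation K f).orderTop = f.orderTop := by
  refine le_antisymm ?_ (orderTop_le_orderTop_eulerDerivation f)
  cases h : f.orderTop with
  | top => exact le_top
  | coe k =>
    refine not_lt.1 fun hlt ↦ mul_ne_zero (Int.cast_ne_zero.2 ?_) (HahnSeries.coeff_orderTop_ne h)
      (HahnSeries.coeff_eq_zero_of_lt_orderTop hlt)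
    rintro rfl
    exact hf h

theorem eq_C_of_eulerDerivation_eq_zero {f : K⸨X⸩} (hf : eulerDerivation K f = 0) :
    f = HahnSeries.C (f.coeff 0) := by
  ext k
  have hk : (k : K) * f.coeff k = 0 := by rw [← coeff_eulerDerivation, hf, HahnSeries.coeff_zero]
  rw [HahnSeries.C_apply, HahnSeries.coeff_single]
  split_ifs with h0
  · rw [h0]
  · exact (mul_eq_zero.1 hk).resolve_left (Int.cast_ne_zero.2 h0)

end Laurent

section Bivariate

variable {R A : Type*} [CommRing R] [CommRing A] [Algebra R A]

/-- The partial derivative of a bivariate polynomial with respect to the inner variable `X`; the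
one with respect to the outer variable `Y` is `Polynomial.derivative`. -/
noncomputable def innerDerivative (p : R[X][X]) : R[X][X] :=
  PolynomialModule.equivPolynomialSelf (Polynomial.derivative'.mapCoeffs p)

theorem coeff_innerDerivative (p : R[X][X]) (k : ℕ) :
    (innerDerivative p).coeff k = Polynomial.derivative (p.coeff k) := rfl

theorem derivation_aevalAeval (δ : Derivation R A A) (u v : A) (p : R[X][X]) :
    δ (p.aevalAeval u v) =
      (innerDerivative p).aevalAeval u v * δ u + p.derivative.aevalAeval u v * δ v := by
  induction p using Polynomial.induction_on' with
  | add p q hp hq =>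
    rw [innerDerivative] at hp hq ⊢
    simp only [map_add, hp, hq]
    ring
  | monomial k f =>
    have hinner : innerDerivative (Polynomial.monomial k f) =
        Polynomial.monomial k (Polynomial.derivative f) := by
      ext1 j
      rw [coeff_innerDerivative, Polynomial.coeff_monomial, Polynomial.coeff_monomial]
      split_ifs <;> simp
    rw [hinner, Polynomial.derivative_monomial]
    simp only [← Polynomial.C_mul_X_pow_eq_monomial, map_mul, map_pow, Polynomial.aevalAeval_C,
      Polynomial.aevalAeval_Y, Derivation.leibniz, Derivation.leibniz_pow, Derivation.map_aeval,
      smul_eq_mul, nsmul_eq_mul, map_natCast]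
    ring

end Bivariate

section Fiber

variable {R A B : Type*} [CommRing R] [CommRing A] [Algebra R A] [CommRing B] [Algebra R B]

theorem map_aevalAeval (φ : A →ₐ[R] B) (u v : A) (p : R[X][X]) :
    φ (p.aevalAeval u v) = p.aevalAeval (φ u) (φ v) := by
  suffices φ.comp (Polynomial.aevalAeval u v) = Polynomial.aevalAeval (φ u) (φ v) from
    DFunLike.congr_fun this p
  exact (Polynomial.aevalAevalEquiv R B).symm.injective (by simp)

/-- The univariate polynomial `p(ξ, Y)` obtained from `p(X, Y)` by specialising `X` to `ξ`. -/
noncomputable def fiber (p : R[X][X]) (ξ : A) : A[X] :=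
  p.map (Polynomial.aeval ξ : R[X] →ₐ[R] A)

theorem coeff_fiber (p : R[X][X]) (ξ : A) (k : ℕ) :
    (fiber p ξ).coeff k = Polynomial.aeval ξ (p.coeff k) := Polynomial.coeff_map _ _

theorem eval_fiber (p : R[X][X]) (ξ η : A) : (fiber p ξ).eval η = p.aevalAeval ξ η := by
  induction p using Polynomial.induction_on' with
  | add p q hp hq => rw [fiber, Polynomial.map_add, Polynomial.eval_add, map_add, ← hp, ← hq,
      fiber, fiber]
  | monomial k f => simp [fiber, ← Polynomial.C_mul_X_pow_eq_monomial]

theorem map_fiber (φ : A →ₐ[R] B) (p : R[X][X]) (ξ : A) :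
    (fiber p ξ).map (φ : A →+* B) = fiber p (φ ξ) := by
  ext1 k
  rw [Polynomial.coeff_map, coeff_fiber, coeff_fiber, RingHom.coe_coe,
    Polynomial.aeval_algHom_apply]

theorem derivative_fiber (p : R[X][X]) (ξ : A) :
    (fiber p ξ).derivative = fiber p.derivative ξ := Polynomial.derivative_map _ _

theorem monic_fiber {p : R[X][X]} (hp : p.Monic) (ξ : A) : (fiber p ξ).Monic := hp.map _

theorem natDegree_fiber [Nontrivial A] {p : R[X][X]} (hp : p.Monic) (ξ : A) :
    (fiber p ξ).natDegree = p.natDegree := hp.natDegree_map _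

end Fiber

section Charts

variable {K : Type*} [Field K]

/-- The residue map `p ↦ p(0)` of the power series ring, as a homomorphism of algebras. -/
noncomputable def constantCoeffAlgHom (K : Type*) [Field K] : K⟦X⟧ →ₐ[K] K :=
  { PowerSeries.constantCoeff with commutes' c := PowerSeries.constantCoeff_C c }

@[simp]
theorem constantCoeffAlgHom_apply (p : K⟦X⟧) :
    constantCoeffAlgHom K p = PowerSeries.constantCoeff p := rfl

theorem coe_aevalAeval (u v : K⟦X⟧) (p : K[X][X]) :
    ((p.aevalAeval u v : K⟦X⟧) : K⸨X⸩) = p.aevalAeval (u : K⸨X⸩) (v : K⸨X⸩) :=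
  map_aevalAeval (HahnSeries.ofPowerSeriesAlg ℤ K) u v p

theorem coe_aeval (u : K⟦X⟧) (f : K[X]) :
    ((Polynomial.aeval u f : K⟦X⟧) : K⸨X⸩) = Polynomial.aeval (u : K⸨X⸩) f :=
  (Polynomial.aeval_algHom_apply (HahnSeries.ofPowerSeriesAlg ℤ K) u f).symm

theorem map_coe_fiber (u : K⟦X⟧) (p : K[X][X]) :
    (fiber p u).map (HahnSeries.ofPowerSeries ℤ K) = fiber p (u : K⸨X⸩) :=
  Polynomial.ext fun k ↦ by rw [Polynomial.coeff_map, coeff_fiber, coeff_fiber, coe_aeval]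

/-- The ramified coordinate `x = x₀ + zᴺ` near the point `x₀` of the line. -/
noncomputable def chart (x₀ : K) (N : ℕ) : K⟦X⟧ := PowerSeries.C x₀ + PowerSeries.X ^ N

variable {N : ℕ}

theorem constantCoeff_chart (hN : N ≠ 0) (x₀ : K) :
    PowerSeries.constantCoeff (chart x₀ N) = x₀ := by
  simp [chart, hN]

theorem constantCoeff_aeval_chart (hN : N ≠ 0) (x₀ : K) (f : K[X]) :
    PowerSeries.constantCoeff (Polynomial.aeval (chart x₀ N) f) = f.eval x₀ := by
  rw [← constantCoeffAlgHom_apply, ← Polynomial.aeval_algHom_apply, constantCoeffAlgHom_apply,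
    constantCoeff_chart hN, Polynomial.coe_aeval_eq_eval]

theorem constantCoeff_aevalAeval_chart (hN : N ≠ 0) (x₀ : K) (β : K⟦X⟧) (p : K[X][X]) :
    PowerSeries.constantCoeff (p.aevalAeval (chart x₀ N) β) =
      p.aevalAeval x₀ (PowerSeries.constantCoeff β) := by
  rw [← constantCoeffAlgHom_apply, map_aevalAeval, constantCoeffAlgHom_apply,
    constantCoeff_chart hN, constantCoeffAlgHom_apply]

theorem map_constantCoeff_fiber_chart (hN : N ≠ 0) (x₀ : K) (p : K[X][X]) :
    (fiber p (chart x₀ N)).map PowerSeries.constantCoeff = fiber p x₀ := by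
  ext1 k
  rw [Polynomial.coeff_map, coeff_fiber, coeff_fiber, constantCoeff_aeval_chart hN,
    Polynomial.coe_aeval_eq_eval]

theorem orderTop_aeval_chart (hN : N ≠ 0) (x₀ : K) {f : K[X]} (hf : f ≠ 0) :
    (Polynomial.aeval (chart x₀ N : K⸨X⸩) f).orderTop =
      ((f.rootMultiplicity x₀ * N : ℤ) : WithTop ℤ) := by
  obtain ⟨q, hq, hdvd⟩ := Polynomial.exists_eq_pow_rootMultiplicity_mul_and_not_dvd f hf x₀
  have hfactor : Polynomial.aeval (chart x₀ N : K⸨X⸩) (Polynomial.X - Polynomial.C x₀) =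
      HahnSeries.single (N : ℤ) 1 := by
    rw [← coe_aeval, ← HahnSeries.ofPowerSeries_X_pow]
    simp [chart]
  conv_lhs => rw [hq]
  rw [map_mul, map_pow, HahnSeries.orderTop_mul, hfactor, orderTop_single_one_pow, ← coe_aeval,
    orderTop_coe_eq_zero_iff.2, add_zero]
  rwa [constantCoeff_aeval_chart hN, ne_eq, ← Polynomial.IsRoot.def, ← Polynomial.dvd_iff_isRoot]

theorem aeval_chart_injective {N : ℕ} (hN : N ≠ 0) (x₀ : K) :
    Function.Injective (Polynomial.aeval (chart x₀ N : K⸨X⸩) : K[X] →ₐ[K] K⸨X⸩) :=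
  (injective_iff_map_eq_zero _).2 fun f hf ↦ by
    by_contra hne
    have h := orderTop_aeval_chart hN x₀ hne
    rw [hf, HahnSeries.orderTop_zero] at h
    exact WithTop.top_ne_coe h

theorem eulerDerivation_chart (x₀ : K) (N : ℕ) :
    eulerDerivation K (chart x₀ N : K⸨X⸩) = HahnSeries.single (N : ℤ) (N : K) := by
  rw [chart, map_add, map_add, HahnSeries.ofPowerSeries_C, HahnSeries.ofPowerSeries_X_pow,
    eulerDerivation_single, HahnSeries.C_apply, eulerDerivation_single]
  simp

theorem coe_chart_zero (N : ℕ) : (chart (0 : K) N : K⸨X⸩) = HahnSeries.single (N : ℤ) 1 := by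
  rw [chart, map_zero, zero_add, HahnSeries.ofPowerSeries_X_pow]

theorem coe_chart_ne_zero (N : ℕ) : (chart (0 : K) N : K⸨X⸩) ≠ 0 := by
  rw [coe_chart_zero]
  exact HahnSeries.single_ne_zero one_ne_zero

/-- The ramified coordinate `x = z⁻ᴺ` near the point at infinity of the line. -/
noncomputable def infinityChart (K : Type*) [Field K] (N : ℕ) : K⸨X⸩ := (chart (0 : K) N : K⸨X⸩)⁻¹

theorem infinityChart_eq_single (N : ℕ) :
    infinityChart K N = HahnSeries.single (-(N : ℤ)) 1 := by
  rw [infinityChart, coe_chart_zero, HahnSeries.inv_single, inv_one]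

theorem orderTop_infinityChart_pow (N m : ℕ) :
    (infinityChart K N ^ m).orderTop = ((-(m * N) : ℤ) : WithTop ℤ) := by
  rw [infinityChart_eq_single, orderTop_single_one_pow, mul_neg]

theorem eulerDerivation_infinityChart (N : ℕ) :
    eulerDerivation K (infinityChart K N) = HahnSeries.single (-(N : ℤ)) (-N : K) := by
  rw [infinityChart_eq_single, eulerDerivation_single]
  simp

theorem aeval_inv_eq_aeval_reflect_mul {Ω : Type*} [Field Ω] [Algebra K Ω] {t : Ω} (ht : t ≠ 0)
    {f : K[X]} {m : ℕ} (hf : f.natDegree ≤ m) :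
    Polynomial.aeval t⁻¹ f = Polynomial.aeval t (f.reflect m) * t⁻¹ ^ m := by
  have := invertibleOfNonzero (inv_ne_zero ht)
  rw [Polynomial.aeval_def, ← Polynomial.eval₂_reflect_mul_pow _ _ m f hf, invOf_eq_inv, inv_inv,
    Polynomial.aeval_def]

theorem orderTop_aeval_infinityChart (hN : N ≠ 0) {f : K[X]} (hf : f ≠ 0) :
    (Polynomial.aeval (infinityChart K N) f).orderTop =
      ((-(f.natDegree * N) : ℤ) : WithTop ℤ) := by
  rw [infinityChart, aeval_inv_eq_aeval_reflect_mul (coe_chart_ne_zero N) le_rfl,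
    HahnSeries.orderTop_mul, ← infinityChart, orderTop_infinityChart_pow, ← coe_aeval,
    orderTop_coe_eq_zero_iff.2, zero_add]
  rwa [constantCoeff_aeval_chart hN, ← Polynomial.coeff_zero_eq_eval_zero,
    ← Polynomial.reverse, Polynomial.coeff_zero_reverse, Polynomial.leadingCoeff_ne_zero]

theorem aeval_infinityChart_injective (hN : N ≠ 0) :
    Function.Injective (Polynomial.aeval (infinityChart K N) : K[X] →ₐ[K] K⸨X⸩) :=
  (injective_iff_map_eq_zero _).2 fun f hf ↦ by
    by_contra hne
    have h := orderTop_aeval_infinityChart hN hne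
    rw [hf, HahnSeries.orderTop_zero] at h
    exact WithTop.top_ne_coe h

end Charts

section Infinity

variable {K : Type*} [Field K]

/-- The equation `zᵈ F(1 / z, w / z)` of the curve `F(x, y) = 0` in the coordinates `z = 1 / x`,
`w = y / x` at infinity, where `d` is the degree of `F` in `Y`. It is meaningful only when `d` is
also the total degree of `F`. -/
noncomputable def atInfinity (F : K[X][X]) : K[X][X] :=
  ∑ k ∈ range (F.natDegree + 1),
    Polynomial.monomial k ((F.coeff k).reflect (F.natDegree - k))

theorem coeff_atInfinity (F : K[X][X]) (k : ℕ) :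
    (atInfinity F).coeff k = (F.coeff k).reflect (F.natDegree - k) := by
  rw [atInfinity, Polynomial.finsetSum_coeff]
  simp only [Polynomial.coeff_monomial, Finset.sum_ite_eq', Finset.mem_range]
  split_ifs with hk
  · rfl
  · rw [Polynomial.coeff_eq_zero_of_natDegree_lt (by omega), Polynomial.reflect_zero]

/-- `F` is monic in `Y` and its degree in `Y` is its total degree: the curve `F(x, y) = 0` does not
meet the line at infinity in the vertical direction. -/
structure IsMonicAtInfinity (F : K[X][X]) : Prop where
  monic : F.Monic
  natDegree_coeff_le (k : ℕ) : (F.coeff k).natDegree ≤ F.natDegree - k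

/-- In addition to `IsMonicAtInfinity`, the curve `F(x, y) = 0` meets the line at infinity
transversally. -/
structure IsTransversalAtInfinity (F : K[X][X]) : Prop extends IsMonicAtInfinity F where
  separable : (fiber (atInfinity F) (0 : K)).Separable

namespace IsMonicAtInfinity

variable {F : K[X][X]}

theorem natDegree_atInfinity (hF : IsMonicAtInfinity F) :
    (atInfinity F).natDegree = F.natDegree := by
  refine le_antisymm (Polynomial.natDegree_le_iff_coeff_eq_zero.2 fun k hk ↦ ?_)
    (Polynomial.le_natDegree_of_ne_zero ?_)
  · rw [coeff_atInfinity, Polynomial.coeff_eq_zero_of_natDegree_lt hk, Polynomial.reflect_zero]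
  · rw [coeff_atInfinity, hF.monic.coeff_natDegree, Nat.sub_self, Polynomial.reflect_one, pow_zero]
    exact one_ne_zero

theorem monic_atInfinity (hF : IsMonicAtInfinity F) : (atInfinity F).Monic := by
  rw [Polynomial.Monic, Polynomial.leadingCoeff, hF.natDegree_atInfinity, coeff_atInfinity,
    hF.monic.coeff_natDegree, Nat.sub_self, Polynomial.reflect_one, pow_zero]

theorem fiber_inv (hF : IsMonicAtInfinity F) {Ω : Type*} [Field Ω] [Algebra K Ω] {t : Ω}
    (ht : t ≠ 0) : fiber F t⁻¹ = (fiber (atInfinity F) t).scaleRoots t⁻¹ := by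
  ext1 k
  rw [Polynomial.coeff_scaleRoots, coeff_fiber, coeff_fiber, coeff_atInfinity,
    natDegree_fiber hF.monic_atInfinity, hF.natDegree_atInfinity,
    aeval_inv_eq_aeval_reflect_mul ht (hF.natDegree_coeff_le k)]

theorem aevalAeval_inv (hF : IsMonicAtInfinity F) {Ω : Type*} [Field Ω] [Algebra K Ω] {t : Ω}
    (ht : t ≠ 0) (w : Ω) :
    F.aevalAeval t⁻¹ (t⁻¹ * w) = t⁻¹ ^ F.natDegree * (atInfinity F).aevalAeval t w := by
  have h := Polynomial.scaleRoots_eval₂_mul (p := fiber (atInfinity F) t) (RingHom.id Ω) w t⁻¹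
  rwa [Polynomial.eval₂_id, Polynomial.eval₂_id, RingHom.id_apply, ← hF.fiber_inv ht, eval_fiber,
    eval_fiber, natDegree_fiber hF.monic_atInfinity, hF.natDegree_atInfinity] at h

end IsMonicAtInfinity

theorem coeff_fiber_atInfinity_zero (F : K[X][X]) (k : ℕ) :
    (fiber (atInfinity F) (0 : K)).coeff k = (F.coeff k).coeff (F.natDegree - k) := by
  rw [coeff_fiber, coeff_atInfinity, Polynomial.coe_aeval_eq_eval,
    ← Polynomial.coeff_zero_eq_eval_zero, Polynomial.coeff_reflect,
    Polynomial.revAt_le (Nat.zero_le _), Nat.sub_zero]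

end Infinity

section PuiseuxExpansions

variable {K : Type*} [Field K] {N : ℕ}

theorem exists_coe_eq_of_isRoot {P : K⟦X⟧[X]} (hP : P.Monic) {β : K⸨X⸩}
    (hβ : (P.map (HahnSeries.ofPowerSeries ℤ K)).IsRoot β) : ∃ b : K⟦X⟧, (b : K⸨X⸩) = β :=
  IsIntegrallyClosed.isIntegral_iff.1 ⟨P, hP, by rwa [← Polynomial.eval_map]⟩

theorem exists_coe_eq_of_aevalAeval_chart {p : K[X][X]} (hp : p.Monic) {x₀ : K} {β : K⸨X⸩}
    (hβ : p.aevalAeval (chart x₀ N : K⸨X⸩) β = 0) : ∃ b : K⟦X⟧, (b : K⸨X⸩) = β :=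
  exists_coe_eq_of_isRoot (monic_fiber hp (chart x₀ N)) <| by
    rwa [map_coe_fiber, Polynomial.IsRoot.def, eval_fiber]

theorem IsMonicAtInfinity.exists_infinityChart_mul_coe_eq {F : K[X][X]} (hF : IsMonicAtInfinity F)
    {β : K⸨X⸩} (hβ : F.aevalAeval (infinityChart K N) β = 0) :
    ∃ b : K⟦X⟧, infinityChart K N * (b : K⸨X⸩) = β := by
  have ht := coe_chart_ne_zero (K := K) N
  have hβ' : β = infinityChart K N * (β * (chart (0 : K) N : K⸨X⸩)) := by
    rw [infinityChart, mul_comm β, inv_mul_cancel_left₀ ht]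
  rw [hβ', infinityChart, hF.aevalAeval_inv ht, mul_eq_zero,
    or_iff_right (pow_ne_zero _ (inv_ne_zero ht))] at hβ
  obtain ⟨b, hb⟩ := exists_coe_eq_of_aevalAeval_chart hF.monic_atInfinity hβ
  exact ⟨b, by rw [hb, ← hβ']⟩

variable [IsAlgClosed K]

theorem splits_fiber_chart_of_separable (hN : N ≠ 0) {p : K[X][X]} (hp : p.Monic) {x₀ : K}
    (hsep : (fiber p x₀).Separable) : (fiber p (chart x₀ N)).Splits :=
  splits_of_separable_map_constantCoeff (monic_fiber hp _) <| by
    rwa [map_constantCoeff_fiber_chart hN]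

theorem IsTransversalAtInfinity.splits_fiber_infinityChart {F : K[X][X]}
    (hF : IsTransversalAtInfinity F) (hN : N ≠ 0) : (fiber F (infinityChart K N)).Splits := by
  rw [infinityChart, hF.fiber_inv (coe_chart_ne_zero N), ← map_coe_fiber]
  exact ((splits_fiber_chart_of_separable hN hF.monic_atInfinity hF.separable).map _).scaleRoots _

variable [CharZero K]

theorem exists_splits_fiber_chart {p : K[X][X]} (hp : p.Monic) (x₀ : K) :
    ∃ N ≠ 0, (fiber p (chart x₀ N)).Splits := by
  obtain ⟨N, hN, hsplits⟩ := splitsPuiseux_of_monic (monic_fiber hp (chart x₀ 1))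
  refine ⟨N, hN, ?_⟩
  have hchart : PowerSeries.expand N hN (chart x₀ 1) = chart x₀ N := by
    simp [chart, PowerSeries.expand_C]
  rw [← hchart, ← map_fiber]
  exact hsplits

theorem IsMonicAtInfinity.exists_splits_fiber_infinityChart {F : K[X][X]}
    (hF : IsMonicAtInfinity F) : ∃ N ≠ 0, (fiber F (infinityChart K N)).Splits := by
  obtain ⟨N, hN, hsplits⟩ := exists_splits_fiber_chart hF.monic_atInfinity 0
  refine ⟨N, hN, ?_⟩
  rw [infinityChart, hF.fiber_inv (coe_chart_ne_zero N), ← map_coe_fiber]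
  exact (hsplits.map _).scaleRoots _

end PuiseuxExpansions

section Resultant

theorem aeval_resultant_of_splits {K Ω : Type*} [Field K] [CommRing Ω] [IsDomain Ω]
    [Algebra K Ω] {p : K[X][X]} (hp : p.Monic) (q : K[X][X]) {ξ : Ω}
    (hsplits : (fiber p ξ).Splits) :
    Polynomial.aeval ξ (p.resultant q) =
      ((fiber p ξ).roots.map fun η ↦ q.aevalAeval ξ η).prod := by
  have h := Polynomial.resultant_map_map p q p.natDegree q.natDegree
    (Polynomial.aeval ξ : K[X] →ₐ[K] Ω).toRingHom
  change (fiber p ξ).resultant (fiber q ξ) _ _ = Polynomial.aeval ξ _ at h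
  rw [← h, ← natDegree_fiber hp ξ, Polynomial.resultant_eq_prod_eval _ (fiber q ξ) _
    Polynomial.natDegree_map_le hsplits, (monic_fiber hp ξ).leadingCoeff, one_pow, one_mul]
  simp only [eval_fiber]

end Resultant

section Defect

theorem card_filter_isRoot_derivative_roots_add_card_toFinset {K : Type*} [Field K] [CharZero K]
    [DecidableEq K] {P : K[X]} (hP : P.Splits) :
    (P.derivative.roots.filter P.IsRoot).card + #P.roots.toFinset = P.natDegree := by
  rcases eq_or_ne P 0 with rfl | hP0
  · simp
  have hcount (a : K) (ha : a ∈ P.roots.toFinset) :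
      (P.derivative.roots.filter P.IsRoot).count a + 1 = P.roots.count a := by
    have hroot : P.IsRoot a := Polynomial.isRoot_of_mem_roots (Multiset.mem_toFinset.1 ha)
    rw [Multiset.count_filter_of_pos hroot, Polynomial.count_roots, Polynomial.count_roots,
      Polynomial.derivative_rootMultiplicity_of_root hroot,
      Nat.sub_add_cancel ((Polynomial.rootMultiplicity_pos hP0).2 hroot)]
  have hsub : (P.derivative.roots.filter P.IsRoot).toFinset ⊆ P.roots.toFinset := fun a ha ↦ by
    rw [Multiset.mem_toFinset, Multiset.mem_filter] at ha
    rw [Multiset.mem_toFinset, Polynomial.mem_roots hP0]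
    exact ha.2
  rw [hP.natDegree_eq_card_roots, ← Multiset.toFinset_sum_count_eq P.roots,
    ← Finset.sum_congr rfl hcount, Finset.sum_add_distrib, Finset.card_eq_sum_ones,
    Multiset.sum_count_eq_card fun a ha ↦ hsub (Multiset.mem_toFinset.2 ha)]

theorem sum_rootMultiplicity_eq_natDegree {K : Type*} [Field K] [IsAlgClosed K] {p : K[X]}
    {S : Finset K} (hS : ∀ x, p.IsRoot x → x ∈ S) :
    ∑ x ∈ S, p.rootMultiplicity x = p.natDegree := by
  classical
  simp only [← Polynomial.count_roots]
  rw [Multiset.sum_count_eq_card fun x hx ↦ hS x (Polynomial.isRoot_of_mem_roots hx),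
    (IsAlgClosed.splits p).natDegree_eq_card_roots]

variable {K : Type*} [Field K]

/-- The monic multiple `F_Y / d` of the derivative `F_Y`, where `d` is the degree of `F` in `Y`,
assumed monic; it defines the polar curve of `F`. -/
noncomputable def polar (F : K[X][X]) : K[X][X] :=
  Polynomial.C (Polynomial.C (F.natDegree : K)⁻¹) * F.derivative

theorem coeff_polar (F : K[X][X]) (k : ℕ) :
    (polar F).coeff k =
      F.coeff (k + 1) * Polynomial.C (((k + 1 : ℕ) : K) * (F.natDegree : K)⁻¹) := by
  rw [polar, Polynomial.coeff_C_mul, Polynomial.coeff_derivative, map_mul, map_natCast]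
  push_cast
  ring

theorem polar_aevalAeval {Ω : Type*} [CommRing Ω] [Algebra K Ω] (F : K[X][X]) (u v : Ω) :
    (polar F).aevalAeval u v =
      algebraMap K Ω (F.natDegree : K)⁻¹ * F.derivative.aevalAeval u v := by
  simp [polar]

theorem fiber_polar {Ω : Type*} [CommRing Ω] [Algebra K Ω] (F : K[X][X]) (ξ : Ω) :
    fiber (polar F) ξ =
      Polynomial.C (algebraMap K Ω (F.natDegree : K)⁻¹) * (fiber F ξ).derivative := by
  simp [fiber, polar]

variable {F : K[X][X]}

theorem IsMonicAtInfinity.orderTop_aevalAeval_infinityChart (hF : IsMonicAtInfinity F) {N : ℕ}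
    (hN : N ≠ 0) {b : K⟦X⟧} (hb : (atInfinity F).aevalAeval 0 (PowerSeries.constantCoeff b) ≠ 0) :
    (F.aevalAeval (infinityChart K N) (infinityChart K N * (b : K⸨X⸩))).orderTop =
      ((-(F.natDegree * N) : ℤ) : WithTop ℤ) := by
  rw [infinityChart, hF.aevalAeval_inv (coe_chart_ne_zero N), ← infinityChart,
    HahnSeries.orderTop_mul, orderTop_infinityChart_pow, ← coe_aevalAeval,
    orderTop_coe_eq_zero_iff.2, add_zero]
  rwa [constantCoeff_aevalAeval_chart hN]

theorem IsMonicAtInfinity.atInfinity_aevalAeval_eq_zero (hF : IsMonicAtInfinity F) {N : ℕ}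
    (hN : N ≠ 0) {b : K⟦X⟧}
    (hb : F.aevalAeval (infinityChart K N) (infinityChart K N * (b : K⸨X⸩)) = 0) :
    (atInfinity F).aevalAeval 0 (PowerSeries.constantCoeff b) = 0 := by
  by_contra hne
  have h := hF.orderTop_aevalAeval_infinityChart hN hne
  rw [hb, HahnSeries.orderTop_zero] at h
  exact WithTop.top_ne_coe h

variable [CharZero K]

theorem derivative_aevalAeval_eq_zero {Ω : Type*} [CommRing Ω] [Algebra K Ω]
    (hd : F.natDegree ≠ 0) {u v : Ω} (h : (polar F).aevalAeval u v = 0) :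
    F.derivative.aevalAeval u v = 0 := by
  have hunit : IsUnit (algebraMap K Ω (F.natDegree : K)⁻¹) :=
    (isUnit_iff_ne_zero.2 (inv_ne_zero (Nat.cast_ne_zero.2 hd))).map _
  rwa [polar_aevalAeval, hunit.mul_right_eq_zero] at h

theorem natDegree_polar (F : K[X][X]) : (polar F).natDegree = F.natDegree - 1 := by
  rcases eq_or_ne F.natDegree 0 with h | h
  · simp [polar, h]
  · rw [polar, Polynomial.natDegree_C_mul (by simpa using h), Polynomial.natDegree_derivative]

theorem IsMonicAtInfinity.polar (hF : IsMonicAtInfinity F) (hd : F.natDegree ≠ 0) :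
    IsMonicAtInfinity (polar F) where
  monic := by
    rw [Polynomial.Monic, Polynomial.leadingCoeff, natDegree_polar, coeff_polar,
      Nat.sub_add_cancel (Nat.pos_of_ne_zero hd), hF.monic.coeff_natDegree, one_mul,
      mul_inv_cancel₀ (Nat.cast_ne_zero.2 hd), map_one]
  natDegree_coeff_le k := by
    rw [coeff_polar, natDegree_polar]
    have h := hF.natDegree_coeff_le (k + 1)
    exact (Polynomial.natDegree_mul_C_le _ _).trans (by omega)

theorem fiber_atInfinity_polar (F : K[X][X]) :
    fiber (atInfinity (polar F)) (0 : K) =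
      Polynomial.C (F.natDegree : K)⁻¹ * (fiber (atInfinity F) (0 : K)).derivative := by
  ext1 k
  rw [Polynomial.coeff_C_mul, Polynomial.coeff_derivative, coeff_fiber_atInfinity_zero,
    coeff_fiber_atInfinity_zero, natDegree_polar, coeff_polar, Polynomial.coeff_mul_C,
    Nat.sub_sub, add_comm 1 k]
  push_cast
  ring

theorem eulerDerivation_aevalAeval_of_polar (hd : F.natDegree ≠ 0) {ξ β : K⸨X⸩}
    (hβ : (polar F).aevalAeval ξ β = 0) :
    eulerDerivation K (F.aevalAeval ξ β) =
      (innerDerivative F).aevalAeval ξ β * eulerDerivation K ξ := by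
  rw [derivation_aevalAeval, derivative_aevalAeval_eq_zero hd hβ, zero_mul, add_zero]

theorem orderTop_aevalAeval_chart_of_polar [DecidableEq K] (hd : F.natDegree ≠ 0) {x₀ : K}
    (hcrit : ∀ y₀, (innerDerivative F).aevalAeval x₀ y₀ = 0 → F.derivative.aevalAeval x₀ y₀ = 0 →
      F.aevalAeval x₀ y₀ = 0) {N : ℕ} (hN : N ≠ 0) {b : K⟦X⟧}
    (hb : (polar F).aevalAeval (chart x₀ N) b = 0) :
    (F.aevalAeval (chart x₀ N) b : K⸨X⸩).orderTop =
      ((innerDerivative F).aevalAeval (chart x₀ N) b : K⸨X⸩).orderTop +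
        if (fiber F x₀).IsRoot (PowerSeries.constantCoeff b) then ((N : ℤ) : WithTop ℤ) else 0 := by
  simp only [Polynomial.IsRoot.def, eval_fiber]
  split_ifs with h <;> rw [← constantCoeff_aevalAeval_chart hN] at h
  · have hne : (F.aevalAeval (chart x₀ N) b : K⸨X⸩).orderTop ≠ 0 := fun h0 ↦
      orderTop_coe_eq_zero_iff.1 h0 h
    have hb' : (polar F).aevalAeval (chart x₀ N : K⸨X⸩) (b : K⸨X⸩) = 0 := by
      rw [← coe_aevalAeval, hb, map_zero]
    rw [← orderTop_eulerDerivation hne, coe_aevalAeval,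
      eulerDerivation_aevalAeval_of_polar hd hb', HahnSeries.orderTop_mul, ← coe_aevalAeval,
      eulerDerivation_chart, HahnSeries.orderTop_single (Nat.cast_ne_zero.2 hN)]
  · rw [add_zero, orderTop_coe_eq_zero_iff.2 h, eq_comm, orderTop_coe_eq_zero_iff,
      constantCoeff_aevalAeval_chart hN]
    rw [constantCoeff_aevalAeval_chart hN] at h
    refine fun hX ↦ h (hcrit _ hX (derivative_aevalAeval_eq_zero hd ?_))
    rw [← constantCoeff_aevalAeval_chart hN, hb, map_zero]

theorem sum_map_ite_const {α M : Type*} [AddCommMonoid M] (s : Multiset α) (p : α → Prop)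
    [DecidablePred p] (c : M) :
    (s.map fun a ↦ if p a then c else 0).sum = (s.filter p).card • c := by
  induction s using Multiset.induction with
  | empty => simp
  | cons a s ih =>
    by_cases h : p a <;> simp [h, ih, add_nsmul, add_comm]

theorem IsTransversalAtInfinity.orderTop_aevalAeval_of_polar (hF : IsTransversalAtInfinity F)
    (hd : F.natDegree ≠ 0) {N : ℕ} (hN : N ≠ 0) {β : K⸨X⸩}
    (hβ : (polar F).aevalAeval (infinityChart K N) β = 0) :
    (F.aevalAeval (infinityChart K N) β).orderTop = ((-(F.natDegree * N) : ℤ) : WithTop ℤ) := by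
  have hG := hF.toIsMonicAtInfinity.polar hd
  obtain ⟨b, rfl⟩ := hG.exists_infinityChart_mul_coe_eq hβ
  refine hF.orderTop_aevalAeval_infinityChart hN fun hzero ↦ ?_
  have hpolar := hG.atInfinity_aevalAeval_eq_zero hN hβ
  rw [← eval_fiber, fiber_atInfinity_polar, Polynomial.eval_mul, Polynomial.eval_C, mul_eq_zero,
    or_iff_right (inv_ne_zero (Nat.cast_ne_zero.2 hd))] at hpolar
  rw [← eval_fiber] at hzero
  exact hF.separable.eval₂_derivative_ne_zero (RingHom.id K) hzero hpolar

theorem IsTransversalAtInfinity.orderTop_innerDerivative_aevalAeval_of_polar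
    (hF : IsTransversalAtInfinity F) (hd : F.natDegree ≠ 0) {N : ℕ} (hN : N ≠ 0) {β : K⸨X⸩}
    (hβ : (polar F).aevalAeval (infinityChart K N) β = 0) :
    ((innerDerivative F).aevalAeval (infinityChart K N) β).orderTop =
      ((-((F.natDegree - 1 : ℕ) * N) : ℤ) : WithTop ℤ) := by
  have horder := hF.orderTop_aevalAeval_of_polar hd hN hβ
  have hne : (F.aevalAeval (infinityChart K N) β).orderTop ≠ 0 := by
    rw [horder, ← WithTop.coe_zero, ne_eq, WithTop.coe_inj, neg_eq_zero]
    exact_mod_cast mul_ne_zero hd hN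
  rw [← orderTop_eulerDerivation hne, eulerDerivation_aevalAeval_of_polar hd hβ,
    HahnSeries.orderTop_mul, eulerDerivation_infinityChart,
    HahnSeries.orderTop_single (neg_ne_zero.2 (Nat.cast_ne_zero.2 hN))] at horder
  cases h : ((innerDerivative F).aevalAeval (infinityChart K N) β).orderTop with
  | top =>
    rw [h, top_add] at horder
    exact absurd horder WithTop.top_ne_coe
  | coe k =>
    rw [h, ← WithTop.coe_add, WithTop.coe_inj] at horder
    rw [WithTop.coe_inj, Nat.cast_pred (Nat.pos_of_ne_zero hd)]
    linarith

/-- Every critical point of `F` lies on the curve `F(x, y) = 0`, so that `F` has no critical value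
other than `0`. -/
def CriticalOnlyOnCurve (F : K[X][X]) : Prop :=
  ∀ x₀ y₀ : K, (innerDerivative F).aevalAeval x₀ y₀ = 0 → F.derivative.aevalAeval x₀ y₀ = 0 →
    F.aevalAeval x₀ y₀ = 0

variable [IsAlgClosed K]

theorem rootMultiplicity_resultant_polar [DecidableEq K] (hF : IsMonicAtInfinity F)
    (hd : F.natDegree ≠ 0) {x₀ : K}
    (hcrit : ∀ y₀, (innerDerivative F).aevalAeval x₀ y₀ = 0 → F.derivative.aevalAeval x₀ y₀ = 0 →
      F.aevalAeval x₀ y₀ = 0)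
    (hres : (polar F).resultant F ≠ 0) (hres' : (polar F).resultant (innerDerivative F) ≠ 0) :
    ((polar F).resultant F).rootMultiplicity x₀ =
      ((polar F).resultant (innerDerivative F)).rootMultiplicity x₀ +
        ((fiber (polar F) x₀).roots.filter (fiber F x₀).IsRoot).card := by
  have hG := hF.polar hd
  obtain ⟨N, hN, hsplits⟩ := exists_splits_fiber_chart hG.monic x₀
  have horder (q : K[X][X]) :
      (Polynomial.aeval (chart x₀ N : K⸨X⸩) ((polar F).resultant q)).orderTop =
      ((fiber (polar F) (chart x₀ N)).roots.map
        fun b ↦ (q.aevalAeval (chart x₀ N) b : K⸨X⸩).orderTop).sum := by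
    rw [← coe_aeval, aeval_resultant_of_splits hG.monic q hsplits, map_multiset_prod,
      orderTop_multiset_prod, Multiset.map_map, Multiset.map_map]
    rfl
  have hroots : (fiber (polar F) x₀).roots =
      (fiber (polar F) (chart x₀ N)).roots.map PowerSeries.constantCoeff := by
    rw [← map_constantCoeff_fiber_chart hN]
    refine hsplits.roots_map_of_ne_zero ?_
    rw [map_constantCoeff_fiber_chart hN]
    exact (monic_fiber hG.monic x₀).ne_zero
  have hlocal (b : K⟦X⟧) (hb : b ∈ (fiber (polar F) (chart x₀ N)).roots) :=
    orderTop_aevalAeval_chart_of_polar hd hcrit hN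
      ((eval_fiber (polar F) _ b).symm.trans (Polynomial.isRoot_of_mem_roots hb))
  have hsum := horder F
  rw [Multiset.map_congr rfl hlocal, Multiset.sum_map_add, ← horder, sum_map_ite_const,
    orderTop_aeval_chart hN x₀ hres, orderTop_aeval_chart hN x₀ hres'] at hsum
  rw [hroots, Multiset.filter_map, Multiset.card_map]
  rw [← WithTop.coe_nsmul, ← WithTop.coe_add, WithTop.coe_inj, nsmul_eq_mul, ← add_mul] at hsum
  exact_mod_cast mul_right_cancel₀ (Nat.cast_ne_zero.2 hN) hsum

theorem natDegree_resultant_polar_of_orderTop (hF : IsMonicAtInfinity F) (hd : F.natDegree ≠ 0)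
    {q : K[X][X]} {m : ℕ}
    (hq : ∀ N ≠ 0, ∀ β : K⸨X⸩, (polar F).aevalAeval (infinityChart K N) β = 0 →
      (q.aevalAeval (infinityChart K N) β).orderTop = ((-(m * N) : ℤ) : WithTop ℤ)) :
    (polar F).resultant q ≠ 0 ∧ ((polar F).resultant q).natDegree = (F.natDegree - 1) * m := by
  have hG := hF.polar hd
  obtain ⟨N, hN, hsplits⟩ := hG.exists_splits_fiber_infinityChart
  have horder_root (β : K⸨X⸩) (hβ : β ∈ (fiber (polar F) (infinityChart K N)).roots) :
      (HahnSeries.orderTop ∘ fun η ↦ q.aevalAeval (infinityChart K N) η) β =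
        ((-(m * N) : ℤ) : WithTop ℤ) :=
    hq N hN β ((eval_fiber (polar F) _ β).symm.trans (Polynomial.isRoot_of_mem_roots hβ))
  have horder : (Polynomial.aeval (infinityChart K N) ((polar F).resultant q)).orderTop =
      ((-(((F.natDegree - 1) * m : ℕ) * N) : ℤ) : WithTop ℤ) := by
    rw [aeval_resultant_of_splits hG.monic q hsplits, orderTop_multiset_prod, Multiset.map_map,
      Multiset.map_congr rfl horder_root, Multiset.map_const', Multiset.sum_replicate,
      ← hsplits.natDegree_eq_card_roots, natDegree_fiber hG.monic, natDegree_polar,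
      ← WithTop.coe_nsmul, nsmul_eq_mul, Nat.cast_mul]
    ring_nf
  have hne : (polar F).resultant q ≠ 0 := fun h0 ↦ by
    rw [h0, map_zero, HahnSeries.orderTop_zero] at horder
    exact WithTop.top_ne_coe horder
  rw [orderTop_aeval_infinityChart hN hne, WithTop.coe_inj, neg_inj] at horder
  exact ⟨hne, by exact_mod_cast mul_right_cancel₀ (Nat.cast_ne_zero.2 hN) horder⟩

theorem IsTransversalAtInfinity.sum_card_roots_add [DecidableEq K] (hF : IsTransversalAtInfinity F)
    (hd : F.natDegree ≠ 0) (hcrit : CriticalOnlyOnCurve F) {S : Finset K}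
    (hS : ∀ x₀ ∉ S, (fiber F x₀).Separable) :
    ∑ x₀ ∈ S, #(fiber F x₀).roots.toFinset + (F.natDegree - 1) = #S * F.natDegree := by
  obtain ⟨hne, hdeg⟩ := natDegree_resultant_polar_of_orderTop hF.toIsMonicAtInfinity hd
    fun N hN β hβ ↦ hF.orderTop_aevalAeval_of_polar hd hN hβ
  obtain ⟨hne', hdeg'⟩ := natDegree_resultant_polar_of_orderTop hF.toIsMonicAtInfinity hd
    fun N hN β hβ ↦ hF.orderTop_innerDerivative_aevalAeval_of_polar hd hN hβ
  have hmult (x₀ : K) := rootMultiplicity_resultant_polar hF.toIsMonicAtInfinity hd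
    (hcrit x₀) hne hne'
  have hpolarRoots (x₀ : K) : (fiber (polar F) x₀).roots = (fiber F x₀).derivative.roots := by
    rw [fiber_polar, Polynomial.roots_C_mul _ (by simpa using hd)]
  have hroot (x₀ : K) (h : ((polar F).resultant F).IsRoot x₀) : x₀ ∈ S := by
    by_contra hx
    rw [Polynomial.IsRoot.def, ← Polynomial.coe_aeval_eq_eval, aeval_resultant_of_splits
      (hF.polar hd).monic F (IsAlgClosed.splits _), Multiset.prod_eq_zero_iff] at h
    obtain ⟨y₀, hy, hzero⟩ := Multiset.mem_map.1 h
    rw [hpolarRoots] at hy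
    rw [← eval_fiber] at hzero
    exact (hS x₀ hx).eval₂_derivative_ne_zero (RingHom.id K) hzero
      (Polynomial.isRoot_of_mem_roots hy)
  have hroot' (x₀ : K) (h : ((polar F).resultant (innerDerivative F)).IsRoot x₀) : x₀ ∈ S :=
    hroot x₀ <| (Polynomial.rootMultiplicity_pos hne).1 <| by
      rw [hmult]
      exact Nat.add_pos_left ((Polynomial.rootMultiplicity_pos hne').2 h) _
  have hdefect : ∑ x₀ ∈ S, ((fiber (polar F) x₀).roots.filter (fiber F x₀).IsRoot).card =
      F.natDegree - 1 := by
    have hsum := sum_rootMultiplicity_eq_natDegree hroot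
    rw [Finset.sum_congr rfl fun x₀ _ ↦ hmult x₀, Finset.sum_add_distrib,
      sum_rootMultiplicity_eq_natDegree hroot', hdeg, hdeg'] at hsum
    obtain ⟨n, hn⟩ := Nat.exists_eq_succ_of_ne_zero hd
    rw [hn, Nat.succ_sub_one] at hsum ⊢
    linarith
  rw [← hdefect, add_comm, ← Finset.sum_add_distrib, Finset.sum_congr rfl fun x₀ _ ↦ by
    rw [hpolarRoots, card_filter_isRoot_derivative_roots_add_card_toFinset (IsAlgClosed.splits _),
      natDegree_fiber hF.monic], Finset.sum_const, smul_eq_mul]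

end Defect

section Separability

variable {K : Type*} [Field K] [CharZero K] {F : K[X][X]}

theorem IsTransversalAtInfinity.derivative_aevalAeval_infinityChart_ne_zero
    (hF : IsTransversalAtInfinity F) (hd : F.natDegree ≠ 0) {N : ℕ} (hN : N ≠ 0) {η : K⸨X⸩}
    (hη : F.aevalAeval (infinityChart K N) η = 0) :
    F.derivative.aevalAeval (infinityChart K N) η ≠ 0 := fun hzero ↦ by
  have h := hF.orderTop_aevalAeval_of_polar hd hN (β := η) <| by
    rw [polar_aevalAeval, hzero, mul_zero]
  rw [hη, HahnSeries.orderTop_zero] at h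
  exact WithTop.top_ne_coe h

variable [IsAlgClosed K]

theorem IsTransversalAtInfinity.resultant_derivative_ne_zero (hF : IsTransversalAtInfinity F)
    (hd : F.natDegree ≠ 0) : F.resultant F.derivative ≠ 0 := fun hzero ↦ by
  have h := aeval_resultant_of_splits hF.monic F.derivative
    (hF.splits_fiber_infinityChart one_ne_zero)
  rw [hzero, map_zero, eq_comm, Multiset.prod_eq_zero_iff, Multiset.mem_map] at h
  obtain ⟨η, hη, hη'⟩ := h
  exact hF.derivative_aevalAeval_infinityChart_ne_zero hd one_ne_zero
    ((eval_fiber F _ η).symm.trans (Polynomial.isRoot_of_mem_roots hη)) hη'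

theorem IsTransversalAtInfinity.derivative_aevalAeval_ne_zero (hF : IsTransversalAtInfinity F)
    (hd : F.natDegree ≠ 0) {Ω : Type*} [CommRing Ω] [Algebra K Ω] {ξ η : Ω}
    (hξ : Function.Injective (Polynomial.aeval ξ : K[X] →ₐ[K] Ω)) (hη : F.aevalAeval ξ η = 0) :
    F.derivative.aevalAeval ξ η ≠ 0 := fun hzero ↦ by
  obtain ⟨p, q, -, -, h⟩ := Polynomial.exists_mul_add_mul_eq_C_resultant F F.derivative le_rfl
    le_rfl (Or.inl hd)
  have h' := congr(Polynomial.aevalAeval ξ η $h)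
  rw [map_add, map_mul, map_mul, hη, hzero, zero_mul, zero_mul, add_zero, Polynomial.aevalAeval_C,
    eq_comm, map_eq_zero_iff _ hξ] at h'
  exact hF.resultant_derivative_ne_zero hd h'

end Separability

section Branch

variable {K : Type*} [Field K]

/-- A parametrised branch `(x(z), y(z))` of the curve `F(x, y) = 0`, along which neither `x` is
constant nor `F_Y` vanishes. The projections `Branch.x` and `Branch.y` are regarded as the
coordinate functions on the curve. -/
@[ext]
structure Branch (F : K[X][X]) where
  x : K⸨X⸩
  y : K⸨X⸩
  aevalAeval_eq_zero : F.aevalAeval x y = 0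
  derivative_ne_zero : F.derivative.aevalAeval x y ≠ 0
  eulerDerivation_x_ne_zero : eulerDerivation K x ≠ 0

namespace Branch

variable {F : K[X][X]}

theorem aevalAeval_apply (p : K[X][X]) (ν : Branch F) :
    p.aevalAeval (Branch.x : Branch F → K⸨X⸩) Branch.y ν = p.aevalAeval ν.x ν.y :=
  map_aevalAeval (Pi.evalAlgHom K (fun _ ↦ K⸨X⸩) ν) _ _ p

variable (F) in
/-- The ring `K[x, y, 1 / F_Y]` of functions on the curve `F(x, y) = 0`. A function is encoded by
its expansions along all the branches. -/
noncomputable def functionRing : Subalgebra K (Branch F → K⸨X⸩) :=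
  Algebra.adjoin K {Branch.x, Branch.y, (F.derivative.aevalAeval Branch.x Branch.y)⁻¹}

theorem x_mem_functionRing : Branch.x ∈ functionRing F :=
  Algebra.subset_adjoin (by simp)

theorem y_mem_functionRing : Branch.y ∈ functionRing F :=
  Algebra.subset_adjoin (by simp)

theorem inv_mem_functionRing :
    (F.derivative.aevalAeval (Branch.x : Branch F → K⸨X⸩) Branch.y)⁻¹ ∈ functionRing F :=
  Algebra.subset_adjoin (by simp)

theorem aevalAeval_mem_functionRing (p : K[X][X]) :
    p.aevalAeval (Branch.x : Branch F → K⸨X⸩) Branch.y ∈ functionRing F := by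
  have h := map_aevalAeval (functionRing F).val ⟨_, x_mem_functionRing⟩ ⟨_, y_mem_functionRing⟩ p
  exact h ▸ Subtype.prop _

theorem exists_mul_pow_eq_aevalAeval {g : Branch F → K⸨X⸩} (hg : g ∈ functionRing F) :
    ∃ (b : K[X][X]) (k : ℕ), ∀ ν : Branch F,
      g ν * F.derivative.aevalAeval ν.x ν.y ^ k = b.aevalAeval ν.x ν.y := by
  induction hg using Algebra.adjoin_induction with
  | mem g hg =>
    rcases hg with rfl | rfl | rfl
    · exact ⟨Polynomial.C Polynomial.X, 0, by simp⟩
    · exact ⟨Polynomial.X, 0, by simp⟩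
    · refine ⟨1, 1, fun ν ↦ ?_⟩
      rw [Pi.inv_apply, aevalAeval_apply, pow_one, inv_mul_cancel₀ ν.derivative_ne_zero, map_one]
  | algebraMap c => exact ⟨Polynomial.C (Polynomial.C c), 0, by simp⟩
  | add g h _ _ hg hh =>
    obtain ⟨b, k, hb⟩ := hg
    obtain ⟨b', k', hb'⟩ := hh
    refine ⟨b * F.derivative ^ k' + b' * F.derivative ^ k, k + k', fun ν ↦ ?_⟩
    rw [map_add, map_mul, map_mul, map_pow, map_pow, ← hb, ← hb', Pi.add_apply]
    ring
  | mul g h _ _ hg hh =>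
    obtain ⟨b, k, hb⟩ := hg
    obtain ⟨b', k', hb'⟩ := hh
    refine ⟨b * b', k + k', fun ν ↦ ?_⟩
    rw [map_mul, ← hb, ← hb', Pi.mul_apply]
    ring

variable (F) in
/-- The derivation `d/dx` on functions on the curve, computed along each branch. -/
noncomputable def derivation : Derivation K (Branch F → K⸨X⸩) (Branch F → K⸨X⸩) :=
  Derivation.mk'
    { toFun := fun g ν ↦ eulerDerivation K (g ν) / eulerDerivation K ν.x
      map_add' := fun g h ↦ funext fun ν ↦ by simp [add_div]
      map_smul' := fun c g ↦ funext fun ν ↦ by simp [smul_div_assoc] }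
    fun g h ↦ funext fun ν ↦ by
      simp only [LinearMap.coe_mk, AddHom.coe_mk, Pi.mul_apply, Pi.add_apply, Derivation.leibniz,
        smul_eq_mul]
      ring

theorem derivation_mem_functionRing {g : Branch F → K⸨X⸩} (hg : g ∈ functionRing F) :
    derivation F g ∈ functionRing F := by
  have hx : derivation F Branch.x = 1 :=
    funext fun ν ↦ div_self ν.eulerDerivation_x_ne_zero
  have hmul : F.derivative.aevalAeval Branch.x Branch.y *
      (F.derivative.aevalAeval (Branch.x : Branch F → K⸨X⸩) Branch.y)⁻¹ = 1 :=
    funext fun ν ↦ mul_inv_cancel₀ (aevalAeval_apply F.derivative ν ▸ ν.derivative_ne_zero)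
  have hy : derivation F Branch.y = -((innerDerivative F).aevalAeval Branch.x Branch.y *
      (F.derivative.aevalAeval Branch.x Branch.y)⁻¹) := by
    have hF : F.aevalAeval (Branch.x : Branch F → K⸨X⸩) Branch.y = 0 :=
      funext fun ν ↦ (aevalAeval_apply F ν).trans ν.aevalAeval_eq_zero
    have h := derivation_aevalAeval (derivation F) Branch.x Branch.y F
    rw [hF, map_zero, hx, mul_one] at h
    linear_combination (-(F.derivative.aevalAeval Branch.x Branch.y)⁻¹) * h -
      derivation F Branch.y * hmul
  have hy_mem : derivation F Branch.y ∈ functionRing F :=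
    hy ▸ neg_mem (mul_mem (aevalAeval_mem_functionRing _) inv_mem_functionRing)
  induction hg using Algebra.adjoin_induction with
  | mem g hg =>
    rcases hg with rfl | rfl | rfl
    · exact hx ▸ one_mem _
    · exact hy_mem
    · rw [Derivation.leibniz_of_mul_eq_one _ ((mul_comm _ _).trans hmul), derivation_aevalAeval, hx,
        smul_eq_mul]
      exact mul_mem (neg_mem (pow_mem inv_mem_functionRing 2))
        (add_mem (mul_mem (aevalAeval_mem_functionRing _) (one_mem _))
          (mul_mem (aevalAeval_mem_functionRing _) hy_mem))
  | algebraMap c => rw [Derivation.map_algebraMap]; exact zero_mem _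
  | add g h _ _ hg hh => rw [map_add]; exact add_mem hg hh
  | mul g h hg' hh' hg hh =>
    rw [Derivation.leibniz]
    exact add_mem (mul_mem hg' hh) (mul_mem hh' hg)

end Branch

end Branch

section Branches

variable {K : Type*} [Field K] [CharZero K] [IsAlgClosed K] {F : K[X][X]}

theorem IsTransversalAtInfinity.exists_branch (hF : IsTransversalAtInfinity F)
    (hd : F.natDegree ≠ 0) {ξ η : K⸨X⸩}
    (hξ : Function.Injective (Polynomial.aeval ξ : K[X] →ₐ[K] K⸨X⸩))
    (hξ' : eulerDerivation K ξ ≠ 0) (hη : F.aevalAeval ξ η = 0) :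
    ∃ ν : Branch F, ν.x = ξ ∧ ν.y = η :=
  ⟨⟨ξ, η, hη, hF.derivative_aevalAeval_ne_zero hd hξ hη, hξ'⟩, rfl, rfl⟩

theorem IsTransversalAtInfinity.exists_branch_chart (hF : IsTransversalAtInfinity F)
    (hd : F.natDegree ≠ 0) {x₀ : K} {N : ℕ} (hN : N ≠ 0) {η : K⸨X⸩}
    (hη : F.aevalAeval (chart x₀ N : K⸨X⸩) η = 0) :
    ∃ ν : Branch F, ν.x = chart x₀ N ∧ ν.y = η :=
  hF.exists_branch hd (aeval_chart_injective hN x₀)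
    (by simpa [eulerDerivation_chart] using hN) hη

theorem IsTransversalAtInfinity.exists_branch_infinityChart (hF : IsTransversalAtInfinity F)
    (hd : F.natDegree ≠ 0) {N : ℕ} (hN : N ≠ 0) {η : K⸨X⸩}
    (hη : F.aevalAeval (infinityChart K N) η = 0) :
    ∃ ν : Branch F, ν.x = infinityChart K N ∧ ν.y = η :=
  hF.exists_branch hd (aeval_infinityChart_injective hN)
    (by simpa [eulerDerivation_infinityChart] using hN) hη

end Branches

section Integrality

theorem dvd_of_orderTop_aeval_chart_le {K : Type*} [Field K] [IsAlgClosed K] {f g : K[X]}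
    (hg : g ≠ 0) (h : ∀ x₀ : K, ∃ N ≠ 0, (Polynomial.aeval (chart x₀ N : K⸨X⸩) g).orderTop ≤
      (Polynomial.aeval (chart x₀ N : K⸨X⸩) f).orderTop) : g ∣ f := by
  classical
  rcases eq_or_ne f 0 with rfl | hf
  · exact dvd_zero g
  refine (IsAlgClosed.splits g).dvd_of_roots_le_roots hg (Multiset.le_iff_count.2 fun x₀ ↦ ?_)
  obtain ⟨N, hN, hle⟩ := h x₀
  rw [orderTop_aeval_chart hN _ hg, orderTop_aeval_chart hN _ hf, WithTop.coe_le_coe] at hle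
  rw [Polynomial.count_roots, Polynomial.count_roots]
  exact_mod_cast le_of_mul_le_mul_right hle (by exact_mod_cast Nat.pos_of_ne_zero hN)

theorem aeval_resultant_C_mul_pow_sub {K Ω : Type*} [Field K] [Field Ω] [Algebra K Ω]
    {p : K[X][X]} (hp : p.Monic) {q : K[X][X]} {ξ : Ω} (hsplits : (fiber p ξ).Splits)
    (hq : ∀ η, p.aevalAeval ξ η = 0 → q.aevalAeval ξ η ≠ 0) (b : K[X][X]) (k : ℕ) (c : K) :
    Polynomial.aeval ξ (p.resultant (Polynomial.C (Polynomial.C c) * q ^ k - b)) =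
      Polynomial.aeval ξ (p.resultant q) ^ k *
        ((fiber p ξ).roots.map fun η ↦
          algebraMap K Ω c - b.aevalAeval ξ η / q.aevalAeval ξ η ^ k).prod := by
  rw [aeval_resultant_of_splits hp _ hsplits, aeval_resultant_of_splits hp _ hsplits,
    ← Multiset.prod_map_pow, ← Multiset.prod_map_mul]
  refine congrArg Multiset.prod (Multiset.map_congr rfl fun η hη ↦ ?_)
  have hη' := hq η ((eval_fiber p _ η).symm.trans (Polynomial.isRoot_of_mem_roots hη))
  rw [mul_sub, mul_div_cancel₀ _ (pow_ne_zero k hη'), map_sub, map_mul, map_pow,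
    Polynomial.aevalAeval_C, Polynomial.aeval_C, mul_comm]

theorem forall_mem_eq_zero_of_prod_sub_eq_pow {K Ω : Type*} [Field K] [Infinite K] [Field Ω]
    [Algebra K Ω] {s : Multiset Ω}
    (h : ∀ c : K, (s.map fun γ ↦ algebraMap K Ω c - γ).prod = algebraMap K Ω c ^ s.card) :
    ∀ γ ∈ s, γ = 0 := by
  have hpoly : (s.map fun γ ↦ Polynomial.X - Polynomial.C γ).prod = Polynomial.X ^ s.card := by
    refine Polynomial.eq_of_infinite_eval_eq _ _
      ((Set.infinite_range_of_injective (algebraMap K Ω).injective).mono ?_)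
    rintro _ ⟨c, rfl⟩
    simp only [Set.mem_ofPred_eq, Polynomial.eval_multiset_prod, Multiset.map_map,
      Function.comp_apply, Polynomial.eval_sub, Polynomial.eval_X, Polynomial.eval_C,
      Polynomial.eval_pow, h]
  intro γ hγ
  rw [← Polynomial.roots_multiset_prod_X_sub_C s, hpoly, Polynomial.roots_X_pow] at hγ
  exact Multiset.mem_singleton.1 (Multiset.mem_of_mem_nsmul hγ)

variable {K : Type*} [Field K]

theorem coe_C_eq_algebraMap (c : K) :
    ((PowerSeries.C c : K⟦X⟧) : K⸨X⸩) = algebraMap K K⸨X⸩ c :=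
  (HahnSeries.ofPowerSeriesAlg ℤ K).commutes c

theorem zero_le_orderTop_prod_algebraMap_sub (c : K) {s : Multiset K⸨X⸩}
    (hs : ∀ γ ∈ s, 0 ≤ γ.orderTop) :
    0 ≤ (s.map fun γ ↦ algebraMap K K⸨X⸩ c - γ).prod.orderTop := by
  rw [orderTop_multiset_prod, Multiset.map_map]
  refine Multiset.sum_nonneg fun o ho ↦ ?_
  obtain ⟨γ, hγ, rfl⟩ := Multiset.mem_map.1 ho
  obtain ⟨p, rfl⟩ := exists_coe_eq_of_zero_le_orderTop (hs γ hγ)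
  rw [Function.comp_apply, ← coe_C_eq_algebraMap, ← map_sub]
  exact zero_le_orderTop_coe _

theorem exists_coe_eq_prod_algebraMap_sub (c : K) (s : Multiset K⸨X⸩)
    (hs : ∀ γ ∈ s, 0 < γ.orderTop) :
    ∃ p : K⟦X⟧, (p : K⸨X⸩) = (s.map fun γ ↦ algebraMap K K⸨X⸩ c - γ).prod ∧
      PowerSeries.constantCoeff p = c ^ s.card := by
  induction s using Multiset.induction with
  | empty => exact ⟨1, by simp⟩
  | cons γ s ih =>
    obtain ⟨p, hp, hp'⟩ := ih fun γ' hγ' ↦ hs γ' (Multiset.mem_cons_of_mem hγ')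
    have hγ := hs γ (Multiset.mem_cons_self γ s)
    obtain ⟨q, rfl⟩ := exists_coe_eq_of_zero_le_orderTop hγ.le
    have hq : PowerSeries.constantCoeff q = 0 := by
      by_contra hq
      exact hγ.ne' (orderTop_coe_eq_zero_iff.2 hq)
    refine ⟨(PowerSeries.C c - q) * p, ?_, ?_⟩
    · rw [Multiset.map_cons, Multiset.prod_cons, ← hp, map_mul, map_sub, coe_C_eq_algebraMap]
    · rw [map_mul, map_sub, hq, hp', PowerSeries.constantCoeff_C, sub_zero, Multiset.card_cons,
        pow_succ']

theorem eq_C_of_aeval_infinityChart_eq_coe {N : ℕ} (hN : N ≠ 0) {f : K[X]} {p : K⟦X⟧}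
    (h : Polynomial.aeval (infinityChart K N) f = (p : K⸨X⸩)) :
    f = Polynomial.C (PowerSeries.constantCoeff p) := by
  have hdeg : f.natDegree = 0 := by
    rcases eq_or_ne f 0 with rfl | hf
    · exact Polynomial.natDegree_zero
    have hord := zero_le_orderTop_coe p
    rw [← h, orderTop_aeval_infinityChart hN hf, ← WithTop.coe_zero, WithTop.coe_le_coe,
      neg_nonneg] at hord
    by_contra hdeg
    have := Nat.pos_of_ne_zero (mul_ne_zero hdeg hN)
    zify at this
    omega
  obtain ⟨a, rfl⟩ := Polynomial.natDegree_eq_zero.1 hdeg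
  rw [Polynomial.aeval_C, ← coe_C_eq_algebraMap] at h
  rw [← HahnSeries.ofPowerSeries_injective h, PowerSeries.constantCoeff_C]

variable [CharZero K] [IsAlgClosed K] {F : K[X][X]}

theorem IsTransversalAtInfinity.pow_dvd_resultant_sub (hF : IsTransversalAtInfinity F)
    (hd : F.natDegree ≠ 0) {b : K[X][X]} {k : ℕ}
    (hfin : ∀ (x₀ : K), ∀ N ≠ 0, ∀ η, F.aevalAeval (chart x₀ N : K⸨X⸩) η = 0 →
      0 ≤ (b.aevalAeval (chart x₀ N : K⸨X⸩) η /
        F.derivative.aevalAeval (chart x₀ N : K⸨X⸩) η ^ k).orderTop) (c : K) :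
    F.resultant F.derivative ^ k ∣
      F.resultant (Polynomial.C (Polynomial.C c) * F.derivative ^ k - b) := by
  refine dvd_of_orderTop_aeval_chart_le (pow_ne_zero k (hF.resultant_derivative_ne_zero hd))
    fun x₀ ↦ ?_
  obtain ⟨N, hN, hsplits⟩ := exists_splits_fiber_chart hF.monic x₀
  have hsplits' := hsplits.map (HahnSeries.ofPowerSeries ℤ K)
  rw [map_coe_fiber] at hsplits'
  refine ⟨N, hN, ?_⟩
  rw [aeval_resultant_C_mul_pow_sub hF.monic hsplits' (fun η hη ↦
    hF.derivative_aevalAeval_ne_zero hd (aeval_chart_injective hN x₀) hη) b k c, map_pow,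
    HahnSeries.orderTop_mul]
  have h := zero_le_orderTop_prod_algebraMap_sub c
    (s := (fiber F (chart x₀ N : K⸨X⸩)).roots.map fun η ↦ b.aevalAeval (chart x₀ N : K⸨X⸩) η /
      F.derivative.aevalAeval (chart x₀ N : K⸨X⸩) η ^ k) fun γ hγ ↦ by
    obtain ⟨η, hη, rfl⟩ := Multiset.mem_map.1 hγ
    exact hfin x₀ N hN η ((eval_fiber F _ η).symm.trans (Polynomial.isRoot_of_mem_roots hη))
  rw [Multiset.map_map] at h
  exact le_add_of_nonneg_right h

theorem IsTransversalAtInfinity.div_eq_zero_of_zero_lt_orderTop (hF : IsTransversalAtInfinity F)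
    (hd : F.natDegree ≠ 0) {b : K[X][X]} {k : ℕ}
    (hfin : ∀ (x₀ : K), ∀ N ≠ 0, ∀ η, F.aevalAeval (chart x₀ N : K⸨X⸩) η = 0 →
      0 ≤ (b.aevalAeval (chart x₀ N : K⸨X⸩) η /
        F.derivative.aevalAeval (chart x₀ N : K⸨X⸩) η ^ k).orderTop)
    (hinf : ∀ η, F.aevalAeval (infinityChart K 1) η = 0 →
      0 < (b.aevalAeval (infinityChart K 1) η /
        F.derivative.aevalAeval (infinityChart K 1) η ^ k).orderTop)
    {η : K⸨X⸩} (hη : F.aevalAeval (infinityChart K 1) η = 0) :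
    b.aevalAeval (infinityChart K 1) η / F.derivative.aevalAeval (infinityChart K 1) η ^ k = 0 := by
  have hinj := aeval_infinityChart_injective (K := K) one_ne_zero
  set s := (fiber F (infinityChart K 1)).roots.map fun η ↦
    b.aevalAeval (infinityChart K 1) η / F.derivative.aevalAeval (infinityChart K 1) η ^ k with hs
  -- The quotient of the two resultants is a polynomial, and it is regular at infinity.
  have hprod (c : K) :
      (s.map fun γ ↦ algebraMap K K⸨X⸩ c - γ).prod = algebraMap K K⸨X⸩ c ^ s.card := by
    obtain ⟨p, hp⟩ := hF.pow_dvd_resultant_sub hd hfin c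
    obtain ⟨q, hq, hq'⟩ := exists_coe_eq_prod_algebraMap_sub c s fun γ hγ ↦ by
      obtain ⟨η, hη, rfl⟩ := Multiset.mem_map.1 hγ
      exact hinf η ((eval_fiber F _ η).symm.trans (Polynomial.isRoot_of_mem_roots hη))
    have h := aeval_resultant_C_mul_pow_sub hF.monic (hF.splits_fiber_infinityChart one_ne_zero)
      (fun η hη ↦ hF.derivative_aevalAeval_ne_zero hd hinj hη) b k c
    rw [hp, map_mul, map_pow] at h
    have h' : Polynomial.aeval (infinityChart K 1) p =
        (s.map fun γ ↦ algebraMap K K⸨X⸩ c - γ).prod := by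
      rw [hs, Multiset.map_map]
      exact mul_left_cancel₀ (pow_ne_zero k ((map_ne_zero_iff _ hinj).2
        (hF.resultant_derivative_ne_zero hd))) h
    have hconst := eq_C_of_aeval_infinityChart_eq_coe one_ne_zero (h'.trans hq.symm)
    rw [← h', hconst, Polynomial.aeval_C, hq', map_pow]
  refine forall_mem_eq_zero_of_prod_sub_eq_pow hprod _ (Multiset.mem_map_of_mem _ ?_)
  rw [Polynomial.mem_roots (monic_fiber hF.monic _).ne_zero, Polynomial.IsRoot.def, eval_fiber, hη]

end Integrality

section Vanishing

variable {K : Type*} [Field K] [CharZero K] [IsAlgClosed K] {F : K[X][X]}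

theorem IsTransversalAtInfinity.card_roots_fiber_infinityChart [DecidableEq K⸨X⸩]
    (hF : IsTransversalAtInfinity F) (hd : F.natDegree ≠ 0) :
    #(fiber F (infinityChart K 1)).roots.toFinset = F.natDegree := by
  have hne := (monic_fiber hF.monic (infinityChart K 1)).ne_zero
  have hnodup : (fiber F (infinityChart K 1)).roots.Nodup := by
    refine Multiset.nodup_iff_count_le_one.2 fun η ↦ not_lt.1 fun h ↦ ?_
    rw [Polynomial.count_roots, Polynomial.one_lt_rootMultiplicity_iff_isRoot hne,
      Polynomial.IsRoot.def, Polynomial.IsRoot.def, derivative_fiber, eval_fiber, eval_fiber] at h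
    exact hF.derivative_aevalAeval_infinityChart_ne_zero hd one_ne_zero h.1 h.2
  rw [Multiset.toFinset_card_of_nodup hnodup,
    ← (hF.splits_fiber_infinityChart one_ne_zero).natDegree_eq_card_roots, natDegree_fiber hF.monic]

theorem IsTransversalAtInfinity.dvd_of_forall_aevalAeval_infinityChart_eq_zero
    (hF : IsTransversalAtInfinity F) (hd : F.natDegree ≠ 0) {b : K[X][X]}
    (hb : ∀ η, F.aevalAeval (infinityChart K 1) η = 0 → b.aevalAeval (infinityChart K 1) η = 0) :
    F ∣ b := by
  classical
  have hinj := aeval_infinityChart_injective (K := K) one_ne_zero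
  have hzero : fiber (b %ₘ F) (infinityChart K 1) = 0 := by
    refine Polynomial.eq_zero_of_natDegree_lt_card_of_eval_eq_zero' _
      (fiber F (infinityChart K 1)).roots.toFinset (fun η hη ↦ ?_) ?_
    · have hη' := (eval_fiber F _ η).symm.trans
        (Polynomial.isRoot_of_mem_roots (Multiset.mem_toFinset.1 hη))
      have h := hb η hη'
      rwa [← Polynomial.modByMonic_add_div b F, map_add, map_mul, hη', zero_mul, add_zero,
        ← eval_fiber] at h
    · rw [hF.card_roots_fiber_infinityChart hd]
      exact Polynomial.natDegree_map_le.trans_lt (Polynomial.natDegree_modByMonic_lt _ hF.monic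
        fun h ↦ hd (by rw [h, Polynomial.natDegree_one]))
  rw [← Polynomial.modByMonic_eq_zero_iff_dvd hF.monic]
  exact (Polynomial.map_eq_zero_iff hinj).1 hzero

end Vanishing

namespace Branch

variable {K : Type*} [Field K] {F : K[X][X]}

theorem eq_div_pow {g : Branch F → K⸨X⸩} {b : K[X][X]} {k : ℕ}
    (hb : ∀ ν : Branch F, g ν * F.derivative.aevalAeval ν.x ν.y ^ k = b.aevalAeval ν.x ν.y)
    (ν : Branch F) : g ν = b.aevalAeval ν.x ν.y / F.derivative.aevalAeval ν.x ν.y ^ k :=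
  eq_div_of_mul_eq (pow_ne_zero k ν.derivative_ne_zero) (hb ν)

/-- The branch `ν` is centred at a point of the curve with abscissa `x₀`. -/
def LiesOver (ν : Branch F) (x₀ : K) : Prop := ∃ N ≠ 0, ν.x = chart x₀ N

/-- The branches of the curve at infinity, parametrised by `z = 1 / x`. -/
def infinite (F : K[X][X]) : Set (Branch F) := {ν | ν.x = infinityChart K 1}

theorem LiesOver.exists_coe_eq_aevalAeval {ν : Branch F} {x₀ : K} (hν : ν.LiesOver x₀)
    (hF : F.Monic) (p : K[X][X]) :
    ∃ q : K⟦X⟧, (q : K⸨X⸩) = p.aevalAeval ν.x ν.y ∧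
      PowerSeries.constantCoeff q = p.aevalAeval x₀ (ν.y.coeff 0) := by
  obtain ⟨N, hN, hx⟩ := hν
  obtain ⟨β, hβ⟩ := exists_coe_eq_of_aevalAeval_chart hF (hx ▸ ν.aevalAeval_eq_zero)
  refine ⟨p.aevalAeval (chart x₀ N) β, ?_, ?_⟩
  · rw [coe_aevalAeval, hβ, hx]
  · rw [constantCoeff_aevalAeval_chart hN, ← hβ, coeff_zero_coe]

theorem LiesOver.aevalAeval_coeff_zero {ν : Branch F} {x₀ : K} (hν : ν.LiesOver x₀)
    (hF : F.Monic) : F.aevalAeval x₀ (ν.y.coeff 0) = 0 := by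
  obtain ⟨q, hq, hq'⟩ := hν.exists_coe_eq_aevalAeval hF F
  rw [ν.aevalAeval_eq_zero] at hq
  rw [← hq', HahnSeries.ofPowerSeries_injective (hq.trans (map_zero _).symm), map_zero]

theorem LiesOver.zero_le_orderTop_of_separable {ν : Branch F} {x₀ : K} (hν : ν.LiesOver x₀)
    (hF : F.Monic) (hsep : (fiber F x₀).Separable) {g : Branch F → K⸨X⸩}
    (hg : g ∈ functionRing F) : 0 ≤ (g ν).orderTop := by
  obtain ⟨b, k, hb⟩ := exists_mul_pow_eq_aevalAeval hg
  obtain ⟨p, hp, -⟩ := hν.exists_coe_eq_aevalAeval hF b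
  obtain ⟨q, hq, hq'⟩ := hν.exists_coe_eq_aevalAeval hF F.derivative
  have hord : (F.derivative.aevalAeval ν.x ν.y ^ k).orderTop = 0 := by
    rw [← hq, ← map_pow, orderTop_coe_eq_zero_iff, map_pow, hq', ← eval_fiber, ← derivative_fiber]
    refine pow_ne_zero k ?_
    have h := hν.aevalAeval_coeff_zero hF
    rw [← eval_fiber] at h
    simpa only [Polynomial.eval₂_id] using hsep.eval₂_derivative_ne_zero (RingHom.id K) h
  have h := congrArg HahnSeries.orderTop (hb ν)
  rw [HahnSeries.orderTop_mul, hord, add_zero, ← hp] at h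
  exact h ▸ zero_le_orderTop_coe p

theorem encard_infinite_le (hF : F.Monic) : (infinite F).encard ≤ F.natDegree := by
  classical
  have hne := (monic_fiber hF (infinityChart K 1)).ne_zero
  have hmaps : Set.MapsTo Branch.y (infinite F) ↑(fiber F (infinityChart K 1)).roots.toFinset :=
    fun ν hν ↦ Multiset.mem_toFinset.2 <| (Polynomial.mem_roots hne).2 <| by
      rw [Polynomial.IsRoot.def, eval_fiber, ← show ν.x = _ from hν, ν.aevalAeval_eq_zero]
  have hinj : Set.InjOn Branch.y (infinite F) := fun ν hν ν' hν' h ↦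
    Branch.ext (Eq.trans hν (Eq.symm hν')) h
  refine (Set.encard_le_encard_of_injOn hmaps hinj).trans ?_
  rw [Set.encard_coe_eq_coe_finsetCard, Nat.cast_le, ← natDegree_fiber hF (infinityChart K 1)]
  exact (Multiset.toFinset_card_le _).trans (Polynomial.card_roots' _)

variable [CharZero K] [IsAlgClosed K]

theorem eq_zero_of_forall_mem_infinite (hF : IsTransversalAtInfinity F) (hd : F.natDegree ≠ 0)
    {g : Branch F → K⸨X⸩} (hg : g ∈ functionRing F) (hzero : ∀ ν ∈ infinite F, g ν = 0) :
    g = 0 := by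
  obtain ⟨b, k, hb⟩ := exists_mul_pow_eq_aevalAeval hg
  have hdvd : F ∣ b := hF.dvd_of_forall_aevalAeval_infinityChart_eq_zero hd fun η hη ↦ by
    obtain ⟨ν, hx, rfl⟩ := hF.exists_branch_infinityChart hd one_ne_zero hη
    rw [← hx, ← hb, hzero ν hx, zero_mul]
  obtain ⟨q, rfl⟩ := hdvd
  funext ν
  rw [eq_div_pow hb, map_mul, ν.aevalAeval_eq_zero, zero_mul, zero_div, Pi.zero_apply]

theorem eq_zero_of_zero_le_orderTop (hF : IsTransversalAtInfinity F) (hd : F.natDegree ≠ 0)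
    {g : Branch F → K⸨X⸩} (hg : g ∈ functionRing F)
    (hfin : ∀ (x₀ : K) (ν : Branch F), ν.LiesOver x₀ → 0 ≤ (g ν).orderTop)
    (hinf : ∀ ν ∈ infinite F, 0 < (g ν).orderTop) : g = 0 := by
  obtain ⟨b, k, hb⟩ := exists_mul_pow_eq_aevalAeval hg
  refine eq_zero_of_forall_mem_infinite hF hd hg fun ν hν ↦ ?_
  rw [eq_div_pow hb, show ν.x = _ from hν]
  refine hF.div_eq_zero_of_zero_lt_orderTop hd (fun x₀ N hN η hη ↦ ?_) (fun η hη ↦ ?_)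
    (hν ▸ ν.aevalAeval_eq_zero)
  · obtain ⟨ν, hx, rfl⟩ := hF.exists_branch_chart hd hN hη
    rw [← hx, ← eq_div_pow hb]
    exact hfin x₀ ν ⟨N, hN, hx⟩
  · obtain ⟨ν, hx, rfl⟩ := hF.exists_branch_infinityChart hd one_ne_zero hη
    rw [← hx, ← eq_div_pow hb]
    exact hinf ν hx

end Branch

section LinearAlgebra

variable {K E E' ι : Type*} [Field K] [AddCommGroup E] [Module K E] [AddCommGroup E'] [Module K E']

theorem finrank_map_add_finrank_inf_ker (φ : E →ₗ[K] E') (W : Submodule K E) [Module.Finite K W] :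
    Module.finrank K (W.map φ) + Module.finrank K ↥(W ⊓ LinearMap.ker φ) = Module.finrank K W := by
  rw [← LinearMap.range_domRestrict, ← Submodule.map_comap_subtype, ← LinearMap.ker_domRestrict,
    Submodule.finrank_map_subtype_eq, LinearMap.finrank_range_add_finrank_ker]

theorem finite_of_inf_ker_le [Finite ι] (φ : E →ₗ[K] ι → K) {V W : Submodule K E}
    [Module.Finite K V] (h : W ⊓ LinearMap.ker φ ≤ V) : Module.Finite K W :=
  Module.Finite.iff_fg.2 <| Submodule.fg_of_fg_map_of_fg_inf_ker φ
    (Module.Finite.iff_fg.1 inferInstance)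
    (Module.Finite.iff_fg.1 (Submodule.finiteDimensional_of_le h))

theorem finrank_le_add_of_inf_ker_le [Finite ι] (φ : E →ₗ[K] ι → K) {V W : Submodule K E}
    [Module.Finite K V] (h : W ⊓ LinearMap.ker φ ≤ V) :
    Module.finrank K W ≤ Module.finrank K V + Nat.card ι := by
  have := finite_of_inf_ker_le φ h
  have := Fintype.ofFinite ι
  rw [← finrank_map_add_finrank_inf_ker φ W, add_comm, Nat.card_eq_fintype_card,
    ← Module.finrank_fintype_fun_eq_card K]
  exact add_le_add (Submodule.finrank_mono h) (Submodule.finrank_le _)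

theorem finrank_add_le_of_le_inf_ker [Finite ι] (φ : E →ₗ[K] ι → K) {V W : Submodule K E}
    [Module.Finite K W] (h : V ≤ W ⊓ LinearMap.ker φ) (hsurj : W.map φ = ⊤) :
    Module.finrank K V + Nat.card ι ≤ Module.finrank K W := by
  have := Fintype.ofFinite ι
  have := Submodule.finiteDimensional_of_le (inf_le_left (a := W) (b := LinearMap.ker φ))
  rw [← finrank_map_add_finrank_inf_ker φ W, hsurj, finrank_top,
    Module.finrank_fintype_fun_eq_card, Nat.card_eq_fintype_card, add_comm]
  exact add_le_add_right (Submodule.finrank_mono h) _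

end LinearAlgebra

section Order

variable {K : Type*} [Field K]

variable (K) in
/-- The Laurent series of order at least `m`. -/
def orderGE (m : WithTop ℤ) : Submodule K K⸨X⸩ where
  carrier := {f | m ≤ f.orderTop}
  zero_mem' := by simp
  add_mem' {f g} hf hg := show m ≤ (f + g).orderTop from
    le_trans (le_min hf hg) HahnSeries.min_orderTop_le_orderTop_add
  smul_mem' c f hf := show m ≤ (c • f).orderTop from
    le_trans hf (HahnSeries.orderTop_le_orderTop_smul c f)

@[simp]
theorem mem_orderGE {m : WithTop ℤ} {f : K⸨X⸩} : f ∈ orderGE K m ↔ m ≤ f.orderTop := by rfl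

theorem orderGE_anti : Antitone (orderGE K) := fun _ _ h _ hf ↦ le_trans h hf

theorem succ_le_orderTop {m : ℤ} {f : K⸨X⸩} (hf : m ≤ f.orderTop) (hm : f.coeff m = 0) :
    (m + 1 : ℤ) ≤ f.orderTop :=
  HahnSeries.le_orderTop_iff_forall.2 fun j hj ↦ by
    rcases (Int.lt_add_one_iff.1 (WithTop.coe_lt_coe.1 hj)).lt_or_eq with h | rfl
    · exact HahnSeries.coeff_eq_zero_of_lt_orderTop ((WithTop.coe_lt_coe.2 h).trans_le hf)
    · exact hm

theorem coeff_zero_eq_zero_of_mem_orderGE {f : K⸨X⸩} (hf : f ∈ orderGE K (1 : ℤ)) : f.coeff 0 = 0 :=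
  HahnSeries.coeff_eq_zero_of_lt_orderTop ((WithTop.coe_lt_coe.2 zero_lt_one).trans_le
    (mem_orderGE.1 hf))

theorem one_le_orderTop_eulerDerivation {f : K⸨X⸩} (hf : 0 ≤ f.orderTop) :
    ((1 : ℤ) : WithTop ℤ) ≤ (eulerDerivation K f).orderTop :=
  succ_le_orderTop (m := 0) (hf.trans (orderTop_le_orderTop_eulerDerivation f)) (by simp)

theorem coeff_zero_algebraMap (c : K) :
    (algebraMap K K⸨X⸩ c).coeff 0 = c := by
  rw [← coe_C_eq_algebraMap, coeff_zero_coe, PowerSeries.constantCoeff_C]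

end Order

namespace Branch

variable {K : Type*} [Field K] {F : K[X][X]} {S : Finset K} {m : ℤ}

/-- The function `g` is regular on the fibre over `x₀`, in the sense that it is bounded there and
takes a single value at each point of the curve: branches through the same point have the same
ordinate `y(0)`. -/
structure IsRegularOver (g : Branch F → K⸨X⸩) (x₀ : K) : Prop where
  mem_orderGE (ν : Branch F) : ν.LiesOver x₀ → g ν ∈ orderGE K 0
  coeff_zero_eq (ν ν' : Branch F) : ν.LiesOver x₀ → ν'.LiesOver x₀ →
    ν.y.coeff 0 = ν'.y.coeff 0 → (g ν).coeff 0 = (g ν').coeff 0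

/-- The functions on the curve which are regular over `S` and whose orders at infinity are at least
`m`. -/
def sections (F : K[X][X]) (S : Finset K) (m : ℤ) : Submodule K (Branch F → K⸨X⸩) where
  carrier := {g | g ∈ functionRing F ∧ (∀ x₀ ∈ S, IsRegularOver g x₀) ∧
    ∀ ν ∈ infinite F, g ν ∈ orderGE K m}
  zero_mem' := ⟨zero_mem _, fun _ _ ↦ ⟨fun _ _ ↦ zero_mem _, fun _ _ _ _ _ ↦ rfl⟩,
    fun _ _ ↦ zero_mem _⟩
  add_mem' hf hg := ⟨add_mem hf.1 hg.1, fun x₀ hx₀ ↦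
    ⟨fun ν hν ↦ add_mem ((hf.2.1 x₀ hx₀).mem_orderGE ν hν) ((hg.2.1 x₀ hx₀).mem_orderGE ν hν),
      fun ν ν' hν hν' h ↦ congrArg₂ (· + ·) ((hf.2.1 x₀ hx₀).coeff_zero_eq ν ν' hν hν' h)
        ((hg.2.1 x₀ hx₀).coeff_zero_eq ν ν' hν hν' h)⟩,
    fun ν hν ↦ add_mem (hf.2.2 ν hν) (hg.2.2 ν hν)⟩
  smul_mem' c _ hf := ⟨Subalgebra.smul_mem _ hf.1 c, fun x₀ hx₀ ↦
    ⟨fun ν hν ↦ Submodule.smul_mem _ c ((hf.2.1 x₀ hx₀).mem_orderGE ν hν),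
      fun ν ν' hν hν' h ↦ congrArg (c * ·) ((hf.2.1 x₀ hx₀).coeff_zero_eq ν ν' hν hν' h)⟩,
    fun ν hν ↦ Submodule.smul_mem _ c (hf.2.2 ν hν)⟩

/-- The functions on the curve which vanish over `S` and whose orders at infinity are at least
`m`. -/
def vanishingSections (F : K[X][X]) (S : Finset K) (m : ℤ) : Submodule K (Branch F → K⸨X⸩) where
  carrier := {g | g ∈ functionRing F ∧
    (∀ x₀ ∈ S, ∀ ν : Branch F, ν.LiesOver x₀ → g ν ∈ orderGE K (1 : ℤ)) ∧
    ∀ ν ∈ infinite F, g ν ∈ orderGE K m}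
  zero_mem' := ⟨zero_mem _, fun _ _ _ _ ↦ zero_mem _, fun _ _ ↦ zero_mem _⟩
  add_mem' hf hg := ⟨add_mem hf.1 hg.1,
    fun x₀ hx₀ ν hν ↦ add_mem (hf.2.1 x₀ hx₀ ν hν) (hg.2.1 x₀ hx₀ ν hν),
    fun ν hν ↦ add_mem (hf.2.2 ν hν) (hg.2.2 ν hν)⟩
  smul_mem' c _ hf := ⟨Subalgebra.smul_mem _ hf.1 c,
    fun x₀ hx₀ ν hν ↦ Submodule.smul_mem _ c (hf.2.1 x₀ hx₀ ν hν),
    fun ν hν ↦ Submodule.smul_mem _ c (hf.2.2 ν hν)⟩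

theorem vanishingSections_le_sections : vanishingSections F S m ≤ sections F S m :=
  fun _ hg ↦ ⟨hg.1, fun x₀ hx₀ ↦
    ⟨fun ν hν ↦ orderGE_anti (WithTop.coe_le_coe.2 zero_le_one) (hg.2.1 x₀ hx₀ ν hν),
      fun ν ν' hν hν' _ ↦ (coeff_zero_eq_zero_of_mem_orderGE (hg.2.1 x₀ hx₀ ν hν)).trans
        (coeff_zero_eq_zero_of_mem_orderGE (hg.2.1 x₀ hx₀ ν' hν')).symm⟩, hg.2.2⟩

theorem sections_anti : Antitone (sections F S) := fun _ _ h _ hg ↦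
  ⟨hg.1, hg.2.1, fun ν hν ↦ orderGE_anti (WithTop.coe_le_coe.2 h) (hg.2.2 ν hν)⟩

/-- The linear map sending a function to its coefficients of degree `j` along the branches `ν i`. -/
noncomputable def coeffMap {ι : Type*} (j : ℤ) (ν : ι → Branch F) : (Branch F → K⸨X⸩) →ₗ[K] ι → K :=
  LinearMap.pi fun i ↦ HahnSeries.coeff.linearMap j ∘ₗ LinearMap.proj (ν i)

theorem coeffMap_apply {ι : Type*} (j : ℤ) (ν : ι → Branch F) (g : Branch F → K⸨X⸩) (i : ι) :
    coeffMap j ν g i = (g (ν i)).coeff j := rfl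

theorem sections_inf_ker_coeffMap_le :
    sections F S m ⊓ LinearMap.ker (coeffMap m ((↑) : infinite F → Branch F)) ≤
      sections F S (m + 1) := fun _ hg ↦
  ⟨hg.1.1, hg.1.2.1, fun ν hν ↦ succ_le_orderTop (mem_orderGE.1 (hg.1.2.2 ν hν))
    (congrFun (LinearMap.mem_ker.1 hg.2) ⟨ν, hν⟩)⟩

theorem aeval_apply (p : K[X]) (ν : Branch F) :
    Polynomial.aeval (Branch.x : Branch F → K⸨X⸩) p ν = Polynomial.aeval ν.x p :=
  (Polynomial.aeval_algHom_apply (Pi.evalAlgHom K (fun _ ↦ K⸨X⸩) ν) _ p).symm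

variable (F S) in
/-- The operator `r(x) d/dx`, where `r = ∏ (X - x₀)` over `x₀ ∈ S`. -/
noncomputable def nodalDerivation : (Branch F → K⸨X⸩) →ₗ[K] Branch F → K⸨X⸩ :=
  LinearMap.mulLeft K (Polynomial.aeval Branch.x (Lagrange.nodal S id)) ∘ₗ ↑(derivation F)

theorem nodalDerivation_apply (g : Branch F → K⸨X⸩) (ν : Branch F) :
    nodalDerivation F S g ν = Polynomial.aeval ν.x (Lagrange.nodal S id) *
      (eulerDerivation K (g ν) / eulerDerivation K ν.x) :=
  congrArg (· * _) (aeval_apply _ ν)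

theorem finite_infinite (hF : F.Monic) : Finite (infinite F) :=
  (Set.finite_of_encard_le_coe (encard_infinite_le hF)).to_subtype

theorem card_infinite_le (hF : F.Monic) : Nat.card (infinite F) ≤ F.natDegree := by
  have := finite_infinite hF
  rw [Nat.card_coe_set_eq, ← Nat.cast_le (α := ℕ∞), Set.Finite.cast_ncard_eq ‹_›]
  exact encard_infinite_le hF

variable [CharZero K]

theorem nodalDerivation_mem_vanishingSections {g : Branch F → K⸨X⸩} (hg : g ∈ sections F S m) :
    nodalDerivation F S g ∈ vanishingSections F S (m + 1 - #S) := by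
  refine ⟨mul_mem ?_ (derivation_mem_functionRing hg.1), fun x₀ hx₀ ν hν ↦ ?_, fun ν hν ↦ ?_⟩
  · rw [← Polynomial.aevalAeval_C]
    exact aevalAeval_mem_functionRing _
  · have hθ := one_le_orderTop_eulerDerivation ((hg.2.1 x₀ hx₀).mem_orderGE ν hν)
    obtain ⟨N, hN, hx⟩ := hν
    have hmult : 0 < (Lagrange.nodal S id).rootMultiplicity x₀ :=
      (Polynomial.rootMultiplicity_pos (Lagrange.nodal_ne_zero)).2
        (Lagrange.eval_nodal_at_node (v := id) hx₀)
    rw [mem_orderGE, nodalDerivation_apply, hx, eulerDerivation_chart, mul_div_left_comm,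
      div_eq_mul_inv, HahnSeries.inv_single, HahnSeries.orderTop_mul, HahnSeries.orderTop_mul,
      orderTop_aeval_chart hN _ Lagrange.nodal_ne_zero, HahnSeries.orderTop_single
      (inv_ne_zero (Nat.cast_ne_zero.2 hN)), ← WithTop.coe_add]
    refine le_add_of_le_of_nonneg hθ (WithTop.coe_nonneg.2 ?_)
    nlinarith
  · have hθ := (hg.2.2 ν hν).trans (orderTop_le_orderTop_eulerDerivation _)
    rw [mem_orderGE, nodalDerivation_apply, show ν.x = _ from hν, eulerDerivation_infinityChart,
      mul_div_left_comm, div_eq_mul_inv, HahnSeries.inv_single, HahnSeries.orderTop_mul,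
      HahnSeries.orderTop_mul, orderTop_aeval_infinityChart one_ne_zero Lagrange.nodal_ne_zero,
      Lagrange.natDegree_nodal, HahnSeries.orderTop_single (by simp), ← WithTop.coe_add]
    refine le_trans (WithTop.coe_le_coe.2 ?_) (add_le_add_left hθ _)
    push_cast
    omega

variable [IsAlgClosed K]

theorem sections_one_eq_bot (hF : IsTransversalAtInfinity F) (hd : F.natDegree ≠ 0)
    (hS : ∀ x₀ ∉ S, (fiber F x₀).Separable) : sections F S 1 = ⊥ := by
  refine (Submodule.eq_bot_iff _).2 fun g hg ↦ eq_zero_of_zero_le_orderTop hF hd hg.1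
    (fun x₀ ν hν ↦ ?_) fun ν hν ↦ (WithTop.coe_lt_coe.2 zero_lt_one).trans_le (hg.2.2 ν hν)
  by_cases hx₀ : x₀ ∈ S
  · exact (hg.2.1 x₀ hx₀).mem_orderGE ν hν
  · exact hν.zero_le_orderTop_of_separable hF.monic (hS x₀ hx₀) hg.1

theorem finite_sections (hF : IsTransversalAtInfinity F) (hd : F.natDegree ≠ 0)
    (hS : ∀ x₀ ∉ S, (fiber F x₀).Separable) (m : ℤ) : Module.Finite K (sections F S m) := by
  have := finite_infinite hF.monic
  have h (M : ℕ) : Module.Finite K (sections F S (1 - M)) := by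
    induction M with
    | zero =>
      rw [Nat.cast_zero, sub_zero, sections_one_eq_bot hF hd hS]
      infer_instance
    | succ M ih =>
      rw [Nat.cast_succ, ← sub_sub]
      rw [← sub_add_cancel (1 - (M : ℤ)) 1] at ih
      exact finite_of_inf_ker_le (coeffMap _ ((↑) : infinite F → Branch F))
        (sections_inf_ker_coeffMap_le (m := 1 - (M : ℤ) - 1))
  have := h (1 - m).toNat
  exact Submodule.finiteDimensional_of_le
    (sections_anti (show 1 - ((1 - m).toNat : ℤ) ≤ m by omega))

theorem finrank_sections_sub_le (hF : IsTransversalAtInfinity F) (hd : F.natDegree ≠ 0)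
    (hS : ∀ x₀ ∉ S, (fiber F x₀).Separable) (m : ℤ) (j : ℕ) :
    Module.finrank K (sections F S (m - j)) ≤
      Module.finrank K (sections F S m) + j * F.natDegree := by
  have := finite_infinite hF.monic
  induction j with
  | zero => rw [Nat.cast_zero, sub_zero, zero_mul, add_zero]
  | succ j ih =>
    have := finite_sections hF hd hS (m - ↑(j + 1) + 1)
    have h := finrank_le_add_of_inf_ker_le _
      (sections_inf_ker_coeffMap_le (F := F) (S := S) (m := m - ↑(j + 1)))
    rw [show m - ↑(j + 1) + 1 = m - j by push_cast; ring] at h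
    rw [Nat.succ_mul, ← add_assoc]
    exact h.trans (add_le_add ih (card_infinite_le hF.monic))

end Branch

theorem exists_aevalAeval_eq_single {K ι : Type*} [Field K] [Finite ι] [DecidableEq ι]
    {x y : ι → K} (hinj : Function.Injective fun i ↦ (x i, y i)) (i : ι) :
    ∃ p : K[X][X], ∀ j, p.aevalAeval (x j) (y j) = Pi.single (M := fun _ ↦ K) i 1 j := by
  classical
  have := Fintype.ofFinite ι
  have hsep (j : ι) (hj : j ≠ i) : ∃ q : K[X][X], q.aevalAeval (x i) (y i) = 1 ∧
      q.aevalAeval (x j) (y j) = 0 := by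
    by_cases hx : x i = x j
    · have hy : y i - y j ≠ 0 := fun h ↦ hj (hinj (Prod.ext hx (sub_eq_zero.1 h))).symm
      exact ⟨Polynomial.C (Polynomial.C (y i - y j)⁻¹) *
        (Polynomial.X - Polynomial.C (Polynomial.C (y j))), by simp [hy], by simp⟩
    · have hx : x i - x j ≠ 0 := sub_ne_zero.2 hx
      exact ⟨Polynomial.C (Polynomial.C (x i - x j)⁻¹ *
        (Polynomial.X - Polynomial.C (x j))), by simp [hx], by simp⟩
  choose! q hqi hqj using hsep
  refine ⟨∏ j ∈ univ.erase i, q j, fun j ↦ ?_⟩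
  rw [map_prod]
  rcases eq_or_ne j i with rfl | hj
  · rw [Pi.single_eq_same]
    exact Finset.prod_eq_one fun k hk ↦ hqi k (Finset.ne_of_mem_erase hk)
  · rw [Pi.single_eq_of_ne hj]
    exact Finset.prod_eq_zero (Finset.mem_erase.2 ⟨hj, mem_univ _⟩) (hqj j hj)

theorem exists_mem_orderGE {K : Type*} [Field K] (f : K⸨X⸩) : ∃ m : ℤ, f ∈ orderGE K m := by
  rcases eq_or_ne f 0 with rfl | hf
  · exact ⟨0, zero_mem _⟩
  · exact ⟨f.order, (HahnSeries.order_eq_orderTop_of_ne_zero hf).le⟩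

namespace Branch

section Values

variable {K : Type*} [Field K] {F : K[X][X]} {S : Finset K}

theorem coeff_zero_aevalAeval {ν : Branch F} {x₀ : K} (hν : ν.LiesOver x₀) (hF : F.Monic)
    (p : K[X][X]) : (p.aevalAeval (Branch.x : Branch F → K⸨X⸩) Branch.y ν).coeff 0 =
      p.aevalAeval x₀ (ν.y.coeff 0) := by
  obtain ⟨q, hq, hq₀⟩ := hν.exists_coe_eq_aevalAeval hF p
  rw [aevalAeval_apply, ← hq, coeff_zero_coe, hq₀]

theorem isRegularOver_aevalAeval (hF : F.Monic) (p : K[X][X]) (x₀ : K) :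
    IsRegularOver (p.aevalAeval (Branch.x : Branch F → K⸨X⸩) Branch.y) x₀ where
  mem_orderGE ν hν := by
    obtain ⟨q, hq, -⟩ := hν.exists_coe_eq_aevalAeval hF p
    rw [aevalAeval_apply, ← hq, mem_orderGE]
    exact zero_le_orderTop_coe q
  coeff_zero_eq ν ν' hν hν' h := by
    rw [coeff_zero_aevalAeval hν hF, coeff_zero_aevalAeval hν' hF, h]

theorem exists_forall_mem_orderGE {ι : Type*} [Finite ι] (hF : F.Monic)
    (g : ι → Branch F → K⸨X⸩) : ∃ m : ℤ, ∀ i, ∀ ν ∈ infinite F, g i ν ∈ orderGE K m := by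
  have := finite_infinite hF
  choose m hm using fun a : ι × infinite F ↦ exists_mem_orderGE (g a.1 a.2)
  obtain ⟨m₀, hm₀⟩ := Finite.exists_ge m
  exact ⟨m₀, fun i ν hν ↦ orderGE_anti (WithTop.coe_le_coe.2 (hm₀ (i, ⟨ν, hν⟩))) (hm (i, ⟨ν, hν⟩))⟩

theorem exists_map_coeffMap_sections_eq_top {ι : Type*} [Finite ι] (hF : F.Monic)
    (S : Finset K) {ν : ι → Branch F} {x₀ : ι → K} (hν : ∀ i, (ν i).LiesOver (x₀ i))
    (hinj : Function.Injective fun i ↦ (x₀ i, (ν i).y.coeff 0)) :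
    ∃ m₀ : ℤ, ∀ m ≤ m₀, (sections F S m).map (coeffMap 0 ν) = ⊤ := by
  classical
  choose p hp using exists_aevalAeval_eq_single hinj
  obtain ⟨m₀, hm₀⟩ := exists_forall_mem_orderGE hF
    fun i ↦ (p i).aevalAeval (Branch.x : Branch F → K⸨X⸩) Branch.y
  refine ⟨m₀, fun m hm ↦ top_le_iff.1 ?_⟩
  rw [← (Pi.basisFun K ι).span_eq, Submodule.span_le]
  rintro _ ⟨i, rfl⟩
  refine Submodule.mem_map.2 ⟨(p i).aevalAeval Branch.x Branch.y,
    ⟨aevalAeval_mem_functionRing (p i), fun x₀ _ ↦ isRegularOver_aevalAeval hF _ x₀,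
      fun ν hν ↦ orderGE_anti (WithTop.coe_le_coe.2 hm) (hm₀ i ν hν)⟩, funext fun j ↦ ?_⟩
  rw [coeffMap_apply, coeff_zero_aevalAeval (hν j) hF, hp, Pi.basisFun_apply]

theorem vanishingSections_le_ker {ι : Type*} {m : ℤ} {ν : ι → Branch F} {x₀ : ι → K}
    (hν : ∀ i, (ν i).LiesOver (x₀ i)) (hS : ∀ i, x₀ i ∈ S) :
    vanishingSections F S m ≤ LinearMap.ker (coeffMap 0 ν) :=
  fun g hg ↦ LinearMap.mem_ker.2 <| funext fun i ↦ by
    rw [coeffMap_apply, Pi.zero_apply]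
    exact coeff_zero_eq_zero_of_mem_orderGE (hg.2.1 _ (hS i) _ (hν i))

end Values

variable {K : Type*} [Field K] [CharZero K] [IsAlgClosed K] {F : K[X][X]} {S : Finset K}

theorem exists_liesOver_of_dvd (hF : IsTransversalAtInfinity F) (hd : F.natDegree ≠ 0) {p : K[X][X]}
    (hp : p.Monic) (hpF : p ∣ F) {x₀ y₀ : K} (h : p.aevalAeval x₀ y₀ = 0) :
    ∃ ν : Branch F, ν.LiesOver x₀ ∧ ν.y.coeff 0 = y₀ ∧ p.aevalAeval ν.x ν.y = 0 := by
  obtain ⟨N, hN, hsplits⟩ := exists_splits_fiber_chart hp x₀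
  have hroot : ((fiber p (chart x₀ N)).map PowerSeries.constantCoeff).eval y₀ = 0 := by
    rw [map_constantCoeff_fiber_chart hN, eval_fiber, h]
  rw [hsplits.eq_prod_roots_of_monic (monic_fiber hp _), Polynomial.map_multiset_prod,
    Multiset.map_map, Polynomial.eval_multiset_prod, Multiset.map_map,
    Multiset.prod_eq_zero_iff] at hroot
  obtain ⟨β, hβ, hβ₀⟩ := Multiset.mem_map.1 hroot
  have hβ' : p.aevalAeval (chart x₀ N : K⸨X⸩) (β : K⸨X⸩) = 0 := by
    rw [← coe_aevalAeval, ← eval_fiber, (Polynomial.isRoot_of_mem_roots hβ).eq_zero, map_zero]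
  obtain ⟨ν, hx, hy⟩ := hF.exists_branch_chart hd hN (x₀ := x₀) (η := β) (by
    obtain ⟨q, rfl⟩ := hpF
    rw [map_mul, hβ', zero_mul])
  refine ⟨ν, ⟨N, hN, hx⟩, ?_, by rwa [hx, hy]⟩
  rw [hy, coeff_zero_coe]
  exact (sub_eq_zero.1 (by simpa using hβ₀)).symm

theorem exists_finrank_vanishingSections_add_le (hF : IsTransversalAtInfinity F)
    (hd : F.natDegree ≠ 0) [DecidableEq K] (hS : ∀ x₀ ∉ S, (fiber F x₀).Separable) :
    ∃ m₀ : ℤ, ∀ m ≤ m₀, Module.finrank K (vanishingSections F S m) +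
      ∑ x₀ ∈ S, #(fiber F x₀).roots.toFinset ≤ Module.finrank K (sections F S m) := by
  let P := S.sigma fun x₀ ↦ (fiber F x₀).roots.toFinset
  have hP (i : P) : i.1.1 ∈ S ∧ F.aevalAeval i.1.1 i.1.2 = 0 := by
    obtain ⟨hx₀, hy₀⟩ := Finset.mem_sigma.1 i.2
    exact ⟨hx₀, (eval_fiber F _ _).symm.trans
      (Polynomial.isRoot_of_mem_roots (Multiset.mem_toFinset.1 hy₀))⟩
  choose ν hν hy _ using fun i : P ↦ exists_liesOver_of_dvd hF hd hF.monic dvd_rfl (hP i).2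
  obtain ⟨m₀, hm₀⟩ := exists_map_coeffMap_sections_eq_top hF.monic S hν fun i j hij ↦ by
    obtain ⟨h₁, h₂⟩ := Prod.ext_iff.1 hij
    simp only [hy] at h₂
    exact Subtype.ext (Sigma.ext h₁ (heq_of_eq h₂))
  refine ⟨m₀, fun m hm ↦ ?_⟩
  have := finite_sections hF hd hS m
  rw [← Finset.card_sigma, ← Nat.card_eq_finsetCard]
  exact finrank_add_le_of_le_inf_ker _ (le_inf vanishingSections_le_sections
    (vanishingSections_le_ker hν fun i ↦ (hP i).1)) (hm₀ m hm)

end Branch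

section Connected

theorem exists_monic_mul_eq_of_dvd_mul {R : Type*} [CommRing R] [IsDomain R]
    [DecompositionMonoid R[X]] {p a b : R[X]} (hp : p.Monic) (h : p ∣ a * b) :
    ∃ f g : R[X], f.Monic ∧ g.Monic ∧ p = f * g ∧ f ∣ a ∧ g ∣ b := by
  obtain ⟨f, g, ⟨a', rfl⟩, ⟨b', rfl⟩, rfl⟩ := exists_dvd_and_dvd_of_dvd_mul h
  have hlead : f.leadingCoeff * g.leadingCoeff = 1 := by
    rw [← Polynomial.leadingCoeff_mul, hp.leadingCoeff]
  have hC : Polynomial.C f.leadingCoeff * Polynomial.C g.leadingCoeff = 1 := by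
    rw [← map_mul, hlead, map_one]
  exact ⟨Polynomial.C g.leadingCoeff * f, Polynomial.C f.leadingCoeff * g,
    Polynomial.monic_C_mul_of_mul_leadingCoeff_eq_one (by rwa [mul_comm]),
    Polynomial.monic_C_mul_of_mul_leadingCoeff_eq_one hlead,
    by linear_combination (-f * g) * hC,
    ⟨Polynomial.C f.leadingCoeff * a', by linear_combination (-f * a') * hC⟩,
    ⟨Polynomial.C g.leadingCoeff * b', by linear_combination (-g * b') * hC⟩⟩

theorem isRoot_derivative_map_of_isRoot {R S : Type*} [CommRing R] [IsDomain R] [CommRing S]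
    (φ : R →+* S) {p : R[X]} {a b : R} (ha : p.IsRoot a) (hb : p.IsRoot b) (hab : a ≠ b)
    (h : φ a = φ b) : (p.map φ).derivative.IsRoot (φ a) := by
  obtain ⟨q, rfl⟩ := Polynomial.dvd_iff_isRoot.2 ha
  have hq : q.eval b = 0 := by
    simpa [sub_ne_zero.2 hab.symm] using hb
  simp [h, Polynomial.eval_map_apply, hq]

variable {K : Type*} [Field K] {F : K[X][X]}

theorem orderTop_multiset_prod_map {ι : Type*} {s : Multiset ι} {f : ι → K⸨X⸩} {m : ℤ}
    (h : ∀ i ∈ s, (f i).orderTop = m) :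
    (s.map f).prod.orderTop = ((s.card * m : ℤ) : WithTop ℤ) := by
  rw [orderTop_multiset_prod, Multiset.map_map,
    Multiset.map_congr (f := HahnSeries.orderTop ∘ f) rfl h,
    Multiset.map_const', Multiset.sum_replicate, ← WithTop.coe_nsmul, nsmul_eq_mul]

theorem IsTransversalAtInfinity.orderTop_sub (hF : IsTransversalAtInfinity F) {η η' : K⸨X⸩}
    (hη : F.aevalAeval (infinityChart K 1) η = 0) (hη' : F.aevalAeval (infinityChart K 1) η' = 0)
    (hne : η ≠ η') : (η - η').orderTop = ((-1 : ℤ) : WithTop ℤ) := by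
  have hroot {w : K⟦X⟧} (hw : F.aevalAeval (infinityChart K 1) (infinityChart K 1 * w) = 0) :
      (fiber (atInfinity F) (chart (0 : K) 1)).IsRoot w := by
    rw [infinityChart, hF.aevalAeval_inv (coe_chart_ne_zero 1), ← coe_aevalAeval] at hw
    rw [Polynomial.IsRoot.def, eval_fiber]
    exact HahnSeries.ofPowerSeries_injective (((mul_eq_zero.1 hw).resolve_left
      (pow_ne_zero _ (inv_ne_zero (coe_chart_ne_zero 1)))).trans (map_zero _).symm)
  obtain ⟨w, rfl⟩ := hF.exists_infinityChart_mul_coe_eq hη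
  obtain ⟨w', rfl⟩ := hF.exists_infinityChart_mul_coe_eq hη'
  have hw : PowerSeries.constantCoeff w ≠ PowerSeries.constantCoeff w' := fun h ↦ by
    have hd := isRoot_derivative_map_of_isRoot PowerSeries.constantCoeff (hroot hη) (hroot hη')
      (fun h ↦ hne (by rw [h])) h
    have h₀ := (hroot hη).map (f := PowerSeries.constantCoeff)
    rw [map_constantCoeff_fiber_chart one_ne_zero] at hd h₀
    exact hF.separable.eval₂_derivative_ne_zero (RingHom.id K) (x := PowerSeries.constantCoeff w)
      (by simpa only [Polynomial.eval₂_id] using h₀.eq_zero)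
      (by simpa only [Polynomial.eval₂_id] using hd.eq_zero)
  rw [← mul_sub, ← map_sub, HahnSeries.orderTop_mul, orderTop_coe_eq_zero_iff.2
    (by rwa [map_sub, sub_ne_zero]), infinityChart_eq_single,
    HahnSeries.orderTop_single one_ne_zero,
    add_zero, Nat.cast_one]

variable [CharZero K] [IsAlgClosed K] {f g : K[X][X]}

theorem IsTransversalAtInfinity.orderTop_aevalAeval_right (hF : IsTransversalAtInfinity (f * g))
    (hd : (f * g).natDegree ≠ 0) (hg : g.Monic) {η : K⸨X⸩}
    (hη : f.aevalAeval (infinityChart K 1) η = 0) :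
    (g.aevalAeval (infinityChart K 1) η).orderTop = ((-g.natDegree : ℤ) : WithTop ℤ) := by
  have hsplits : (fiber g (infinityChart K 1)).Splits :=
    (hF.splits_fiber_infinityChart one_ne_zero).of_dvd
      (monic_fiber hF.monic _).ne_zero (Polynomial.map_dvd _ (dvd_mul_left g f))
  have hsub : ∀ η' ∈ (fiber g (infinityChart K 1)).roots,
      (η - η').orderTop = ((-1 : ℤ) : WithTop ℤ) := fun η' hη' ↦ by
    have hη' := (eval_fiber g _ η').symm.trans (Polynomial.isRoot_of_mem_roots hη')
    refine hF.orderTop_sub (by rw [map_mul, hη, zero_mul]) (by rw [map_mul, hη', mul_zero]) ?_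
    rintro rfl
    refine hF.derivative_aevalAeval_infinityChart_ne_zero hd one_ne_zero (η := η)
      (by rw [map_mul, hη, zero_mul]) ?_
    rw [Polynomial.derivative_mul, map_add, map_mul, map_mul, hη, hη', mul_zero, zero_mul, add_zero]
  rw [← eval_fiber, hsplits.eval_eq_prod_roots_of_monic (monic_fiber hg _),
    orderTop_multiset_prod_map hsub, ← hsplits.natDegree_eq_card_roots, natDegree_fiber hg,
    mul_neg_one]

theorem IsTransversalAtInfinity.natDegree_resultant (hF : IsTransversalAtInfinity (f * g))
    (hd : (f * g).natDegree ≠ 0) (hf : f.Monic) (hg : g.Monic) :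
    (f.resultant g).natDegree = f.natDegree * g.natDegree := by
  have hsplits : (fiber f (infinityChart K 1)).Splits :=
    (hF.splits_fiber_infinityChart one_ne_zero).of_dvd
      (monic_fiber hF.monic _).ne_zero (Polynomial.map_dvd _ (dvd_mul_right f g))
  have horder : (Polynomial.aeval (infinityChart K 1) (f.resultant g)).orderTop =
      ((-(f.natDegree * g.natDegree) : ℤ) : WithTop ℤ) := by
    rw [aeval_resultant_of_splits hf g hsplits, orderTop_multiset_prod_map fun η hη ↦
      hF.orderTop_aevalAeval_right hd hg
        ((eval_fiber f _ η).symm.trans (Polynomial.isRoot_of_mem_roots hη)),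
      ← hsplits.natDegree_eq_card_roots, natDegree_fiber hf, mul_neg]
  have hne : f.resultant g ≠ 0 := fun h ↦ by
    rw [h, map_zero, HahnSeries.orderTop_zero] at horder
    exact WithTop.top_ne_coe horder
  rw [orderTop_aeval_infinityChart one_ne_zero hne, WithTop.coe_inj] at horder
  push_cast at horder
  zify
  linarith

theorem IsTransversalAtInfinity.exists_aevalAeval_eq_zero (hF : IsTransversalAtInfinity (f * g))
    (hf : f.Monic) (hg : g.Monic) (hfd : f.natDegree ≠ 0) (hgd : g.natDegree ≠ 0) :
    ∃ x₀ y₀ : K, f.aevalAeval x₀ y₀ = 0 ∧ g.aevalAeval x₀ y₀ = 0 := by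
  have hd : (f * g).natDegree ≠ 0 := by rw [hf.natDegree_mul hg]; omega
  obtain ⟨x₀, hx₀⟩ := IsAlgClosed.exists_root (f.resultant g) fun h ↦
    mul_ne_zero hfd hgd
      (hF.natDegree_resultant hd hf hg ▸ Polynomial.natDegree_eq_of_degree_eq_some h)
  rw [Polynomial.IsRoot.def, ← Polynomial.coe_aeval_eq_eval,
    aeval_resultant_of_splits hf g (IsAlgClosed.splits _), Multiset.prod_eq_zero_iff] at hx₀
  obtain ⟨y₀, hy₀, hg₀⟩ := Multiset.mem_map.1 hx₀
  exact ⟨x₀, y₀, (eval_fiber f _ y₀).symm.trans (Polynomial.isRoot_of_mem_roots hy₀), hg₀⟩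

end Connected

namespace Branch

theorem eq_zero_of_dvd {K : Type*} [Field K] {F : K[X][X]} {u : Branch F → K⸨X⸩}
    {a p : K[X][X]} {k : ℕ}
    (ha : ∀ ν : Branch F, u ν * F.derivative.aevalAeval ν.x ν.y ^ k = a.aevalAeval ν.x ν.y)
    (hp : p ∣ a) {ν : Branch F} (hν : p.aevalAeval ν.x ν.y = 0) : u ν = 0 := by
  obtain ⟨q, rfl⟩ := hp
  rw [eq_div_pow ha, map_mul, hν, zero_mul, zero_div]

variable {K : Type*} [Field K] [CharZero K] [IsAlgClosed K] {F : K[X][X]} {S : Finset K}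
  {g : Branch F → K⸨X⸩}

theorem dvd_of_forall_aevalAeval_eq_zero (hF : IsTransversalAtInfinity F) (hd : F.natDegree ≠ 0)
    {a : K[X][X]} (ha : ∀ ν : Branch F, a.aevalAeval ν.x ν.y = 0) : F ∣ a :=
  hF.dvd_of_forall_aevalAeval_infinityChart_eq_zero hd fun η hη ↦ by
    obtain ⟨ν, hx, hy⟩ := hF.exists_branch_infinityChart hd one_ne_zero hη
    rw [← hx, ← hy, ha]

theorem exists_liesOver_of_mul_eq_zero (hF : IsTransversalAtInfinity F) (hd : F.natDegree ≠ 0)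
    {u v : Branch F → K⸨X⸩} (hu : u ∈ functionRing F) (hv : v ∈ functionRing F) (huv : u * v = 0)
    (hu₀ : u ≠ 0) (hv₀ : v ≠ 0) :
    ∃ x₀ : K, ¬ (fiber F x₀).Separable ∧ ∃ ν ν' : Branch F, ν.LiesOver x₀ ∧ ν'.LiesOver x₀ ∧
      ν.y.coeff 0 = ν'.y.coeff 0 ∧ u ν = 0 ∧ v ν' = 0 := by
  obtain ⟨a, k, ha⟩ := exists_mul_pow_eq_aevalAeval hu
  obtain ⟨b, l, hb⟩ := exists_mul_pow_eq_aevalAeval hv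
  have hdvd : F ∣ a * b := dvd_of_forall_aevalAeval_eq_zero hF hd fun ν ↦ by
    rw [map_mul, ← ha, ← hb, mul_mul_mul_comm, ← Pi.mul_apply, huv, Pi.zero_apply, zero_mul]
  obtain ⟨f, h, hf, hh, rfl, hfa, hhb⟩ := exists_monic_mul_eq_of_dvd_mul hF.monic hdvd
  have hzero {w : Branch (f * h) → K⸨X⸩} {c : K[X][X]} {j : ℕ}
      (hc : ∀ ν : Branch (f * h), w ν * (f * h).derivative.aevalAeval ν.x ν.y ^ j =
        c.aevalAeval ν.x ν.y) (hdvd : f * h ∣ c) : w = 0 :=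
    funext fun ν ↦ eq_zero_of_dvd hc hdvd ν.aevalAeval_eq_zero
  have hfd : f.natDegree ≠ 0 := fun h0 ↦ hv₀ <| hzero hb <| by
    rwa [hf.natDegree_eq_zero.1 h0, one_mul]
  have hhd : h.natDegree ≠ 0 := fun h0 ↦ hu₀ <| hzero ha <| by
    rwa [hh.natDegree_eq_zero.1 h0, mul_one]
  obtain ⟨x₀, y₀, hf₀, hh₀⟩ := hF.exists_aevalAeval_eq_zero hf hh hfd hhd
  obtain ⟨ν, hν, hy, hfν⟩ := exists_liesOver_of_dvd hF hd hf (dvd_mul_right f h) hf₀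
  obtain ⟨ν', hν', hy', hhν'⟩ := exists_liesOver_of_dvd hF hd hh (dvd_mul_left h f) hh₀
  refine ⟨x₀, fun hsep ↦ ?_, ν, ν', hν, hν', hy.trans hy'.symm, eq_zero_of_dvd ha hfa hfν,
    eq_zero_of_dvd hb hhb hhν'⟩
  refine hsep.eval₂_derivative_ne_zero (RingHom.id K) (x := y₀) ?_ ?_
  · rw [Polynomial.eval₂_id, eval_fiber, map_mul, hf₀, zero_mul]
  · rw [Polynomial.eval₂_id, derivative_fiber, eval_fiber, Polynomial.derivative_mul, map_add,
      map_mul, map_mul, hf₀, hh₀, mul_zero, zero_mul, add_zero]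

theorem eq_algebraMap_of_forall_eulerDerivation_eq_zero (hF : IsTransversalAtInfinity F)
    (hd : F.natDegree ≠ 0) (hg : g ∈ functionRing F)
    (hreg : ∀ x₀, ¬ (fiber F x₀).Separable → IsRegularOver g x₀)
    (hconst : ∀ ν ∈ infinite F, eulerDerivation K (g ν) = 0) (ν₀ : Branch F) :
    g = algebraMap K _ ((g ν₀).coeff 0) := by
  classical
  have := finite_infinite hF.monic
  have := Fintype.ofFinite (infinite F)
  set c₀ := (g ν₀).coeff 0 with hc₀
  let T := (univ.image fun ν : infinite F ↦ (g ν).coeff 0).erase c₀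
  let v : Branch F → K⸨X⸩ := ∏ c ∈ T, (g - algebraMap K _ c)
  have hval {ν : Branch F} (hν : ν ∈ infinite F) : g ν = algebraMap K K⸨X⸩ ((g ν).coeff 0) :=
    eq_C_of_eulerDerivation_eq_zero (hconst ν hν)
  have hsub (c : K) : g - algebraMap K _ c ∈ functionRing F := sub_mem hg (algebraMap_mem _ c)
  have hsub_eq {c : K} {ν : Branch F} : (g - algebraMap K _ c) ν = 0 ↔ g ν = algebraMap K _ c :=
    sub_eq_zero
  have hv {ν : Branch F} : v ν = 0 ↔ ∃ c ∈ T, g ν = algebraMap K _ c := by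
    simp only [v, Finset.prod_apply, Finset.prod_eq_zero_iff, hsub_eq]
  have hmul : (g - algebraMap K _ c₀) * v = 0 := by
    refine eq_zero_of_forall_mem_infinite hF hd
      (mul_mem (hsub c₀) (prod_mem fun c _ ↦ hsub c)) fun ν hν ↦ mul_eq_zero.2 ?_
    rw [hsub_eq, hv, hval hν]
    rcases eq_or_ne ((g ν).coeff 0) c₀ with h | h
    · exact Or.inl (by rw [h])
    · exact Or.inr ⟨_, mem_erase.2 ⟨h, mem_image_of_mem _ (mem_univ (⟨ν, hν⟩ : infinite F))⟩, rfl⟩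
  by_contra hne
  obtain ⟨x₀, hx₀, ν, ν', hν, hν', hy, hu, hv₀⟩ := exists_liesOver_of_mul_eq_zero hF hd
    (hsub c₀) (prod_mem fun c _ ↦ hsub c) hmul (sub_ne_zero.2 hne) fun h0 ↦ by
      obtain ⟨c, hc, hgc⟩ := hv.1 (congrFun h0 ν₀)
      exact ne_of_mem_erase hc (by rw [hc₀, hgc, coeff_zero_algebraMap])
  obtain ⟨c, hc, hgc⟩ := hv.1 hv₀
  refine ne_of_mem_erase hc ?_
  have h := (hreg x₀ hx₀).coeff_zero_eq ν ν' hν hν' hy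
  rwa [hsub_eq.1 hu, hgc, coeff_zero_algebraMap, coeff_zero_algebraMap, eq_comm] at h

end Branch

theorem separable_fiber {K : Type*} [Field K] {F : K[X][X]} (hd : F.natDegree ≠ 0) {x₀ : K}
    (h : (F.resultant F.derivative).eval x₀ ≠ 0) : (fiber F x₀).Separable := by
  obtain ⟨p, q, -, -, hpq⟩ := Polynomial.exists_mul_add_mul_eq_C_resultant F F.derivative le_rfl
    le_rfl (Or.inl hd)
  have h' : fiber F x₀ * fiber p x₀ + (fiber F x₀).derivative * fiber q x₀ =
      Polynomial.C ((F.resultant F.derivative).eval x₀) := by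
    simpa only [fiber, Polynomial.map_add, Polynomial.map_mul, Polynomial.map_C,
      Polynomial.derivative_map, RingHom.coe_coe, Polynomial.coe_aeval_eq_eval]
      using congr(fiber $hpq x₀)
  refine ⟨Polynomial.C ((F.resultant F.derivative).eval x₀)⁻¹ * fiber p x₀,
    Polynomial.C ((F.resultant F.derivative).eval x₀)⁻¹ * fiber q x₀, ?_⟩
  rw [mul_assoc, mul_assoc, ← mul_add, mul_comm (fiber p x₀), mul_comm (fiber q x₀), h',
    ← Polynomial.C_mul, inv_mul_cancel₀ h, Polynomial.C_1]

theorem IsTransversalAtInfinity.exists_finset_separable {K : Type*} [Field K] [CharZero K]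
    [IsAlgClosed K] {F : K[X][X]} (hF : IsTransversalAtInfinity F) (hd : F.natDegree ≠ 0) :
    ∃ S : Finset K, S.Nonempty ∧ ∀ x₀ ∉ S, (fiber F x₀).Separable := by
  classical
  refine ⟨insert 0 (F.resultant F.derivative).roots.toFinset, insert_nonempty _ _, fun x₀ hx₀ ↦
    separable_fiber hd fun h ↦ hx₀ (mem_insert_of_mem (Multiset.mem_toFinset.2 ?_))⟩
  exact (Polynomial.mem_roots (hF.resultant_derivative_ne_zero hd)).2 h

namespace Branch

section Exactness

variable {K : Type*} [Field K] {F : K[X][X]} {S : Finset K} {m : ℤ}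

theorem mul_mem_vanishingSections (hF : F.Monic) {p : K[X][X]}
    (hp : ∀ ν ∈ infinite F, (Polynomial.C (Lagrange.nodal S id) * p).aevalAeval ν.x ν.y ∈
      orderGE K m) :
    (Polynomial.C (Lagrange.nodal S id) * p).aevalAeval (Branch.x : Branch F → K⸨X⸩) Branch.y ∈
      vanishingSections F S m := by
  refine ⟨aevalAeval_mem_functionRing _, fun x₀ hx₀ ν hν ↦ ?_, fun ν hν ↦ ?_⟩
  · refine succ_le_orderTop (m := 0) ((isRegularOver_aevalAeval hF _ x₀).mem_orderGE ν hν) ?_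
    rw [coeff_zero_aevalAeval hν hF, map_mul, Polynomial.aevalAeval_C,
      Polynomial.coe_aeval_eq_eval, show (Lagrange.nodal S id).eval x₀ = 0 from
      Lagrange.eval_nodal_at_node (v := id) hx₀, zero_mul]
  · rw [aevalAeval_apply]
    exact hp ν hν

theorem nodalDerivation_eq_mul_iff {g : Branch F → K⸨X⸩} {ν : Branch F}
    (hν : ν ∈ infinite F) {f : K⸨X⸩} :
    nodalDerivation F S g ν = Polynomial.aeval ν.x (Lagrange.nodal S id) * f ↔
      eulerDerivation K (g ν) = f * eulerDerivation K ν.x := by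
  have hr : Polynomial.aeval ν.x (Lagrange.nodal S id) ≠ 0 := by
    rw [show ν.x = _ from hν, map_ne_zero_iff _ (aeval_infinityChart_injective one_ne_zero)]
    exact Lagrange.nodal_ne_zero
  rw [nodalDerivation_apply, mul_right_inj' hr, div_eq_iff ν.eulerDerivation_x_ne_zero]

variable [CharZero K] [IsAlgClosed K] (hF : IsTransversalAtInfinity F) (hd : F.natDegree ≠ 0)
  (hS : ∀ x₀ ∉ S, (fiber F x₀).Separable)

include hF hd hS

theorem sections_inf_ker_nodalDerivation_le :
    sections F S m ⊓ LinearMap.ker (nodalDerivation F S) ≤ Submodule.span K {1} := by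
  rintro g ⟨hg, hker⟩
  obtain hempty | ⟨⟨ν₀⟩⟩ := isEmpty_or_nonempty (Branch F)
  · rw [Subsingleton.elim g 0]
    exact zero_mem _
  rw [eq_algebraMap_of_forall_eulerDerivation_eq_zero hF hd hg.1 (fun x₀ hx₀ ↦
    hg.2.1 x₀ (by_contra fun h ↦ hx₀ (hS x₀ h))) (fun ν hν ↦ ?_) ν₀, Algebra.algebraMap_eq_smul_one]
  · exact Submodule.smul_mem _ _ (Submodule.mem_span_singleton_self 1)
  · rw [← zero_mul (eulerDerivation K ν.x), ← nodalDerivation_eq_mul_iff (S := S) hν, mul_zero]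
    exact congrFun (LinearMap.mem_ker.1 hker) ν

theorem exists_map_nodalDerivation_sections_eq [DecidableEq K] (hS₀ : S.Nonempty)
    (hsum : ∑ x₀ ∈ S, #(fiber F x₀).roots.toFinset + (F.natDegree - 1) = #S * F.natDegree) :
    ∃ m₀ : ℤ, ∀ m ≤ m₀, (sections F S m).map (nodalDerivation F S) =
      vanishingSections F S (m + 1 - #S) := by
  obtain ⟨m₀, hm₀⟩ := exists_finrank_vanishingSections_add_le hF hd hS
  have hpos : 0 < #S := hS₀.card_pos
  refine ⟨m₀, fun m hm ↦ ?_⟩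
  have := finite_sections hF hd hS m
  have := finite_sections hF hd hS (m + 1 - #S)
  have := Submodule.finiteDimensional_of_le
    (vanishingSections_le_sections (F := F) (S := S) (m := m + 1 - #S))
  refine Submodule.eq_of_le_of_finrank_le (Submodule.map_le_iff_le_comap.2 fun g hg ↦
    nodalDerivation_mem_vanishingSections hg) ?_
  have hker : Module.finrank K ↥(sections F S m ⊓ LinearMap.ker (nodalDerivation F S)) ≤ 1 :=
    (Submodule.finrank_mono (sections_inf_ker_nodalDerivation_le hF hd hS)).trans
      ((finrank_span_le_card _).trans_eq (by simp))
  have hmap := finrank_map_add_finrank_inf_ker (nodalDerivation F S) (sections F S m)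
  have hpole := finrank_sections_sub_le hF hd hS m (#S - 1)
  rw [show m - ((#S - 1 : ℕ) : ℤ) = m + 1 - #S by omega] at hpole
  have hvan := hm₀ (m + 1 - #S) (by omega)
  have hmul : #S * F.natDegree = (#S - 1) * F.natDegree + F.natDegree := by
    rw [← Nat.succ_mul, Nat.succ_eq_add_one, Nat.sub_add_cancel hpos]
  omega

theorem exists_forall_eulerDerivation_eq [DecidableEq K] (hS₀ : S.Nonempty)
    (hsum : ∑ x₀ ∈ S, #(fiber F x₀).roots.toFinset + (F.natDegree - 1) = #S * F.natDegree)
    (p : K[X][X]) : ∃ g : Branch F → K⸨X⸩, ∀ ν ∈ infinite F,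
      eulerDerivation K (g ν) = p.aevalAeval ν.x ν.y * eulerDerivation K ν.x := by
  obtain ⟨m₀, hm₀⟩ := exists_map_nodalDerivation_sections_eq hF hd hS hS₀ hsum
  let q := Polynomial.C (Lagrange.nodal S id) * p
  obtain ⟨m₁, hm₁⟩ := exists_forall_mem_orderGE hF.monic
    fun _ : Unit ↦ q.aevalAeval (Branch.x : Branch F → K⸨X⸩) Branch.y
  let m := min m₀ (m₁ - 1 + #S)
  have hq : q.aevalAeval (Branch.x : Branch F → K⸨X⸩) Branch.y ∈
      vanishingSections F S (m + 1 - #S) :=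
    mul_mem_vanishingSections hF.monic fun ν hν ↦ by
      rw [← aevalAeval_apply]
      exact orderGE_anti (WithTop.coe_le_coe.2 (by omega)) (hm₁ () ν hν)
  rw [← hm₀ m (min_le_left _ _)] at hq
  obtain ⟨g, -, hg⟩ := Submodule.mem_map.1 hq
  refine ⟨g, fun ν hν ↦ (nodalDerivation_eq_mul_iff (S := S) hν).1 ?_⟩
  rw [hg, aevalAeval_apply, map_mul, Polynomial.aevalAeval_C]

end Exactness

-- Up to sign this coefficient is the residue of `p dx`, which vanishes as `p dx` is exact.
theorem coeff_aevalAeval_eq_zero {K : Type*} [Field K] [CharZero K] [IsAlgClosed K] {F : K[X][X]}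
    (hF : IsTransversalAtInfinity F) (hd : F.natDegree ≠ 0) (hcrit : CriticalOnlyOnCurve F)
    (p : K[X][X]) {ν : Branch F} (hν : ν ∈ infinite F) :
    (p.aevalAeval ν.x ν.y).coeff 1 = 0 := by
  classical
  obtain ⟨S, hS₀, hS⟩ := hF.exists_finset_separable hd
  obtain ⟨g, hg⟩ := exists_forall_eulerDerivation_eq hF hd hS hS₀
    (hF.sum_card_roots_add hd hcrit hS) p
  have h := congr(HahnSeries.coeff $(hg ν hν) 0)
  rw [show eulerDerivation K ν.x = _ from congrArg _ hν, eulerDerivation_infinityChart,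
    HahnSeries.coeff_mul_single, coeff_eulerDerivation] at h
  simpa using h

end Branch

section Lines

variable {K : Type*} [Field K]

theorem eq_C_add_C_mul_X_of_coeff_eq_zero {b : K⟦X⟧} (h : ∀ j, PowerSeries.coeff (j + 2) b = 0) :
    b = PowerSeries.C (PowerSeries.coeff 0 b) +
      PowerSeries.C (PowerSeries.coeff 1 b) * PowerSeries.X := by
  ext k
  rcases k with _ | _ | k
  · simp
  · simp [PowerSeries.coeff_C]
  · rw [h, map_add, PowerSeries.coeff_succ_mul_X, PowerSeries.coeff_C, PowerSeries.coeff_C,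
      if_neg (by simp), if_neg (by simp), add_zero]

variable [CharZero K] [IsAlgClosed K] {F : K[X][X]}

theorem IsTransversalAtInfinity.exists_eq_mul_add (hF : IsTransversalAtInfinity F)
    (hd : F.natDegree ≠ 0) (hcrit : CriticalOnlyOnCurve F) {η : K⸨X⸩}
    (hη : F.aevalAeval (infinityChart K 1) η = 0) :
    ∃ l m : K, η = Polynomial.aeval (infinityChart K 1) (Polynomial.C l * Polynomial.X +
      Polynomial.C m) := by
  obtain ⟨b, rfl⟩ := hF.exists_infinityChart_mul_coe_eq hη
  obtain ⟨ν, hx, hy⟩ := hF.exists_branch_infinityChart hd one_ne_zero hη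
  have hb (j : ℕ) : PowerSeries.coeff (j + 2) b = 0 := by
    have h := Branch.coeff_aevalAeval_eq_zero hF hd hcrit
      (Polynomial.C (Polynomial.X ^ j) * Polynomial.X) (ν := ν) hx
    have hexp : (1 : ℤ) - (j + 1) • (-((1 : ℕ) : ℤ)) = (j + 2 : ℕ) := by
      rw [smul_neg, sub_neg_eq_add, nsmul_eq_mul]
      push_cast
      ring
    rw [map_mul, Polynomial.aevalAeval_C, ← eval_fiber, map_pow, Polynomial.aeval_X, hx, hy, fiber,
      Polynomial.map_X, Polynomial.eval_X, ← mul_assoc, ← pow_succ, infinityChart_eq_single,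
      HahnSeries.single_pow, one_pow, HahnSeries.coeff_single_mul, one_mul, hexp] at h
    exact (HahnSeries.ofPowerSeries_apply_coeff b (j + 2)).symm.trans h
  refine ⟨PowerSeries.coeff 0 b, PowerSeries.coeff 1 b, ?_⟩
  have hinv : infinityChart K 1 * ((PowerSeries.X : K⟦X⟧) : K⸨X⸩) = 1 := by
    rw [infinityChart_eq_single, HahnSeries.ofPowerSeries_X, HahnSeries.single_mul_single]
    simp
  conv_lhs => rw [eq_C_add_C_mul_X_of_coeff_eq_zero hb]
  simp only [map_add, map_mul, coe_C_eq_algebraMap, Polynomial.aeval_C, Polynomial.aeval_X]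
  linear_combination algebraMap K K⸨X⸩ (PowerSeries.coeff 1 b) * hinv

theorem IsTransversalAtInfinity.fiber_infinityChart_eq_prod [DecidableEq K⸨X⸩]
    (hF : IsTransversalAtInfinity F) (hd : F.natDegree ≠ 0) :
    fiber F (infinityChart K 1) =
      ∏ η ∈ (fiber F (infinityChart K 1)).roots.toFinset, (Polynomial.X - Polynomial.C η) := by
  have hsplits := hF.splits_fiber_infinityChart one_ne_zero
  have hnodup : (fiber F (infinityChart K 1)).roots.Nodup := by
    rw [← Multiset.toFinset_card_eq_card_iff_nodup, hF.card_roots_fiber_infinityChart hd,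
      ← hsplits.natDegree_eq_card_roots, natDegree_fiber hF.monic]
  rw [Finset.prod, Multiset.toFinset_val, hnodup.dedup]
  exact hsplits.eq_prod_roots_of_monic (monic_fiber hF.monic _)

theorem IsTransversalAtInfinity.exists_eq_prod (hF : IsTransversalAtInfinity F)
    (hd : F.natDegree ≠ 0) (hcrit : CriticalOnlyOnCurve F) :
    ∃ l m : Fin F.natDegree → K, Function.Injective l ∧
      F = ∏ i, (Polynomial.X - Polynomial.C (Polynomial.C (l i) * Polynomial.X +
        Polynomial.C (m i))) := by
  classical
  let e := (Finset.equivFinOfCardEq (hF.card_roots_fiber_infinityChart hd)).symm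
  have hroot (i) : F.aevalAeval (infinityChart K 1) (e i) = 0 :=
    (eval_fiber F _ _).symm.trans (Polynomial.isRoot_of_mem_roots (Multiset.mem_toFinset.1 (e i).2))
  choose l m hlm using fun i ↦ hF.exists_eq_mul_add hd hcrit (hroot i)
  refine ⟨l, m, fun i j hij ↦ ?_, ?_⟩
  · by_contra hne
    have horder := hF.orderTop_sub (hroot i) (hroot j) fun h ↦ hne (e.injective (Subtype.ext h))
    have hsub : ((e i : K⸨X⸩) - e j) = (PowerSeries.C (m i - m j) : K⟦X⟧) := by
      rw [hlm, hlm, hij, ← map_sub, add_sub_add_left_eq_sub, ← map_sub, Polynomial.aeval_C,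
        coe_C_eq_algebraMap]
    have h := zero_le_orderTop_coe (PowerSeries.C (m i - m j))
    rw [← hsub, horder, WithTop.coe_nonneg] at h
    omega
  · refine Polynomial.map_injective _ (aeval_infinityChart_injective one_ne_zero) ?_
    change fiber F (infinityChart K 1) = _
    rw [hF.fiber_infinityChart_eq_prod hd, Polynomial.map_prod, ← Finset.prod_coe_sort,
      ← e.prod_comp]
    refine prod_congr rfl fun i _ ↦ ?_
    rw [Polynomial.map_sub, Polynomial.map_X, Polynomial.map_C, hlm]
    rfl

end Lines

section Concurrency

variable {K ι : Type*} [Field K] {S : Finset K} {l m : ι → K}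

theorem mul_add_eq_mul_add_iff {i j : ι} (hne : l i ≠ l j) {x : K} :
    l i * x + m i = l j * x + m j ↔ (m i - m j) / (l j - l i) = x := by
  rw [div_eq_iff (sub_ne_zero.2 hne.symm)]
  constructor <;> intro h <;> linear_combination h

variable [Fintype ι] [DecidableEq K] (hl : Function.Injective l)
  (hS : ∀ x ∉ S, Function.Injective fun i ↦ l i * x + m i)

include hl hS

theorem sum_card_filter_eq_card_sub_one [DecidableEq ι] (k : ι) :
    ∑ x ∈ S, #{i ∈ univ.erase k | l i * x + m i = l k * x + m k} = Fintype.card ι - 1 := by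
  have hmaps : Set.MapsTo (fun i ↦ (m i - m k) / (l k - l i)) (univ.erase k : Finset ι) S :=
    fun i hi ↦ by
      by_contra hx
      exact ne_of_mem_erase hi <| hS _ hx <|
        (mul_add_eq_mul_add_iff (hl.ne (ne_of_mem_erase hi))).2 rfl
  rw [← card_univ, ← card_erase_of_mem (mem_univ k), card_eq_sum_card_fiberwise hmaps]
  exact sum_congr rfl fun x _ ↦ congrArg card <| filter_congr fun i hi ↦
    mul_add_eq_mul_add_iff (hl.ne (ne_of_mem_erase hi))

variable (hsum : ∑ x ∈ S, #(univ.image fun i ↦ l i * x + m i) + (Fintype.card ι - 1) =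
  #S * Fintype.card ι)

include hsum

-- The coincidences with the line `k` alone already exhaust the total defect `Fintype.card ι - 1`.
theorem injOn_compl_filter [DecidableEq ι] (k : ι) {x : K} (hx : x ∈ S) :
    Set.InjOn (fun i ↦ l i * x + m i)
      ({i ∈ univ.erase k | l i * x + m i = l k * x + m k}ᶜ : Finset ι) := by
  let A (x : K) : Finset ι := {i ∈ univ.erase k | l i * x + m i = l k * x + m k}
  have himage (x : K) :
      univ.image (fun i ↦ l i * x + m i) = (A x)ᶜ.image fun i ↦ l i * x + m i := by
    refine (image_subset_image (subset_univ _)).antisymm' fun y hy ↦ ?_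
    obtain ⟨i, -, rfl⟩ := mem_image.1 hy
    by_cases hi : i ∈ A x
    · exact mem_image.2 ⟨k, by simp [A], (mem_filter.1 hi).2.symm⟩
    · exact mem_image_of_mem _ (mem_compl.2 hi)
  have hle (x : K) (_ : x ∈ S) : #(univ.image fun i ↦ l i * x + m i) ≤ #(A x)ᶜ :=
    himage x ▸ card_image_le
  have hcard : ∑ x ∈ S, #(univ.image fun i ↦ l i * x + m i) = ∑ x ∈ S, #(A x)ᶜ := by
    have h : ∑ x ∈ S, #(A x)ᶜ + ∑ x ∈ S, #(A x) = #S * Fintype.card ι := by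
      rw [← sum_add_distrib, sum_congr rfl fun x _ ↦ card_compl_add_card (A x), sum_const,
        smul_eq_mul]
    rw [sum_card_filter_eq_card_sub_one hl hS k] at h
    omega
  exact card_image_iff.1 (himage x ▸ (sum_eq_sum_iff_of_le hle).1 hcard x hx)

theorem mul_add_eq_of_mul_add_eq (k : ι) {i j : ι} (hne : i ≠ j) {x : K}
    (h : l i * x + m i = l j * x + m j) : l i * x + m i = l k * x + m k := by
  classical
  have hx : x ∈ S := by_contra fun hx ↦ hne (hS x hx h)
  by_contra hk
  refine hne (injOn_compl_filter hl hS hsum k hx ?_ ?_ h)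
  · simp [hk]
  · simp [← h, hk]

theorem exists_forall_mul_add_eq : ∃ x₀ y₀, ∀ i, l i * x₀ + m i = y₀ := by
  obtain _ | hι := subsingleton_or_nontrivial ι
  · obtain _ | ⟨⟨k⟩⟩ := isEmpty_or_nonempty ι
    · exact ⟨0, 0, isEmptyElim⟩
    · exact ⟨0, l k * 0 + m k, fun i ↦ by rw [Subsingleton.elim i k]⟩
  obtain ⟨i, j, hij⟩ := exists_pair_ne ι
  refine ⟨(m i - m j) / (l j - l i), l i * ((m i - m j) / (l j - l i)) + m i, fun k ↦ ?_⟩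
  exact (mul_add_eq_of_mul_add_eq hl hS hsum k hij
    ((mul_add_eq_mul_add_iff (hl.ne hij)).2 rfl)).symm

end Concurrency

section Cone

variable {K : Type*} [Field K]

theorem fiber_prod_lines {ι : Type*} [Fintype ι] (l m : ι → K) (x : K) :
    fiber (∏ i, (Polynomial.X - Polynomial.C (Polynomial.C (l i) * Polynomial.X +
      Polynomial.C (m i)))) x = ∏ i, (Polynomial.X - Polynomial.C (l i * x + m i)) := by
  rw [fiber, Polynomial.map_prod]
  exact prod_congr rfl fun i _ ↦ by simp

variable [CharZero K] [IsAlgClosed K] {F : K[X][X]}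

theorem IsTransversalAtInfinity.exists_forall_aevalAeval_eq_prod (hF : IsTransversalAtInfinity F)
    (hd : F.natDegree ≠ 0) (hcrit : CriticalOnlyOnCurve F) :
    ∃ (x₀ y₀ : K) (l : Fin F.natDegree → K), ∀ x y : K,
      F.aevalAeval x y = ∏ i, (y - y₀ - l i * (x - x₀)) := by
  classical
  obtain ⟨l, m, hl, hprod⟩ := hF.exists_eq_prod hd hcrit
  obtain ⟨S, -, hS⟩ := hF.exists_finset_separable hd
  have hfiber (x : K) : fiber F x = ∏ i, (Polynomial.X - Polynomial.C (l i * x + m i)) :=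
    (congrArg (fiber · x) hprod).trans (fiber_prod_lines l m x)
  have hroots (x : K) : (fiber F x).roots.toFinset = univ.image fun i ↦ l i * x + m i := by
    ext y
    rw [Multiset.mem_toFinset, Polynomial.mem_roots (monic_fiber hF.monic x).ne_zero,
      Polynomial.IsRoot.def, hfiber, Polynomial.eval_prod, prod_eq_zero_iff]
    simp [sub_eq_zero, eq_comm]
  have hsum := hF.sum_card_roots_add hd hcrit hS
  simp only [hroots] at hsum
  obtain ⟨x₀, y₀, hxy⟩ := exists_forall_mul_add_eq hl
    (fun x hx ↦ Polynomial.separable_prod_X_sub_C_iff.1 (hfiber x ▸ hS x hx))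
    (by rwa [Fintype.card_fin])
  refine ⟨x₀, y₀, l, fun x y ↦ ?_⟩
  rw [← eval_fiber, hfiber, Polynomial.eval_prod]
  refine prod_congr rfl fun i _ ↦ ?_
  rw [Polynomial.eval_sub, Polynomial.eval_X, Polynomial.eval_C]
  linear_combination -hxy i

theorem IsTransversalAtInfinity.exists_aevalAeval_add_mul (hF : IsTransversalAtInfinity F)
    (hd : F.natDegree ≠ 0) (hcrit : CriticalOnlyOnCurve F) :
    ∃ x₀ y₀ : K, ∀ s u v : K, F.aevalAeval (x₀ + s * u) (y₀ + s * v) =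
      s ^ F.natDegree * F.aevalAeval (x₀ + u) (y₀ + v) := by
  obtain ⟨x₀, y₀, l, hprod⟩ := hF.exists_forall_aevalAeval_eq_prod hd hcrit
  refine ⟨x₀, y₀, fun s u v ↦ ?_⟩
  conv_rhs => rw [← Fintype.card_fin F.natDegree, ← card_univ, ← prod_const]
  rw [hprod, hprod, ← prod_mul_distrib]
  exact prod_congr rfl fun i _ ↦ by ring

end Cone

section AffineSubstitution

variable {σ R A : Type*} [CommRing R] [CommRing A] [Algebra R A]

theorem derivation_mvPolynomial_aeval [Fintype σ] (δ : Derivation R A A) (v : σ → A)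
    (P : MvPolynomial σ R) : δ (aeval v P) = ∑ i, aeval v (pderiv i P) * δ (v i) := by
  classical
  induction P using MvPolynomial.induction_on with
  | C a => simp
  | add p q hp hq => simp only [map_add, hp, hq, add_mul, sum_add_distrib]
  | mul_X p j hp =>
    simp only [map_mul, Derivation.leibniz, pderiv_X, aeval_X, smul_eq_mul, map_add, hp,
      add_mul, sum_add_distrib, mul_sum, mul_assoc]
    simp [Pi.single_apply, apply_ite]

theorem aeval_monomial_eq_prod_toMultiset (f : σ → A) (s : σ →₀ ℕ) (a : R) :
    aeval f (monomial s a) = algebraMap R A a * (s.toMultiset.map f).prod := by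
  rw [aeval_monomial, Finsupp.toMultiset_map, Finsupp.prod_toMultiset,
    Finsupp.prod_mapDomain_index (fun _ ↦ pow_zero _) fun _ _ _ ↦ pow_add _ _ _]

theorem coeff_degree_aeval_monomial (u v : σ → R) (s : σ →₀ ℕ) (a : R) :
    (aeval (fun i ↦ Polynomial.C (u i) * Polynomial.X + Polynomial.C (v i))
      (monomial s a) : R[X]).coeff s.degree = eval u (monomial s a) := by
  rw [← MvPolynomial.coe_aeval_eq_eval, RingHom.coe_coe, aeval_monomial_eq_prod_toMultiset,
    aeval_monomial_eq_prod_toMultiset, Polynomial.algebraMap_eq, Polynomial.coeff_C_mul]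
  have h := Polynomial.coeff_multiset_prod_of_natDegree_le
    (s.toMultiset.map fun i ↦ Polynomial.C (u i) * Polynomial.X + Polynomial.C (v i)) 1
    fun p hp ↦ by
      obtain ⟨i, -, rfl⟩ := Multiset.mem_map.1 hp
      exact Polynomial.natDegree_linear_le
  rw [Multiset.card_map, mul_one, Finsupp.card_toMultiset] at h
  refine congrArg (a * ·) (h.trans ?_)
  simp

theorem coeff_aeval_C_mul_X_add_C {P : MvPolynomial σ R} {N : ℕ} (hP : P.totalDegree ≤ N)
    (u v : σ → R) :
    (aeval (fun i ↦ Polynomial.C (u i) * Polynomial.X + Polynomial.C (v i)) P : R[X]).coeff N =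
      eval u (homogeneousComponent N P) := by
  rw [P.as_sum]
  simp only [map_sum, Polynomial.finsetSum_coeff]
  refine sum_congr rfl fun s hs ↦ ?_
  rw [homogeneousComponent_of_mem (isHomogeneous_monomial _ rfl)]
  split_ifs with h
  · rw [h, coeff_degree_aeval_monomial]
  · have hlt : s.degree < N := lt_of_le_of_ne' ((le_totalDegree hs).trans hP) h
    rw [map_zero]
    refine Polynomial.coeff_eq_zero_of_natDegree_lt (lt_of_le_of_lt ?_ hlt)
    exact (aeval_natDegree_le _ (totalDegree_monomial_le s _) _
      fun _ ↦ Polynomial.natDegree_linear_le).trans_eq (mul_one _)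

end AffineSubstitution

section Shear

variable {K : Type*} [Field K]

/-- The substitution `P(x, y) ↦ P(x + c y, y)`, with the result seen as a polynomial in `y` over
`K[x]`. For a suitable `c` it makes the `y`-axis transversal to the curve `P = 0` at infinity. -/
noncomputable def shear (c : K) : MvPolynomial (Fin 2) K →ₐ[K] K[X][X] :=
  aeval ![Polynomial.C Polynomial.X + Polynomial.C (Polynomial.C c) * Polynomial.X, Polynomial.X]

variable (c : K) (P : MvPolynomial (Fin 2) K)

theorem aevalAeval_shear {A : Type*} [CommRing A] [Algebra K A] (u v : A) :
    (shear c P).aevalAeval u v = aeval ![u + algebraMap K A c * v, v] P := by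
  rw [shear, comp_aeval_apply]
  congr 2
  ext i
  fin_cases i <;> simp

theorem equivMvPolynomial_shear : Polynomial.Bivariate.equivMvPolynomial K (shear c P) =
    aeval ![X 0 + C c * X 1, X 1] P :=
  aevalAeval_shear c P (X 0) (X 1)

theorem innerDerivative_shear : innerDerivative (shear c P) = shear c (pderiv 0 P) := by
  apply (Polynomial.Bivariate.equivMvPolynomial K).injective
  rw [innerDerivative, ← Polynomial.Bivariate.pderiv_zero_equivMvPolynomial,
    equivMvPolynomial_shear, equivMvPolynomial_shear, derivation_mvPolynomial_aeval]
  simp [Fin.sum_univ_two]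

theorem derivative_shear : (shear c P).derivative =
    Polynomial.C (Polynomial.C c) * shear c (pderiv 0 P) + shear c (pderiv 1 P) := by
  apply (Polynomial.Bivariate.equivMvPolynomial K).injective
  rw [← Polynomial.Bivariate.pderiv_one_equivMvPolynomial, map_add, map_mul,
    equivMvPolynomial_shear, equivMvPolynomial_shear, equivMvPolynomial_shear,
    derivation_mvPolynomial_aeval]
  simp [Fin.sum_univ_two, mul_comm]

theorem coeff_C_mul_X_add_C_pow {R : Type*} [CommRing R] (a b : R) (n k : ℕ) :
    ((Polynomial.C a * Polynomial.X + Polynomial.C b) ^ n).coeff k =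
      a ^ k * b ^ (n - k) * n.choose k := by
  have hcomp : (Polynomial.C a * Polynomial.X + Polynomial.C b) ^ n =
      ((Polynomial.X + Polynomial.C b) ^ n).comp (Polynomial.C a * Polynomial.X) := by
    simp
  rw [hcomp, Polynomial.comp_C_mul_X_coeff, Polynomial.coeff_X_add_C_pow]
  ring

theorem coeff_coeff_shear (k j : ℕ) : ((shear c P).coeff k).coeff j =
    (aeval ![Polynomial.C c * Polynomial.X + 1, Polynomial.X]
      (homogeneousComponent (k + j) P) : K[X]).coeff k := by
  induction P using MvPolynomial.induction_on' with
  | add p q hp hq => simp only [map_add, Polynomial.coeff_add, hp, hq]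
  | monomial s a =>
    have hdeg : s.degree = s 0 + s 1 := by simp [Finsupp.degree_eq_sum]
    have hshear : shear c (monomial s a) = Polynomial.C (Polynomial.C a) *
        ((Polynomial.C (Polynomial.C c) * Polynomial.X + Polynomial.C Polynomial.X) ^ s 0 *
          Polynomial.X ^ s 1) := by
      simp [shear, aeval_monomial, Finsupp.prod_fintype, Fin.prod_univ_two, add_comm]
    have hline : (aeval ![Polynomial.C c * Polynomial.X + 1, Polynomial.X] (monomial s a) : K[X]) =
        Polynomial.C a * ((Polynomial.C c * Polynomial.X + Polynomial.C 1) ^ s 0 *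
          Polynomial.X ^ s 1) := by
      simp [aeval_monomial, Finsupp.prod_fintype, Fin.prod_univ_two]
    rw [homogeneousComponent_of_mem (isHomogeneous_monomial a hdeg), apply_ite (aeval _), hline,
      hshear]
    simp only [map_zero, apply_ite (Polynomial.coeff · k), Polynomial.coeff_zero,
      Polynomial.coeff_C_mul, Polynomial.coeff_mul_X_pow', coeff_C_mul_X_add_C_pow, one_pow]
    rcases lt_or_ge k (s 1) with h1 | h1
    · simp [h1.not_ge]
    rcases lt_or_ge (s 0) (k - s 1) with h2 | h2
    · simp [Nat.choose_eq_zero_of_lt h2]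
    have hiff : k + j = s 0 + s 1 ↔ j = s 0 - (k - s 1) := by omega
    simp only [if_pos h1, hiff, ← Polynomial.C_pow]
    rw [← Polynomial.C_eq_natCast, Polynomial.coeff_mul_C, Polynomial.coeff_C_mul_X_pow]
    split_ifs <;> simp

end Shear

section Homogeneous

variable {K : Type*} [Field K] {P : MvPolynomial (Fin 2) K} {N : ℕ}

/-- The gradient of the bivariate polynomial `P` vanishes at most at the origin. For homogeneous
`P` of degree at least two this says that the origin is an isolated critical point. -/
def CriticalOnlyAtOrigin (P : MvPolynomial (Fin 2) K) : Prop :=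
  ∀ x y : K, eval ![x, y] (pderiv 0 P) = 0 → eval ![x, y] (pderiv 1 P) = 0 → x = 0 ∧ y = 0

theorem eval_aeval_pair (p q : K[X]) (P : MvPolynomial (Fin 2) K) (t : K) :
    (aeval ![p, q] P : K[X]).eval t = eval ![p.eval t, q.eval t] P := by
  refine (comp_aeval_apply _ (Polynomial.aeval t) P).trans ?_
  rw [MvPolynomial.aeval_eq_eval]
  congr 2
  ext i
  fin_cases i <;> rfl

theorem eval_derivative_aeval_pair (p q : K[X]) (P : MvPolynomial (Fin 2) K) (t : K) :
    (aeval ![p, q] P : K[X]).derivative.eval t =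
      eval ![p.eval t, q.eval t] (pderiv 0 P) * p.derivative.eval t +
        eval ![p.eval t, q.eval t] (pderiv 1 P) * q.derivative.eval t := by
  have h := congrArg (Polynomial.eval t)
    (derivation_mvPolynomial_aeval Polynomial.derivative' ![p, q] P)
  rw [Fin.sum_univ_two, Polynomial.eval_add, Polynomial.eval_mul, Polynomial.eval_mul,
    eval_aeval_pair, eval_aeval_pair] at h
  exact h

theorem mul_pderiv_add_mul_pderiv (hP : P.IsHomogeneous N) (x y : K) :
    x * eval ![x, y] (pderiv 0 P) + y * eval ![x, y] (pderiv 1 P) = N * eval ![x, y] P := by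
  simpa [Fin.sum_univ_two] using congrArg (eval ![x, y]) hP.sum_X_mul_pderiv

theorem CriticalOnlyAtOrigin.exists_eval_ne_zero [Infinite K] (hcrit : CriticalOnlyAtOrigin P)
    (hP : P.IsHomogeneous N) : ∃ c, eval ![c, 1] P ≠ 0 := by
  by_contra! h
  have hline : (aeval ![Polynomial.X, 1] P : K[X]) = 0 := Polynomial.funext fun t ↦ by
    rw [eval_aeval_pair, Polynomial.eval_X, Polynomial.eval_one, h, Polynomial.eval_zero]
  have h0 : eval ![0, 1] (pderiv 0 P) = 0 := by
    simpa [hline] using (eval_derivative_aeval_pair Polynomial.X 1 P 0).symm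
  have h1 : eval ![0, 1] (pderiv 1 P) = 0 := by
    simpa [h] using mul_pderiv_add_mul_pderiv hP 0 1
  exact one_ne_zero (hcrit 0 1 h0 h1).2

theorem CriticalOnlyAtOrigin.separable_aeval [IsAlgClosed K] (hcrit : CriticalOnlyAtOrigin P)
    (hP : P.IsHomogeneous N) (c : K) :
    (aeval ![Polynomial.C c * Polynomial.X + 1, Polynomial.X] P : K[X]).Separable := by
  refine (Polynomial.isCoprime_iff_aeval_ne_zero_of_isAlgClosed K K _ _).2 fun t ↦ ?_
  by_contra! h
  simp only [Polynomial.coe_aeval_eq_eval, eval_aeval_pair, eval_derivative_aeval_pair] at h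
  simp only [Polynomial.eval_add, Polynomial.eval_mul, Polynomial.eval_C, Polynomial.eval_X,
    Polynomial.eval_one, Polynomial.derivative_add, Polynomial.derivative_C_mul,
    Polynomial.derivative_X, Polynomial.derivative_one, mul_one, add_zero] at h
  have heuler := mul_pderiv_add_mul_pderiv hP (c * t + 1) t
  have h0 : eval ![c * t + 1, t] (pderiv 0 P) = 0 := by
    linear_combination heuler + N * h.1 - t * h.2
  have h1 : eval ![c * t + 1, t] (pderiv 1 P) = 0 := by linear_combination h.2 - c * h0
  obtain ⟨hx, rfl⟩ := hcrit _ _ h0 h1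
  simp at hx

end Homogeneous

section Normalization

variable {K : Type*} [Field K] {P : MvPolynomial (Fin 2) K} {N : ℕ} {c : K}

theorem coeff_coeff_shear_eq_zero (hdeg : P.totalDegree ≤ N) {k j : ℕ} (h : N < k + j) :
    ((shear c P).coeff k).coeff j = 0 := by
  rw [coeff_coeff_shear, homogeneousComponent_eq_zero _ _ (hdeg.trans_lt h), map_zero,
    Polynomial.coeff_zero]

theorem natDegree_shear_le (hdeg : P.totalDegree ≤ N) : (shear c P).natDegree ≤ N :=
  Polynomial.natDegree_le_iff_coeff_eq_zero.2 fun _ hk ↦ Polynomial.ext fun _ ↦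
    coeff_coeff_shear_eq_zero hdeg (Nat.lt_add_right _ hk)

theorem natDegree_coeff_shear_le (hdeg : P.totalDegree ≤ N) (k : ℕ) :
    ((shear c P).coeff k).natDegree ≤ N - k :=
  Polynomial.natDegree_le_iff_coeff_eq_zero.2 fun _ hj ↦
    coeff_coeff_shear_eq_zero hdeg (by omega)

theorem coeff_aeval_line {Q : MvPolynomial (Fin 2) K} (hQ : Q.IsHomogeneous N) :
    (aeval ![Polynomial.C c * Polynomial.X + 1, Polynomial.X] Q : K[X]).coeff N =
      eval ![c, 1] Q := by
  have hline : (![Polynomial.C c * Polynomial.X + 1, Polynomial.X] : Fin 2 → K[X]) =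
      fun i ↦ Polynomial.C (![c, 1] i) * Polynomial.X + Polynomial.C (![1, 0] i) := by
    ext1 i
    fin_cases i <;> simp
  rw [hline, coeff_aeval_C_mul_X_add_C hQ.totalDegree_le, homogeneousComponent_eq_self hQ]

theorem coeff_shear (hdeg : P.totalDegree ≤ N) :
    (shear c P).coeff N = Polynomial.C (eval ![c, 1] (homogeneousComponent N P)) := by
  have hconst := natDegree_coeff_shear_le (c := c) hdeg N
  rw [Nat.sub_self, Nat.le_zero] at hconst
  rw [Polynomial.eq_C_of_natDegree_eq_zero hconst, coeff_coeff_shear, add_zero,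
    coeff_aeval_line (homogeneousComponent_isHomogeneous N P)]

variable (hdeg : P.totalDegree ≤ N) (hlead : eval ![c, 1] (homogeneousComponent N P) = 1)

include hdeg hlead

theorem natDegree_shear : (shear c P).natDegree = N := by
  refine (natDegree_shear_le hdeg).antisymm (Polynomial.le_natDegree_of_ne_zero ?_)
  rw [coeff_shear hdeg, hlead, Polynomial.C_1]
  exact one_ne_zero

theorem fiber_atInfinity_shear_zero : fiber (atInfinity (shear c P)) (0 : K) =
    aeval ![Polynomial.C c * Polynomial.X + 1, Polynomial.X] (homogeneousComponent N P) := by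
  ext k
  rw [coeff_fiber_atInfinity_zero, natDegree_shear hdeg hlead]
  rcases le_or_gt k N with hk | hk
  · rw [coeff_coeff_shear, Nat.add_sub_cancel' hk]
  · have hle := aeval_natDegree_le (n := 1) _
      (homogeneousComponent_isHomogeneous N P).totalDegree_le
      ![Polynomial.C c * Polynomial.X + 1, Polynomial.X] fun i ↦ by
        fin_cases i
        · exact Polynomial.natDegree_linear_le
        · exact Polynomial.natDegree_X_le
    rw [coeff_coeff_shear_eq_zero hdeg (Nat.lt_add_right _ hk),
      Polynomial.coeff_eq_zero_of_natDegree_lt (hle.trans_lt (by rwa [mul_one]))]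

theorem isTransversalAtInfinity_shear [IsAlgClosed K]
    (hcrit : CriticalOnlyAtOrigin (homogeneousComponent N P)) :
    IsTransversalAtInfinity (shear c P) where
  monic := by
    rw [Polynomial.Monic, Polynomial.leadingCoeff, natDegree_shear hdeg hlead,
      coeff_shear hdeg, hlead, Polynomial.C_1]
  natDegree_coeff_le k := natDegree_shear hdeg hlead ▸ natDegree_coeff_shear_le hdeg k
  separable := fiber_atInfinity_shear_zero hdeg hlead ▸
    hcrit.separable_aeval (homogeneousComponent_isHomogeneous N P) c

end Normalization

section Main

variable {K : Type*} [Field K]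

theorem eval_homogeneousComponent_of_eval_line [Infinite K] {σ : Type*} {P : MvPolynomial σ K}
    {N : ℕ} (hdeg : P.totalDegree ≤ N) {u v : σ → K} {a : K}
    (h : ∀ s, eval (fun i ↦ u i * s + v i) P = a * s ^ N) :
    eval u (homogeneousComponent N P) = a := by
  have hline : aeval (fun i ↦ Polynomial.C (u i) * Polynomial.X + Polynomial.C (v i)) P =
      Polynomial.C a * Polynomial.X ^ N := Polynomial.funext fun s ↦ by
    simp only [← Polynomial.coe_aeval_eq_eval]
    refine (comp_aeval_apply _ (Polynomial.aeval s) P).trans ?_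
    simpa [MvPolynomial.aeval_eq_eval] using h s
  rw [← coeff_aeval_C_mul_X_add_C hdeg u v, hline, Polynomial.coeff_C_mul_X_pow, if_pos rfl]

theorem CriticalOnlyAtOrigin.C_mul {P : MvPolynomial (Fin 2) K} (hP : CriticalOnlyAtOrigin P)
    {a : K} (ha : a ≠ 0) : CriticalOnlyAtOrigin (C a * P) :=
  fun x y hx hy ↦ hP x y (by simpa [ha] using hx) (by simpa [ha] using hy)

theorem CriticalOnlyAtOrigin.degree_ne_zero {P : MvPolynomial (Fin 2) K}
    (hP : CriticalOnlyAtOrigin P) {N : ℕ} (hhom : P.IsHomogeneous N) : N ≠ 0 := by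
  rintro rfl
  obtain ⟨a, rfl⟩ : ∃ a, P = C a :=
    ⟨_, totalDegree_eq_zero_iff_eq_C.mp (Nat.le_zero.mp hhom.totalDegree_le)⟩
  exact one_ne_zero (hP 1 0 (by simp) (by simp)).1

theorem homogeneousComponent_C_mul_sub_C {σ : Type*} {N : ℕ} (hN : N ≠ 0) (a γ : K)
    (P : MvPolynomial σ K) :
    homogeneousComponent N (C a * (P - C γ)) = C a * homogeneousComponent N P := by
  rw [homogeneousComponent_C_mul, map_sub, homogeneousComponent_of_mem (isHomogeneous_C σ γ),
    if_neg hN, sub_zero]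

variable [CharZero K] [IsAlgClosed K]

theorem exists_eval_add_eq_eval_homogeneousComponent {P : MvPolynomial (Fin 2) K} {N : ℕ}
    (hdeg : P.totalDegree ≤ N) (hreg : CriticalOnlyAtOrigin (homogeneousComponent N P))
    {c : K} (hlead : eval ![c, 1] (homogeneousComponent N P) = 1)
    (hcrit : ∀ x₀ y₀ : K, eval ![x₀, y₀] (pderiv 0 P) = 0 → eval ![x₀, y₀] (pderiv 1 P) = 0 →
      eval ![x₀, y₀] P = 0) :
    ∃ x₀ y₀ : K, ∀ x y : K,
      eval ![x + x₀, y + y₀] P = eval ![x, y] (homogeneousComponent N P) := by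
  have hF (Q : MvPolynomial (Fin 2) K) (x y : K) :
      (shear c Q).aevalAeval x y = eval ![x + c * y, y] Q := aevalAeval_shear c Q x y
  obtain ⟨x₀, y₀, hcone⟩ :=
    (isTransversalAtInfinity_shear hdeg hlead hreg).exists_aevalAeval_add_mul
      (by
        rw [natDegree_shear hdeg hlead]
        exact hreg.degree_ne_zero (homogeneousComponent_isHomogeneous N P)) fun x y hx hy ↦ by
        rw [innerDerivative_shear, hF] at hx
        rw [derivative_shear, map_add, map_mul, hF, hF, hx, mul_zero, zero_add] at hy
        rw [hF, hcrit _ _ hx hy]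
  rw [natDegree_shear hdeg hlead] at hcone
  refine ⟨x₀ + c * y₀, y₀, fun x y ↦ (eval_homogeneousComponent_of_eval_line hdeg
    (v := ![x₀ + c * y₀, y₀]) fun s ↦ ?_).symm⟩
  have hscale := hcone s (x - c * y) y
  have hline : (fun i ↦ ![x, y] i * s + ![x₀ + c * y₀, y₀] i) =
      ![x₀ + s * (x - c * y) + c * (y₀ + s * y), y₀ + s * y] := by
    ext i
    fin_cases i <;> simp <;> ring
  have hpoint : ![x + (x₀ + c * y₀), y + y₀] = ![x₀ + (x - c * y) + c * (y₀ + y), y₀ + y] := by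
    ext i
    fin_cases i <;> simp <;> ring
  rw [hline, hpoint, ← hF, ← hF, hscale, mul_comm]

theorem stmt10_general {H : MvPolynomial (Fin 2) K} {N : ℕ} (hdeg : H.totalDegree ≤ N)
    (hreg : CriticalOnlyAtOrigin (homogeneousComponent N H)) (γ : K)
    (hcrit : ∀ x₀ y₀ : K, eval ![x₀, y₀] (pderiv 0 H) = 0 → eval ![x₀, y₀] (pderiv 1 H) = 0 →
      eval ![x₀, y₀] H = γ) :
    ∃ α β : K, ∀ x y : K,
      eval ![x, y] H = eval ![x + α, y + β] (homogeneousComponent N H) + γ := by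
  obtain ⟨c, hc⟩ := hreg.exists_eval_ne_zero (homogeneousComponent_isHomogeneous N H)
  let a := (eval ![c, 1] (homogeneousComponent N H))⁻¹
  have ha : a ≠ 0 := inv_ne_zero hc
  have hprincipal := homogeneousComponent_C_mul_sub_C
    (hreg.degree_ne_zero (homogeneousComponent_isHomogeneous N H)) a γ H
  obtain ⟨x₀, y₀, hxy⟩ := exists_eval_add_eq_eval_homogeneousComponent
    (P := C a * (H - C γ)) (c := c)
    (by
      rw [C_mul']
      exact (totalDegree_smul_le ..).trans ((totalDegree_sub_C_le ..).trans hdeg))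
    (hprincipal ▸ hreg.C_mul ha) (by simp [hprincipal, a, hc]) fun x y hx hy ↦ by
      have h := hcrit x y (by simpa [ha] using hx) (by simpa [ha] using hy)
      simp [h]
  refine ⟨-x₀, -y₀, fun x y ↦ ?_⟩
  have h := hxy (x - x₀) (y - y₀)
  rw [hprincipal, map_mul, map_mul, eval_C, eval_C, mul_right_inj' ha, map_sub, eval_C,
    sub_add_cancel, sub_add_cancel] at h
  rw [← sub_eq_add_neg, ← sub_eq_add_neg]
  linear_combination h

end Main

/-- Theorem on Hamiltonians with a single critical value.
If a polynomial `H` of degree `n+1` regular at infinity has only one critical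
value `γ`, then by suitable translations in the preimage and the image `H`
becomes homogeneous: `H(x,y) = Ĥ(x+α, y+β) + γ` where `Ĥ` is the principal
homogeneous part of `H`. -/
theorem stmt10 (n : ℕ) (hn : 1 ≤ n) (H : MvPolynomial (Fin 2) ℂ)
    (hdeg : H.totalDegree = n + 1) (hreg : RegularAtInfinity n H)
    (γ : ℂ)
    (honeval : ∀ x₀ y₀ : ℂ, eval ![x₀, y₀] (pderiv 0 H) = 0 →
      eval ![x₀, y₀] (pderiv 1 H) = 0 → eval ![x₀, y₀] H = γ) :
    ∃ α β : ℂ, ∀ x y : ℂ,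
      eval ![x, y] H = eval ![x + α, y + β] (homogeneousComponent (n + 1) H) + γ :=
  stmt10_general hdeg.le hreg γ honeval
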